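/- arXiv:1111.4457 — 2 statements merged into one kernel-verified Lean document; each statement's English description precedes it below -/
import Mathlib

section
/- Assume the SOSC holds with respect to J, and fix ε₀ > 0. Then the logarithmically averaged Minkowski content Λ := lim_{δ→0⁺} (1/ln(1/δ)) ∫_δ^{ε₀} ε^{D−d} λ_d(F(ε)) ε^{−1} dε exists and is finite, and the rescaled volume measures localize: for every bounded continuous f : ℝ^d → ℝ, lim_{δ→0⁺} (1/ln(1/δ)) ∫_δ^{ε₀} ε^{D−d} (∫_{F(ε)} f dλ_d) ε^{−1} dε = Λ · ∫_F f dμ_F. In other words, the measures (1/ln(1/δ)) ∫_δ^{ε₀} ε^{D−d} λ_d(F(ε) ∩ ·) ε^{−1} dε converge weakly, as δ → 0, to Λ · μ_F, a constant multiple of the normalized D-dimensional Hausdorff measure on F. -/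
open MeasureTheory Metric Filter Set
open scoped ENNReal Topology


def HasAvg (u : ℝ → ℝ) (L : ℝ) : Prop :=
  Tendsto (fun T : ℝ => T⁻¹ * ∫ t in (0:ℝ)..T, u t) atTop (𝓝 L)

def LI (u : ℝ → ℝ) : Prop := ∀ a b : ℝ, IntervalIntegrable u volume a b

lemma tendsto_of_bdd_diff {A B : ℝ → ℝ} {L C : ℝ}
    (hA : Tendsto (fun T : ℝ => T⁻¹ * A T) atTop (𝓝 L))
    (h : ∀ᶠ T in atTop, |B T - A T| ≤ C) :
    Tendsto (fun T : ℝ => T⁻¹ * B T) atTop (𝓝 L) := by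
  have h0 : Tendsto (fun T : ℝ => T⁻¹ * (B T - A T)) atTop (𝓝 0) := by
    apply squeeze_zero_norm' (a := fun T : ℝ => T⁻¹ * C)
    · filter_upwards [h, eventually_gt_atTop 0] with T hT hT0
      rw [norm_mul, Real.norm_eq_abs, Real.norm_eq_abs, abs_of_pos (inv_pos.2 hT0)]
      gcongr
    · simpa using tendsto_inv_atTop_zero.mul_const C
  have := hA.add h0
  rw [add_zero] at this
  refine this.congr fun T => ?_
  ring

lemma HasAvg.const_mul {u : ℝ → ℝ} {L : ℝ} (h : HasAvg u L) (c : ℝ) :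
    HasAvg (fun t => c * u t) (c * L) := by
  have := Tendsto.const_mul c h
  refine this.congr fun T => ?_
  rw [intervalIntegral.integral_const_mul]; ring

lemma LI.const_mul {u : ℝ → ℝ} (h : LI u) (c : ℝ) : LI (fun t => c * u t) :=
  fun a b => (h a b).const_mul c

lemma LI.sum {ι : Type*} (s : Finset ι) {u : ι → ℝ → ℝ} (h : ∀ i ∈ s, LI (u i)) :
    LI (fun t => ∑ i ∈ s, u i t) := by
  intro a b
  have := IntervalIntegrable.sum (μ := volume) (a := a) (b := b) s (f := u) (fun i hi => h i hi a b)
  refine this.congr ?_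
  exact fun t _ => by simp

lemma LI.shift {u : ℝ → ℝ} (h : LI u) (a : ℝ) : LI (fun t => u (t - a)) := by
  intro x y
  have := (h (x - a) (y - a)).comp_sub_right a
  simpa using this

lemma HasAvg.sum {ι : Type*} (s : Finset ι) {u : ι → ℝ → ℝ} {L : ι → ℝ}
    (hi : ∀ i ∈ s, LI (u i)) (h : ∀ i ∈ s, HasAvg (u i) (L i)) :
    HasAvg (fun t => ∑ i ∈ s, u i t) (∑ i ∈ s, L i) := by
  have := tendsto_finsetSum s h
  refine this.congr fun T => ?_
  rw [intervalIntegral.integral_finsetSum (fun i hi' => hi i hi' 0 T), Finset.mul_sum]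

lemma HasAvg.sub {u v : ℝ → ℝ} {L M : ℝ} (hu : HasAvg u L) (hv : HasAvg v M)
    (iu : LI u) (iv : LI v) : HasAvg (fun t => u t - v t) (L - M) := by
  refine (Tendsto.sub hu hv).congr fun T => ?_
  rw [intervalIntegral.integral_sub (iu 0 T) (iv 0 T)]; ring

lemma HasAvg.add {u v : ℝ → ℝ} {L M : ℝ} (hu : HasAvg u L) (hv : HasAvg v M)
    (iu : LI u) (iv : LI v) : HasAvg (fun t => u t + v t) (L + M) := by
  refine (Tendsto.add hu hv).congr fun T => ?_
  rw [intervalIntegral.integral_add (iu 0 T) (iv 0 T)]; ring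

lemma int_bound {u : ℝ → ℝ} {t0 M x y : ℝ} (hM : ∀ t, t0 ≤ t → |u t| ≤ M)
    (hx : t0 ≤ x) (hxy : x ≤ y) : |∫ t in x..y, u t| ≤ M * (y - x) := by
  have := intervalIntegral.norm_integral_le_of_norm_le_const (a := x) (b := y) (f := u) (C := M)
    (fun t ht => by
      rw [uIoc_of_le hxy] at ht
      exact hM t (hx.trans ht.1.le))
  rwa [abs_of_nonneg (sub_nonneg.2 hxy)] at this

lemma HasAvg.shift {u : ℝ → ℝ} {L : ℝ} (h : HasAvg u L) (iu : LI u)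
    (hb : ∀ t0, ∃ M, ∀ t, t0 ≤ t → |u t| ≤ M) {a : ℝ} (ha : 0 ≤ a) :
    HasAvg (fun t => u (t - a)) L := by
  obtain ⟨M, hM⟩ := hb (-a)
  refine tendsto_of_bdd_diff (A := fun T => ∫ t in (0:ℝ)..T, u t) (C := M * a + M * a) h ?_
  filter_upwards [eventually_ge_atTop 0] with T hT
  rw [intervalIntegral.integral_comp_sub_right (fun t => u t) a]
  have e1 := intervalIntegral.integral_add_adjacent_intervals (iu (0 - a) 0) (iu 0 (T - a))
  have e2 := intervalIntegral.integral_add_adjacent_intervals (iu 0 (T - a)) (iu (T - a) T)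
  have b1 := int_bound hM (x := 0 - a) (y := 0) (by simp) (by linarith)
  have b2 := int_bound hM (x := T - a) (y := T) (by linarith) (by linarith)
  rw [← e1, ← e2]
  have : (∫ t in (0 - a)..0, u t) + (∫ t in (0:ℝ)..(T - a), u t) -
    ((∫ t in (0:ℝ)..(T - a), u t) + ∫ t in (T - a)..T, u t) =
    (∫ t in (0 - a)..0, u t) - ∫ t in (T - a)..T, u t := by ring
  rw [this]
  calc _ ≤ |∫ t in (0 - a)..0, u t| + |∫ t in (T - a)..T, u t| := abs_sub _ _
    _ ≤ _ := by
      have : M * (0 - (0 - a)) = M * a := by ring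
      have : M * (T - (T - a)) = M * a := by ring
      linarith

/-- eventual domination -/
lemma int_le_of_ev {u v : ℝ → ℝ} (iu : LI u) (iv : LI v) {t1 : ℝ}
    (h : ∀ t, t1 ≤ t → u t ≤ v t) :
    ∃ B, ∀ T, t1 ≤ T → ∫ t in (0:ℝ)..T, u t ≤ (∫ t in (0:ℝ)..T, v t) + B := by
  refine ⟨(∫ t in (0:ℝ)..t1, u t) - ∫ t in (0:ℝ)..t1, v t, fun T hT => ?_⟩
  rw [← intervalIntegral.integral_add_adjacent_intervals (iu 0 t1) (iu t1 T),
    ← intervalIntegral.integral_add_adjacent_intervals (iv 0 t1) (iv t1 T)]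
  have := intervalIntegral.integral_mono_on hT (iu t1 T) (iv t1 T) (fun t ht => h t ht.1)
  linarith

lemma HasAvg.le {u v : ℝ → ℝ} {L M : ℝ} (hu : HasAvg u L) (hv : HasAvg v M)
    (iu : LI u) (iv : LI v) (h : ∀ t, u t ≤ v t) : L ≤ M := by
  refine le_of_tendsto_of_tendsto hu hv ?_
  filter_upwards [eventually_ge_atTop 0] with T hT
  have := intervalIntegral.integral_mono_on hT (iu 0 T) (iv 0 T) (fun t _ => h t)
  gcongr

lemma hasAvg_of_tendsto {u : ℝ → ℝ} {L : ℝ} (iu : LI u) (h : Tendsto u atTop (𝓝 L)) :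
    HasAvg u L := by
  unfold HasAvg
  rw [Metric.tendsto_atTop] at h ⊢
  intro ε hε
  obtain ⟨t1, ht1⟩ := h (ε / 2) (half_pos hε)
  set B := |∫ t in (0:ℝ)..(max t1 0), (u t - L)| with hB
  refine ⟨max (max t1 0) (2 * B / ε + 1), fun T hT => ?_⟩
  have hT1 : max t1 0 ≤ T := (le_max_left _ _).trans hT
  have hT2 : 2 * B / ε + 1 ≤ T := (le_max_right _ _).trans hT
  have hB0 : 0 ≤ B := abs_nonneg _
  have hTpos : 0 < T := by
    have : 0 ≤ 2 * B / ε := by positivity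
    linarith
  have il : LI (fun t => u t - L) := fun a b => (iu a b).sub intervalIntegrable_const
  have e : T⁻¹ * (∫ t in (0:ℝ)..T, u t) - L = T⁻¹ * ∫ t in (0:ℝ)..T, (u t - L) := by
    rw [intervalIntegral.integral_sub (iu 0 T) intervalIntegrable_const]
    simp only [intervalIntegral.integral_const, smul_eq_mul, sub_zero]
    field_simp
  rw [Real.dist_eq, e, abs_mul, abs_of_pos (inv_pos.2 hTpos),
    ← intervalIntegral.integral_add_adjacent_intervals (il 0 (max t1 0)) (il (max t1 0) T)]
  have b2 := int_bound (u := fun t => u t - L) (t0 := max t1 0) (M := ε / 2)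
    (fun t ht => by
      have := ht1 t ((le_max_left _ _).trans ht)
      rw [Real.dist_eq] at this
      exact this.le) le_rfl hT1
  have b3 : ε / 2 * (T - max t1 0) ≤ ε / 2 * T := by
    have : 0 ≤ max t1 0 := le_max_right _ _
    gcongr; linarith
  have b4 : B < ε / 2 * T := by
    have : 2 * B / ε < T := by linarith
    rw [div_lt_iff₀ hε] at this
    linarith
  rw [inv_mul_lt_iff₀ hTpos]
  calc _ ≤ B + |∫ t in (max t1 0)..T, (u t - L)| := abs_add_le _ _
    _ < T * ε := by linarith

theorem exists_avg {ι : Type*} [Fintype ι] (p a : ι → ℝ) (hp : ∀ i, 0 < p i) (hp1 : ∑ i, p i = 1)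
    (ha : ∀ i, 0 < a i) (u : ℝ → ℝ) (iu : LI u) (u0 : ∀ t, 0 ≤ u t)
    (hb : ∀ t0, ∃ M, ∀ t, t0 ≤ t → |u t| ≤ M)
    (hu : ∀ t, u t ≤ ∑ i, p i * u (t - a i)) : ∃ L, HasAvg u L := by
  set U : ℝ → ℝ := fun T => ∫ t in (0:ℝ)..T, u t with hU
  have Udiff : ∀ x y, U y - U x = ∫ t in x..y, u t := fun x y => by
    simp only [hU]; rw [intervalIntegral.integral_interval_sub_left (iu 0 y) (iu 0 x)]
  have Ucont : Continuous U := intervalIntegral.continuous_primitive iu 0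
  have iU : LI U := fun x y => Ucont.intervalIntegrable x y
  set Lf : ℝ → ℝ := fun T => ∑ i, p i * (U T - U (T - a i)) with hL
  have Lcont : Continuous Lf := by fun_prop
  have iL : LI Lf := fun x y => Lcont.intervalIntegrable x y
  have Leq : ∀ T, Lf T = U T - ∑ i, p i * U (T - a i) := by
    intro T
    simp only [hL, mul_sub, Finset.sum_sub_distrib, ← Finset.sum_mul, hp1, one_mul]
  have Lanti : Antitone Lf := by
    intro s T hsT
    rw [Leq, Leq]
    have h1 : U T - U s ≤ ∑ i, p i * (U (T - a i) - U (s - a i)) := by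
      rw [Udiff]
      calc ∫ t in s..T, u t ≤ ∫ t in s..T, ∑ i, p i * u (t - a i) :=
            intervalIntegral.integral_mono_on hsT (iu s T)
              (LI.sum Finset.univ (fun i _ => (iu.shift (a i)).const_mul (p i)) s T)
              (fun t _ => hu t)
        _ = ∑ i, p i * ∫ t in s..T, u (t - a i) := by
            rw [intervalIntegral.integral_finsetSum
              (fun i _ => ((iu.shift (a i)).const_mul (p i)) s T)]
            simp [intervalIntegral.integral_const_mul]
        _ = _ := by
            refine Finset.sum_congr rfl fun i _ => ?_
            rw [intervalIntegral.integral_comp_sub_right (fun t => u t) (a i), Udiff]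
    simp only [mul_sub, Finset.sum_sub_distrib] at h1
    linarith
  have Lnn : ∀ T, 0 ≤ Lf T := fun T => by
    refine Finset.sum_nonneg fun i _ => mul_nonneg (hp i).le ?_
    rw [Udiff]
    exact intervalIntegral.integral_nonneg (by linarith [ha i]) (fun t _ => u0 t)
  have Llim : Tendsto Lf atTop (𝓝 (⨅ T, Lf T)) :=
    tendsto_atTop_ciInf Lanti ⟨0, by rintro _ ⟨T, rfl⟩; exact Lnn T⟩
  set K := ⨅ T, Lf T
  have hK := hasAvg_of_tendsto iL Llim
  set A := ∑ i, p i * a i with hA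
  have hne : (Finset.univ : Finset ι).Nonempty := by
    by_contra h
    rw [Finset.not_nonempty_iff_eq_empty] at h
    rw [h] at hp1; simp at hp1
  have hApos : 0 < A := Finset.sum_pos (fun i _ => mul_pos (hp i) (ha i)) hne
  refine ⟨A⁻¹ * K, ?_⟩
  obtain ⟨M, hM⟩ := hb 0
  -- integral of Lf is A * U(T) + O(1)
  have key : Tendsto (fun T : ℝ => T⁻¹ * (A * U T)) atTop (𝓝 K) := by
    refine tendsto_of_bdd_diff (A := fun T => ∫ t in (0:ℝ)..T, Lf t)
      (C := ∑ i, p i * (M * a i * a i + |∫ t in (0 - a i)..0, U t|)) hK ?_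
    filter_upwards [eventually_ge_atTop (∑ i, a i)] with T hT
    have hTi : ∀ i, a i ≤ T := fun i =>
      (Finset.single_le_sum (fun j _ => (ha j).le) (Finset.mem_univ i)).trans hT
    have e1 : ∫ t in (0:ℝ)..T, Lf t =
        ∑ i, p i * ((∫ t in (T - a i)..T, U t) - ∫ t in (0 - a i)..0, U t) := by
      simp only [hL]
      rw [intervalIntegral.integral_finsetSum
        (fun i _ => (((iU 0 T).sub ((iU.shift (a i)) 0 T)).const_mul (p i)))]
      refine Finset.sum_congr rfl fun i _ => ?_
      rw [intervalIntegral.integral_const_mul,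
        intervalIntegral.integral_sub (iU 0 T) ((iU.shift (a i)) 0 T),
        intervalIntegral.integral_comp_sub_right (fun t => U t) (a i)]
      have e1 := intervalIntegral.integral_add_adjacent_intervals (iU (0 - a i) 0) (iU 0 (T - a i))
      have e2 := intervalIntegral.integral_add_adjacent_intervals (iU 0 (T - a i)) (iU (T - a i) T)
      rw [← e1, ← e2]; ring
    rw [e1, hA, Finset.sum_mul, ← Finset.sum_sub_distrib]
    refine (Finset.abs_sum_le_sum_abs _ _).trans (Finset.sum_le_sum fun i _ => ?_)
    have e3 : p i * a i * U T - p i * ((∫ t in (T - a i)..T, U t) - ∫ t in (0 - a i)..0, U t)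
      = p i * ((∫ t in (T - a i)..T, (U T - U t)) + ∫ t in (0 - a i)..0, U t) := by
      rw [intervalIntegral.integral_sub intervalIntegrable_const (iU _ _)]
      simp; ring
    rw [e3, abs_mul, abs_of_pos (hp i)]
    refine mul_le_mul_of_nonneg_left ?_ (hp i).le
    refine (abs_add_le _ _).trans (add_le_add_left ?_ _)
    have := intervalIntegral.norm_integral_le_of_norm_le_const (a := T - a i) (b := T)
      (f := fun t => U T - U t) (C := M * a i)
      (fun t ht => by
        rw [uIoc_of_le (by linarith [ha i])] at ht
        rw [Udiff, Real.norm_eq_abs]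
        have h0 : 0 ≤ t := by linarith [hTi i, ht.1]
        have hM0 : 0 ≤ M := (abs_nonneg _).trans (hM 0 le_rfl)
        refine (int_bound hM h0 ht.2).trans ?_
        gcongr
        linarith [ht.1])
    rw [Real.norm_eq_abs, show T - (T - a i) = a i by ring, abs_of_pos (ha i)] at this
    exact this
  have := key.const_mul A⁻¹
  refine this.congr fun T => ?_
  simp only [hU]
  field_simp


abbrev ES (d : ℕ) := EuclideanSpace ℝ (Fin d)

lemma sim_repr {d : ℕ} {T : ES d → ES d} {q : ℝ} (hq : 0 < q)
    (h : ∀ x y, dist (T x) (T y) = q * dist x y) :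
    ∃ (L : ES d ≃ₗᵢ[ℝ] ES d) (c : ES d), ∀ x, T x = q • L x + c := by
  have hi : Isometry (fun x => q⁻¹ • T x) := by
    refine Isometry.of_dist_eq fun x y => ?_
    rw [dist_smul₀, h, Real.norm_eq_abs, abs_of_pos (inv_pos.2 hq)]
    field_simp
  let A := hi.affineIsometryOfStrictConvexSpace
  let L := A.linearIsometry.toLinearIsometryEquiv rfl
  refine ⟨L, T 0, fun x => ?_⟩
  have h1 : A x = A.linearIsometry (x - 0) + A 0 := by
    have := A.map_vadd 0 x
    simpa using this
  have h2 : q⁻¹ • T x = L x + q⁻¹ • T 0 := by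
    simpa [A, L] using h1
  have := congrArg (fun z => q • z) h2
  simpa [smul_smul, hq.ne'] using this

lemma sim_surj {d : ℕ} {T : ES d → ES d} {q : ℝ} (hq : 0 < q)
    (h : ∀ x y, dist (T x) (T y) = q * dist x y) : Function.Surjective T := by
  obtain ⟨L, c, hL⟩ := sim_repr hq h
  intro y
  refine ⟨L.symm (q⁻¹ • (y - c)), ?_⟩
  rw [hL]; simp [smul_smul, hq.ne']

lemma sim_inj {d : ℕ} {T : ES d → ES d} {q : ℝ} (hq : 0 < q)
    (h : ∀ x y, dist (T x) (T y) = q * dist x y) : Function.Injective T := by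
  intro x y hxy
  have := h x y
  rw [hxy, dist_self] at this
  have : dist x y = 0 := by
    rcases mul_eq_zero.1 this.symm with h | h
    · exact absurd h hq.ne'
    · exact h
  exact dist_eq_zero.1 this

lemma sim_cont {d : ℕ} {T : ES d → ES d} {q : ℝ} (hq : 0 < q)
    (h : ∀ x y, dist (T x) (T y) = q * dist x y) : Continuous T := by
  obtain ⟨L, c, hL⟩ := sim_repr hq h
  rw [funext hL]
  fun_prop

lemma sim_open {d : ℕ} {T : ES d → ES d} {q : ℝ} (hq : 0 < q)
    (h : ∀ x y, dist (T x) (T y) = q * dist x y) : IsOpenMap T := by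
  intro O hO
  rw [Metric.isOpen_iff] at hO ⊢
  rintro _ ⟨x, hx, rfl⟩
  obtain ⟨ε, hε, hb⟩ := hO x hx
  refine ⟨q * ε, by positivity, fun y hy => ?_⟩
  obtain ⟨z, rfl⟩ := sim_surj hq h y
  rw [mem_ball, h] at hy
  exact ⟨z, hb (lt_of_mul_lt_mul_left hy hq.le), rfl⟩

open scoped Pointwise in
lemma sim_vol {d : ℕ} {T : ES d → ES d} {q : ℝ} (hq : 0 < q)
    (h : ∀ x y, dist (T x) (T y) = q * dist x y) (A : Set (ES d)) :
    volume (T '' A) = ENNReal.ofReal (q ^ d) * volume A := by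
  obtain ⟨L, c, hL⟩ := sim_repr hq h
  have e : T '' A = (fun y => y + c) '' (q • (L '' A)) := by
    rw [← Set.image_smul, Set.image_image, Set.image_image]
    exact Set.image_congr fun x _ => hL x
  rw [e, Set.image_add_right, measure_preimage_add_right, Measure.addHaar_smul]
  have : volume (L '' A) = volume A := by
    have := L.symm.measurePreserving.measure_preimage_equiv (f := L.symm.toHomeomorph.toMeasurableEquiv) A
    rw [← this]
    congr 1
    ext y
    simp only [mem_image, mem_preimage]
    constructor
    · rintro ⟨x, hx, rfl⟩
      simpa using hx
    · intro hy
      exact ⟨L.symm y, hy, by simp⟩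
  rw [this]
  simp [abs_of_pos hq]

lemma mem_cth {d : ℕ} {K : Set (ES d)} (hK : IsCompact K) {ε : ℝ} (hε : 0 ≤ ε) (x : ES d) :
    x ∈ cthickening ε K ↔ ∃ y ∈ K, dist x y ≤ ε := by
  rw [hK.cthickening_eq_biUnion_closedBall hε]
  simp

lemma sim_cth {d : ℕ} {T : ES d → ES d} {q : ℝ} (hq : 0 < q)
    (h : ∀ x y, dist (T x) (T y) = q * dist x y) {K : Set (ES d)} (hK : IsCompact K)
    {ε : ℝ} (hε : 0 ≤ ε) :
    cthickening ε (T '' K) = T '' cthickening (ε / q) K := by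
  ext y
  obtain ⟨x, rfl⟩ := sim_surj hq h y
  rw [(sim_inj hq h).mem_set_image, mem_cth (hK.image (sim_cont hq h)) hε,
    mem_cth hK (by positivity)]
  simp only [exists_mem_image, h, le_div_iff₀ hq, mul_comm q]

lemma sim_cth_vol {d : ℕ} {T : ES d → ES d} {q : ℝ} (hq : 0 < q)
    (h : ∀ x y, dist (T x) (T y) = q * dist x y) {K : Set (ES d)} (hK : IsCompact K)
    {ε : ℝ} (hε : 0 ≤ ε) :
    (volume (cthickening ε (T '' K))).toReal = q ^ d * (volume (cthickening (ε / q) K)).toReal := by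
  rw [sim_cth hq h hK hε, sim_vol hq h, ENNReal.toReal_mul, ENNReal.toReal_ofReal (by positivity)]

structure Ref {d : ℕ} (F O : Set (ES d)) (D : ℝ) {ι : Type} [Fintype ι] (T : ι → ES d → ES d)
    (q : ι → ℝ) : Prop where
  pos : ∀ i, 0 < q i
  sim : ∀ i x y, dist (T i x) (T i y) = q i * dist x y
  cover : F = ⋃ i, T i '' F
  sum : ∑ i, q i ^ D = 1
  sub : ∀ i, T i '' O ⊆ O
  disj : ∀ i j, i ≠ j → Disjoint (T i '' O) (T j '' O)

lemma Ref.step {d : ℕ} {F O : Set (ES d)} {D : ℝ} {κ : Type} [Fintype κ] {S : κ → ES d → ES d}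
    {r : κ → ℝ} (hS : Ref F O D S r) (r1 : ∀ i, r i < 1) {m M ρ B : ℝ} (hm : ∀ i, m ≤ r i)
    (hm0 : 0 < m) (hM : ∀ i, r i ≤ M)
    {ι : Type} [Fintype ι] {T : ι → ES d → ES d} {q : ι → ℝ} (hT : Ref F O D T q)
    (h1 : ∀ i, m * ρ ≤ q i) (h2 : ∀ i, q i ≤ ρ ∨ q i ≤ B) :
    ∃ (ι' : Type) (_ : Fintype ι') (T' : ι' → ES d → ES d) (q' : ι' → ℝ), Ref F O D T' q' ∧
      (∀ i, m * ρ ≤ q' i) ∧ (∀ i, q' i ≤ ρ ∨ q' i ≤ B * M) := by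
  classical
  let ι' := {i // q i ≤ ρ} ⊕ ({i // ¬ q i ≤ ρ} × κ)
  let T' : ι' → ES d → ES d := Sum.elim (fun i => T i) (fun p => T p.1 ∘ S p.2)
  let q' : ι' → ℝ := Sum.elim (fun i => q i) (fun p => q p.1 * r p.2)
  have sub2 : ∀ (i : ι) (k : κ), (T i ∘ S k) '' O ⊆ T i '' O := by
    intro i k
    rw [Set.image_comp]
    exact Set.image_mono (hS.sub k)
  refine ⟨ι', inferInstance, T', q', ⟨?_, ?_, ?_, ?_, ?_, ?_⟩, ?_, ?_⟩
  · rintro (i | ⟨i, k⟩)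
    · exact hT.pos i
    · exact mul_pos (hT.pos i) (hS.pos k)
  · rintro (i | ⟨i, k⟩) x y
    · exact hT.sim i x y
    · simp [T', q', hT.sim, hS.sim, mul_assoc]
  · apply Set.Subset.antisymm
    · intro x hx
      rw [hT.cover] at hx
      obtain ⟨i, y, hy, rfl⟩ := mem_iUnion.1 hx
      by_cases hi : q i ≤ ρ
      · exact mem_iUnion.2 ⟨Sum.inl ⟨i, hi⟩, y, hy, rfl⟩
      · rw [hS.cover] at hy
        obtain ⟨k, z, hz, rfl⟩ := mem_iUnion.1 hy
        exact mem_iUnion.2 ⟨Sum.inr (⟨i, hi⟩, k), z, hz, rfl⟩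
    · have hTF : ∀ i, T i '' F ⊆ F := fun i => by
        conv_rhs => rw [hT.cover]
        exact subset_iUnion (fun i => T i '' F) i
      have hSF : ∀ i, S i '' F ⊆ F := fun i => by
        conv_rhs => rw [hS.cover]
        exact subset_iUnion (fun i => S i '' F) i
      refine iUnion_subset ?_
      rintro (i | ⟨i, k⟩)
      · exact hTF i
      · show (T i ∘ S k) '' F ⊆ F
        rw [Set.image_comp]
        exact (Set.image_mono (hSF k)).trans (hTF i)
  · rw [Fintype.sum_sum_type, Fintype.sum_prod_type]
    simp only [q', Sum.elim_inl, Sum.elim_inr]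
    have : ∀ i : {i // ¬ q i ≤ ρ}, ∑ k, (q i * r k) ^ D = q i ^ D := by
      intro i
      simp_rw [Real.mul_rpow (hT.pos i).le (hS.pos _).le]
      rw [← Finset.mul_sum, hS.sum, mul_one]
    simp_rw [this]
    rw [Fintype.sum_subtype_add_sum_subtype (fun i => q i ≤ ρ) (fun i => q i ^ D), hT.sum]
  · rintro (i | ⟨i, k⟩)
    · exact hT.sub i
    · exact (sub2 i k).trans (hT.sub i)
  · rintro (i | ⟨i, k⟩) (j | ⟨j, l⟩) hne
    · exact hT.disj i j (fun h => hne (by rw [Subtype.ext h]))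
    · exact (hT.disj i j (fun h => j.2 (h ▸ i.2))).mono_right (sub2 j l)
    · exact (hT.disj i j (fun h => i.2 (h ▸ j.2))).mono_left (sub2 i k)
    · show Disjoint ((T i ∘ S k) '' O) ((T j ∘ S l) '' O)
      by_cases hij : i = j
      · subst hij
        have hkl : k ≠ l := fun h => hne (by rw [h])
        rw [Set.image_comp, Set.image_comp]
        exact (Set.disjoint_image_iff (sim_inj (hT.pos i) (hT.sim i))).2 (hS.disj k l hkl)
      · exact ((hT.disj i j (fun h => hij (Subtype.ext h))).mono_left (sub2 i k)).mono_right
          (sub2 j l)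
  · rintro (i | ⟨i, k⟩)
    · exact h1 i
    · show m * ρ ≤ q i * r k
      have h3 : ρ ≤ q i := (not_le.1 i.2).le
      rw [mul_comm (q i)]
      calc m * ρ ≤ m * q i := by gcongr
        _ ≤ r k * q i := mul_le_mul_of_nonneg_right (hm k) (hT.pos i).le
  · rintro (i | ⟨i, k⟩)
    · exact Or.inl i.2
    · right
      show q i * r k ≤ B * M
      have : q i ≤ B := (h2 i).resolve_left i.2
      exact mul_le_mul this (hM k) (hS.pos k).le ((hT.pos i).le.trans this)

lemma Ref.refine {d : ℕ} {F O : Set (ES d)} {D : ℝ} {κ : Type} [Fintype κ] {S : κ → ES d → ES d}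
    {r : κ → ℝ} (hS : Ref F O D S r) (r1 : ∀ i, r i < 1) :
    ∃ m : ℝ, 0 < m ∧ ∀ ρ : ℝ, 0 < ρ → ρ ≤ 1 →
    ∃ (ι' : Type) (_ : Fintype ι') (T' : ι' → ES d → ES d) (q' : ι' → ℝ), Ref F O D T' q' ∧
      (∀ i, m * ρ ≤ q' i) ∧ (∀ i, q' i ≤ ρ) := by
  classical
  have hne : (Finset.univ : Finset κ).Nonempty := by
    by_contra h
    rw [Finset.not_nonempty_iff_eq_empty] at h
    have := hS.sum
    rw [h] at this; simp at this
  obtain ⟨i0, -, hi0⟩ := Finset.exists_min_image Finset.univ r hne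
  obtain ⟨i1, -, hi1⟩ := Finset.exists_max_image Finset.univ r hne
  refine ⟨r i0, hS.pos i0, fun ρ hρ hρ1 => ?_⟩
  have key : ∀ n : ℕ, ∃ (ι' : Type) (_ : Fintype ι') (T' : ι' → ES d → ES d) (q' : ι' → ℝ),
      Ref F O D T' q' ∧ (∀ i, r i0 * ρ ≤ q' i) ∧ (∀ i, q' i ≤ ρ ∨ q' i ≤ (r i1) ^ (n + 1)) := by
    intro n
    induction n with
    | zero =>
      refine ⟨κ, inferInstance, S, r, hS, fun i => ?_, fun i => Or.inr ?_⟩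
      · refine le_trans ?_ (hi0 i (Finset.mem_univ i))
        exact mul_le_of_le_one_right (hS.pos i0).le hρ1
      · simpa using hi1 i (Finset.mem_univ i)
    | succ n ih =>
      obtain ⟨ι', _, T', q', h, h1, h2⟩ := ih
      have := hS.step r1 (fun i => hi0 i (Finset.mem_univ i)) (hS.pos i0)
        (fun i => hi1 i (Finset.mem_univ i)) h h1 h2
      simpa only [pow_succ] using this
  obtain ⟨n, hn⟩ := exists_pow_lt_of_lt_one hρ (r1 i1)
  obtain ⟨ι', inst, T', q', h, h1, h2⟩ := key n
  refine ⟨ι', inst, T', q', h, h1, fun i => (h2 i).elim id fun h3 => h3.trans ?_⟩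
  exact (pow_le_pow_of_le_one (hS.pos i1).le (r1 i1).le (Nat.le_succ n)).trans hn.le


noncomputable def uu {d : ℕ} (D : ℝ) (K : Set (ES d)) (t : ℝ) : ℝ :=
  Real.exp (-t * (D - d)) * (volume (cthickening (Real.exp (-t)) K)).toReal

lemma vol_cth_lt_top {d : ℕ} {K : Set (ES d)} (hK : IsCompact K) (ε : ℝ) :
    volume (cthickening ε K) < ∞ := (hK.cthickening).measure_lt_top

lemma uu_nonneg {d : ℕ} (D : ℝ) (K : Set (ES d)) (t : ℝ) : 0 ≤ uu D K t := by
  unfold uu; positivity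

lemma uu_LI {d : ℕ} (D : ℝ) {K : Set (ES d)} (hK : IsCompact K) : LI (uu D K) := by
  intro a b
  have h : Antitone (fun t : ℝ => (volume (cthickening (Real.exp (-t)) K)).toReal) := by
    intro s t hst
    refine ENNReal.toReal_mono (vol_cth_lt_top hK _).ne (measure_mono (cthickening_mono ?_ K))
    exact Real.exp_le_exp.2 (by linarith)
  exact h.intervalIntegrable.continuousOn_mul (by fun_prop)

lemma uu_sim {d : ℕ} (D : ℝ) {T : ES d → ES d} {q : ℝ} (hq : 0 < q)
    (h : ∀ x y, dist (T x) (T y) = q * dist x y) {K : Set (ES d)} (hK : IsCompact K) (t : ℝ) :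
    uu D (T '' K) t = q ^ D * uu D K (t - (- Real.log q)) := by
  unfold uu
  rw [sim_cth_vol hq h hK (Real.exp_pos _).le]
  have e1 : Real.exp (-t) / q = Real.exp (-(t - (-Real.log q))) := by
    rw [show -(t - (-Real.log q)) = -t - Real.log q by ring, Real.exp_sub, Real.exp_log hq]
  have e2 : Real.exp (-t * (D - d)) * q ^ d
      = q ^ D * Real.exp (-(t - (-Real.log q)) * (D - d)) := by
    rw [← Real.rpow_natCast, Real.rpow_def_of_pos hq, Real.rpow_def_of_pos hq, ← Real.exp_add,
      ← Real.exp_add]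
    congr 1; ring
  rw [e1, ← mul_assoc, e2, mul_assoc]

lemma uu_le_sum {d : ℕ} (D : ℝ) {ι : Type*} (s : Finset ι) {K : Set (ES d)} (hK : IsCompact K)
    {A : ι → Set (ES d)} (hA : ∀ i, IsCompact (A i)) (h : K ⊆ ⋃ i ∈ s, A i) (t : ℝ) :
    uu D K t ≤ ∑ i ∈ s, uu D (A i) t := by
  unfold uu
  rw [← Finset.mul_sum]
  refine mul_le_mul_of_nonneg_left ?_ (Real.exp_pos _).le
  rw [← ENNReal.toReal_sum (fun i _ => (vol_cth_lt_top (hA i) _).ne)]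
  refine ENNReal.toReal_mono (ENNReal.sum_lt_top.2 fun i _ => vol_cth_lt_top (hA i) _).ne ?_
  refine (measure_mono ?_).trans (measure_biUnion_finset_le s _)
  intro x hx
  obtain ⟨y, hy, hxy⟩ := (mem_cth hK (Real.exp_pos _).le x).1 hx
  obtain ⟨i, hi, hyi⟩ := mem_iUnion₂.1 (h hy)
  exact mem_iUnion₂.2 ⟨i, hi, (mem_cth (hA i) (Real.exp_pos _).le x).2 ⟨y, hyi, hxy⟩⟩

lemma uu_bdd_Icc {d : ℕ} (D : ℝ) {K : Set (ES d)} (hK : IsCompact K) (x y : ℝ) :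
    ∃ B, 0 ≤ B ∧ ∀ t ∈ Icc x y, uu D K t ≤ B := by
  have hc : Continuous (fun t : ℝ => Real.exp (-t * (D - d))) := by fun_prop
  obtain ⟨C, hC⟩ := isCompact_Icc.exists_bound_of_continuousOn (s := Icc x y) hc.continuousOn
  refine ⟨|C| * (volume (cthickening (Real.exp (-x)) K)).toReal, by positivity, fun t ht => ?_⟩
  unfold uu
  refine mul_le_mul ?_ ?_ (by positivity) (by positivity)
  · have := hC t ht
    rw [Real.norm_eq_abs] at this
    exact (le_abs_self _).trans (this.trans (le_abs_self _))
  · refine ENNReal.toReal_mono (vol_cth_lt_top hK _).ne (measure_mono (cthickening_mono ?_ K))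
    exact Real.exp_le_exp.2 (by linarith [ht.1])

lemma Ref.cpt {d : ℕ} {F O : Set (ES d)} {D : ℝ} {ι : Type} [Fintype ι] {T : ι → ES d → ES d}
    {q : ι → ℝ} (h : Ref F O D T q) (hF : IsCompact F) (i : ι) : IsCompact (T i '' F) :=
  hF.image (sim_cont (h.pos i) (h.sim i))

lemma Ref.uu_le {d : ℕ} {F O : Set (ES d)} {D : ℝ} {ι : Type} [Fintype ι] {T : ι → ES d → ES d}
    {q : ι → ℝ} (h : Ref F O D T q) (hF : IsCompact F) (t : ℝ) :
    uu D F t ≤ ∑ i, q i ^ D * uu D F (t - (- Real.log (q i))) := by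
  have := uu_le_sum D Finset.univ hF (fun i => h.cpt hF i)
    (by simpa using h.cover.subset) t
  refine this.trans_eq (Finset.sum_congr rfl fun i _ => uu_sim D (h.pos i) (h.sim i) hF t)

lemma uu_bdd {d : ℕ} {F O : Set (ES d)} {D : ℝ} {κ : Type} [Fintype κ] {S : κ → ES d → ES d}
    {r : κ → ℝ} (hS : Ref F O D S r) (r1 : ∀ i, r i < 1) (hF : IsCompact F) (t0 : ℝ) :
    ∃ M, ∀ t, t0 ≤ t → |uu D F t| ≤ M := by
  obtain ⟨m, hm, href⟩ := hS.refine r1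
  obtain ⟨B, hB0, hB⟩ := uu_bdd_Icc D hF (t0 + Real.log m) t0
  refine ⟨B, fun t ht => ?_⟩
  rw [abs_of_nonneg (uu_nonneg D F t)]
  obtain ⟨ι, _, T, q, h, h1, h2⟩ := href (Real.exp (-(t - t0))) (Real.exp_pos _)
    (Real.exp_le_one_iff.2 (by linarith))
  refine (h.uu_le hF t).trans ?_
  calc ∑ i, q i ^ D * uu D F (t - (- Real.log (q i))) ≤ ∑ i, q i ^ D * B := by
        refine Finset.sum_le_sum fun i _ =>
          mul_le_mul_of_nonneg_left (hB _ ⟨?_, ?_⟩) (Real.rpow_nonneg (h.pos i).le _)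
        · have := Real.log_le_log (by positivity) (h1 i)
          rw [Real.log_mul hm.ne' (Real.exp_pos _).ne', Real.log_exp] at this
          linarith
        · have := Real.log_le_log (h.pos i) (h2 i)
          rw [Real.log_exp] at this
          linarith
    _ = B := by rw [← Finset.sum_mul, h.sum, one_mul]

lemma uu_avg {d : ℕ} {F O : Set (ES d)} {D : ℝ} {κ : Type} [Fintype κ] {S : κ → ES d → ES d}
    {r : κ → ℝ} (hS : Ref F O D S r) (r1 : ∀ i, r i < 1) (hF : IsCompact F) :
    ∃ L, HasAvg (uu D F) L :=
  exists_avg (fun i => r i ^ D) (fun i => - Real.log (r i))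
    (fun i => Real.rpow_pos_of_pos (hS.pos i) D) hS.sum
    (fun i => neg_pos.2 (Real.log_neg (hS.pos i) (r1 i))) (uu D F) (uu_LI D hF) (uu_nonneg D F)
    (uu_bdd hS r1 hF) (hS.uu_le hF)

lemma avg_nonneg {d : ℕ} {F : Set (ES d)} {D L : ℝ} (hF : IsCompact F)
    (hL : HasAvg (uu D F) L) : 0 ≤ L := by
  have h0 : HasAvg (fun _ => 0) 0 := by simp [HasAvg]
  exact h0.le hL (fun a b => intervalIntegrable_const) (uu_LI D hF) (uu_nonneg D F)

lemma piece_avg {d : ℕ} {F O : Set (ES d)} {D : ℝ} {κ : Type} [Fintype κ] {S : κ → ES d → ES d}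
    {r : κ → ℝ} (hS : Ref F O D S r) (r1 : ∀ i, r i < 1) (hF : IsCompact F) {L : ℝ}
    (hL : HasAvg (uu D F) L) {T : ES d → ES d} {q : ℝ} (hq : 0 < q) (hq1 : q ≤ 1)
    (h : ∀ x y, dist (T x) (T y) = q * dist x y) : HasAvg (uu D (T '' F)) (q ^ D * L) := by
  have := (hL.shift (uu_LI D hF) (uu_bdd hS r1 hF)
    (a := - Real.log q) (neg_nonneg.2 (Real.log_nonpos hq.le hq1))).const_mul (q ^ D)
  rw [funext (uu_sim D hq h hF)]
  exact this


lemma Ref.count {d : ℕ} {F O : Set (ES d)} {D : ℝ} (hF : IsCompact F) (hO : IsOpen O)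
    (hne : (F ∩ O).Nonempty) {m : ℝ} (hm : 0 < m) :
    ∃ C : ℝ, 0 < C ∧ ∀ (ρ : ℝ), 0 < ρ → ∀ (ι : Type) [Fintype ι] (T : ι → ES d → ES d) (q : ι → ℝ),
      Ref F O D T q → (∀ i, m * ρ ≤ q i) → (∀ i, q i ≤ ρ) → ∀ (x : ES d) (s : Finset ι),
      (∀ i ∈ s, (T i '' F ∩ ball x ρ).Nonempty) → (s.card : ℝ) ≤ C := by
  obtain ⟨z, hzF, hzO⟩ := hne
  obtain ⟨b, hb, hbO⟩ := Metric.isOpen_iff.1 hO z hzO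
  set R := Metric.diam F + 1 + b with hR
  have hd0 : 0 ≤ Metric.diam F := Metric.diam_nonneg
  have hRpos : 0 < R := by positivity
  refine ⟨(R / (m * b)) ^ d, by positivity, ?_⟩
  intro ρ hρ ι _ T q h h1 h2 x s hs
  set w := volume (ball (0 : ES d) 1) with hw
  have hw0 : w ≠ 0 := (measure_ball_pos _ _ one_pos).ne'
  have hwt : w ≠ ∞ := measure_ball_lt_top.ne
  have e1 : volume (⋃ i ∈ s, T i '' ball z b) = ∑ i ∈ s, volume (T i '' ball z b) := by
    refine measure_biUnion_finset ?_ ?_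
    · intro i _ j _ hij
      exact (h.disj i j hij).mono (Set.image_mono hbO) (Set.image_mono hbO)
    · intro i _
      exact (sim_open (h.pos i) (h.sim i) _ isOpen_ball).measurableSet
  have e2 : volume (⋃ i ∈ s, T i '' ball z b) ≤ volume (ball x (ρ * R)) := by
    refine measure_mono (iUnion₂_subset fun i hi => ?_)
    rintro _ ⟨y, hy, rfl⟩
    obtain ⟨_, ⟨y', hy', rfl⟩, hy''⟩ := hs i hi
    rw [mem_ball] at hy hy'' ⊢
    have d1 : dist z y' ≤ Metric.diam F := Metric.dist_le_diam_of_mem hF.isBounded hzF hy'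
    calc dist (T i y) x ≤ dist (T i y) (T i z) + dist (T i z) (T i y') + dist (T i y') x :=
          dist_triangle4 _ _ _ _
      _ = q i * dist y z + q i * dist z y' + dist (T i y') x := by rw [h.sim, h.sim]
      _ < ρ * b + ρ * Metric.diam F + ρ := by
          have : q i * dist y z ≤ ρ * b := mul_le_mul (h2 i) hy.le dist_nonneg hρ.le
          have : q i * dist z y' ≤ ρ * Metric.diam F := mul_le_mul (h2 i) d1 dist_nonneg hρ.le
          linarith
      _ = ρ * R := by rw [hR]; ring
  rw [e1, Measure.addHaar_ball_of_pos _ _ (by positivity)] at e2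
  have e3 : ∑ i ∈ s, volume (T i '' ball z b) ≥ ∑ i ∈ s, ENNReal.ofReal ((m * ρ * b) ^ d) * w := by
    refine Finset.sum_le_sum fun i _ => ?_
    rw [sim_vol (h.pos i) (h.sim i), Measure.addHaar_ball_of_pos _ _ hb, ← mul_assoc,
      ← ENNReal.ofReal_mul (by have := h.pos i; positivity), finrank_euclideanSpace,
      Fintype.card_fin, ← mul_pow]
    gcongr
    exact h1 i
  have e4 := e3.trans e2
  rw [Finset.sum_const, nsmul_eq_mul, ← mul_assoc, ENNReal.mul_le_mul_iff_left hw0 hwt,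
    finrank_euclideanSpace, Fintype.card_fin, ← ENNReal.ofReal_natCast,
    ← ENNReal.ofReal_mul (by positivity), ENNReal.ofReal_le_ofReal_iff (by positivity)] at e4
  rw [div_pow, le_div_iff₀ (by positivity)]
  have hρd : 0 < ρ ^ d := by positivity
  refine le_of_mul_le_mul_right ?_ hρd
  calc _ = (s.card : ℝ) * (m * ρ * b) ^ d := by rw [mul_assoc, ← mul_pow]; congr 2; ring
    _ ≤ _ := e4
    _ = _ := by rw [mul_pow, mul_comm]

lemma cover_bound {d : ℕ} {F O : Set (ES d)} {D : ℝ} (hD : 0 < D) {κ : Type} [Fintype κ]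
    {S : κ → ES d → ES d}
    {r : κ → ℝ} (hS : Ref F O D S r) (r1 : ∀ i, r i < 1) (hF : IsCompact F) (hO : IsOpen O)
    (hne : (F ∩ O).Nonempty) {L : ℝ} (hL : HasAvg (uu D F) L) (hLpos : 0 < L) :
    ∃ C : ℝ, 0 < C ∧ ∀ (K : Finset ℕ) (x : ℕ → ES d) (s : ℕ → ℝ), (∀ n, 0 < s n) →
      (∀ n, s n ≤ 1) → F ⊆ ⋃ n ∈ K, ball (x n) (s n) → 1 ≤ C * ∑ n ∈ K, s n ^ D := by
  classical
  obtain ⟨m, hm, href⟩ := hS.refine r1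
  obtain ⟨C, hC, hcount⟩ := Ref.count (D := D) hF hO hne hm
  refine ⟨C, hC, fun K x s hs0 hs1 hcov => ?_⟩
  have step : ∀ n, ∃ (A : Set (ES d)) (w : ℝ → ℝ) (c : ℝ), IsCompact A ∧ F ∩ ball (x n) (s n) ⊆ A ∧
      LI w ∧ HasAvg w c ∧ (∀ t, uu D A t ≤ w t) ∧ c ≤ L * (C * s n ^ D) := by
    intro n
    obtain ⟨ι, _, T, q, h, h1, h2⟩ := href (s n) (hs0 n) (hs1 n)
    let W : Finset ι := Finset.univ.filter fun i => (T i '' F ∩ ball (x n) (s n)).Nonempty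
    have hA : IsCompact (⋃ i ∈ W, T i '' F) := W.isCompact_biUnion fun i _ => h.cpt hF i
    refine ⟨⋃ i ∈ W, T i '' F, fun t => ∑ i ∈ W, uu D (T i '' F) t, ∑ i ∈ W, q i ^ D * L,
      hA, ?_, LI.sum _ fun i _ => uu_LI D (h.cpt hF i),
      HasAvg.sum _ (fun i _ => uu_LI D (h.cpt hF i)) (fun i _ => piece_avg hS r1 hF hL (h.pos i)
        ((h2 i).trans (hs1 n)) (h.sim i)), uu_le_sum D W hA (fun i => h.cpt hF i) subset_rfl, ?_⟩
    · rintro y ⟨hyF, hyb⟩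
      have hyF' := hyF
      rw [h.cover] at hyF'
      obtain ⟨i, hi⟩ := mem_iUnion.1 hyF'
      exact mem_iUnion₂.2 ⟨i, Finset.mem_filter.2 ⟨Finset.mem_univ i, y, hi, hyb⟩, hi⟩
    · have hc := hcount (s n) (hs0 n) ι T q h h1 h2 (x n) W
        (fun i hi => (Finset.mem_filter.1 hi).2)
      calc ∑ i ∈ W, q i ^ D * L ≤ ∑ i ∈ W, s n ^ D * L := by
            refine Finset.sum_le_sum fun i _ => mul_le_mul_of_nonneg_right ?_ hLpos.le
            exact Real.rpow_le_rpow (h.pos i).le (h2 i) hD.le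
        _ = (W.card : ℝ) * (s n ^ D * L) := by rw [Finset.sum_const, nsmul_eq_mul]
        _ ≤ C * (s n ^ D * L) := by
            have := Real.rpow_nonneg (hs0 n).le D
            gcongr
        _ = _ := by ring
  choose A w c hAc hAs hwi hwa hAw hc using step
  have hle : ∀ t, uu D F t ≤ ∑ n ∈ K, w n t := fun t => by
    refine (uu_le_sum D K hF hAc ?_ t).trans (Finset.sum_le_sum fun n _ => hAw n t)
    intro y hy
    obtain ⟨n, hn, hyn⟩ := mem_iUnion₂.1 (hcov hy)
    exact mem_iUnion₂.2 ⟨n, hn, hAs n ⟨hy, hyn⟩⟩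
  have h1 : L ≤ ∑ n ∈ K, c n :=
    hL.le (HasAvg.sum K (fun n _ => hwi n) (fun n _ => hwa n)) (uu_LI D hF)
      (LI.sum K fun n _ => hwi n) hle
  have h2 : L * 1 ≤ L * (C * ∑ n ∈ K, s n ^ D) := by
    rw [mul_one]
    refine h1.trans ((Finset.sum_le_sum fun n _ => hc n).trans_eq ?_)
    rw [Finset.mul_sum, Finset.mul_sum]
  exact le_of_mul_le_mul_left h2 hLpos

lemma exists_radius {D : ℝ} (hD : 0 < D) {e : ℝ≥0∞} (he : e ≤ ENNReal.ofReal (1 / 2)) {δ : ℝ}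
    (hδ : 0 < δ) : ∃ s : ℝ, 0 < s ∧ s ≤ 1 ∧ e < ENNReal.ofReal s ∧
      ENNReal.ofReal (s ^ D) ≤ e ^ D + ENNReal.ofReal δ := by
  have het : e ≠ ∞ := (he.trans_lt ENNReal.ofReal_lt_top).ne
  obtain ⟨ρ, hρ⟩ : ∃ ρ : ℝ, ρ = e.toReal := ⟨_, rfl⟩
  have hρ0 : 0 ≤ ρ := by rw [hρ]; positivity
  have he' : e = ENNReal.ofReal ρ := by rw [hρ, ENNReal.ofReal_toReal het]
  have hρ1 : ρ < 1 := by
    rw [he', ENNReal.ofReal_le_ofReal_iff (by norm_num)] at he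
    linarith
  have hc : ContinuousAt (fun s : ℝ => s ^ D) ρ := Real.continuousAt_rpow_const _ _ (Or.inr hD.le)
  have ev : ∀ᶠ s in 𝓝[>] ρ, s ^ D < ρ ^ D + δ :=
    (hc.eventually (gt_mem_nhds (by linarith))).filter_mono nhdsWithin_le_nhds
  have ev2 : ∀ᶠ s in 𝓝[>] ρ, s < 1 := (gt_mem_nhds hρ1).filter_mono nhdsWithin_le_nhds
  obtain ⟨s, hs1, hs2, hs3⟩ := (ev.and (ev2.and self_mem_nhdsWithin)).exists
  have hs3 : ρ < s := hs3
  have hs0 : 0 < s := by linarith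
  refine ⟨s, hs0, hs2.le, ?_, ?_⟩
  · rw [he']; exact (ENNReal.ofReal_lt_ofReal_iff hs0).2 hs3
  · rw [he', ENNReal.ofReal_rpow_of_nonneg hρ0 hD.le, ← ENNReal.ofReal_add (by positivity) hδ.le]
    exact ENNReal.ofReal_le_ofReal hs1.le

lemma haus_pos {d : ℕ} {F O : Set (ES d)} {D : ℝ} (hD : 0 < D) {κ : Type} [Fintype κ]
    {S : κ → ES d → ES d}
    {r : κ → ℝ} (hS : Ref F O D S r) (r1 : ∀ i, r i < 1) (hF : IsCompact F) (hO : IsOpen O)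
    (hne : (F ∩ O).Nonempty) {L : ℝ} (hL : HasAvg (uu D F) L) (hLpos : 0 < L) :
    μH[D] F ≠ 0 := by
  classical
  obtain ⟨C, hC, hcov⟩ := cover_bound hD hS r1 hF hO hne hL hLpos
  intro h0
  rw [Measure.hausdorffMeasure_apply] at h0
  have hle : (⨅ (t : ℕ → Set (ES d)) (_ : F ⊆ ⋃ n, t n)
      (_ : ∀ n, ediam (t n) ≤ ENNReal.ofReal (1 / 2)),
          ∑' n, ⨆ _ : (t n).Nonempty, ediam (t n) ^ D) ≤ 0 := by
    rw [← h0]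
    exact le_iSup₂_of_le (ENNReal.ofReal (1 / 2)) (by simp) le_rfl
  set c := ENNReal.ofReal (1 / (4 * C)) with hcdef
  have hc0 : 0 < c := ENNReal.ofReal_pos.2 (by positivity)
  have hlt := lt_of_le_of_lt hle hc0
  simp only [iInf_lt_iff] at hlt
  obtain ⟨t, htF, htd, hts⟩ := hlt
  obtain ⟨δ, hδ0, hδs⟩ := ENNReal.exists_pos_sum_of_countable hc0.ne' ℕ
  choose s hs0 hs1 hs2 hs3 using fun n => exists_radius hD (htd n) (δ := δ n) (by exact_mod_cast hδ0 n)
  have hx : ∀ n, ∃ x, t n ⊆ ball x (s n) := by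
    intro n
    rcases (t n).eq_empty_or_nonempty with h | ⟨x, hx⟩
    · exact ⟨0, by simp [h]⟩
    · refine ⟨x, fun y hy => ?_⟩
      rw [← eball_ofReal, mem_eball]
      exact (edist_le_ediam_of_mem hy hx).trans_lt (hs2 n)
  choose x hx using hx
  obtain ⟨K, hK⟩ := hF.elim_finite_subcover (fun n => ball (x n) (s n)) (fun n => isOpen_ball)
    (htF.trans (iUnion_mono hx))
  have h1 := hcov K x s hs0 hs1 hK
  have h2 : ENNReal.ofReal (∑ n ∈ K, s n ^ D) ≤ c + c := by
    rw [ENNReal.ofReal_sum_of_nonneg (fun n _ => Real.rpow_nonneg (hs0 n).le D)]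
    calc ∑ n ∈ K, ENNReal.ofReal (s n ^ D)
        ≤ ∑ n ∈ K, ((⨆ _ : (t n).Nonempty, ediam (t n) ^ D) + (δ n : ℝ≥0∞)) := by
          refine Finset.sum_le_sum fun n _ => (hs3 n).trans ?_
          rw [ENNReal.ofReal_coe_nnreal]
          gcongr
          rcases (t n).eq_empty_or_nonempty with h | h
          · simp [h, hD]
          · simp [h]
      _ ≤ ∑' n, ((⨆ _ : (t n).Nonempty, ediam (t n) ^ D) + (δ n : ℝ≥0∞)) :=
          ENNReal.sum_le_tsum K
      _ ≤ c + c := by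
          rw [ENNReal.tsum_add]
          exact add_le_add hts.le hδs.le
  rw [hcdef, ← ENNReal.ofReal_add (by positivity) (by positivity),
    ENNReal.ofReal_le_ofReal_iff (by positivity)] at h2
  have h3 : C * ∑ n ∈ K, s n ^ D ≤ C * (1 / (4 * C) + 1 / (4 * C)) := by gcongr
  have h4 : C * (1 / (4 * C) + 1 / (4 * C)) = 1 / 2 := by field_simp; norm_num
  linarith

lemma sim_lip {d : ℕ} {T : ES d → ES d} {q : ℝ} (hq : 0 < q)
    (h : ∀ x y, dist (T x) (T y) = q * dist x y) : LipschitzWith q.toNNReal T :=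
  LipschitzWith.of_dist_le_mul fun x y => by rw [h, Real.coe_toNNReal _ hq.le]

lemma haus_sim {d : ℕ} {T : ES d → ES d} {q D : ℝ} (hD : 0 < D) (hq : 0 < q)
    (h : ∀ x y, dist (T x) (T y) = q * dist x y) (A : Set (ES d)) :
    μH[D] (T '' A) = ENNReal.ofReal (q ^ D) * μH[D] A := by
  have e : ((q.toNNReal : ENNReal)) ^ D = ENNReal.ofReal (q ^ D) := by
    rw [← ENNReal.ofReal_rpow_of_pos hq]; rfl
  apply le_antisymm
  · rw [← e]; exact (sim_lip hq h).hausdorffMeasure_image_le hD.le A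
  · have hal : AntilipschitzWith (q⁻¹).toNNReal T := by
      refine AntilipschitzWith.of_le_mul_dist fun x y => ?_
      rw [h, Real.coe_toNNReal _ (inv_pos.2 hq).le]
      field_simp; rfl
    have := hal.le_hausdorffMeasure_image hD.le A
    have e' : (((q⁻¹).toNNReal : ENNReal)) ^ D = ENNReal.ofReal ((q⁻¹) ^ D) := by
      rw [← ENNReal.ofReal_rpow_of_pos (inv_pos.2 hq)]; rfl
    rw [e'] at this
    calc _ ≤ ENNReal.ofReal (q ^ D) * (ENNReal.ofReal (q⁻¹ ^ D) * μH[D] (T '' A)) := by gcongr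
      _ = _ := by
        rw [← mul_assoc, ← ENNReal.ofReal_mul (by positivity), ← Real.mul_rpow hq.le (by positivity),
          mul_inv_cancel₀ hq.ne']
        simp

lemma haus_fin {d : ℕ} {F O : Set (ES d)} {D : ℝ} (hD : 0 < D) {κ : Type} [Fintype κ]
    {S : κ → ES d → ES d}
    {r : κ → ℝ} (hS : Ref F O D S r) (r1 : ∀ i, r i < 1) (hF : IsCompact F) :
    μH[D] F ≠ ∞ := by
  obtain ⟨m, hm, href⟩ := hS.refine r1
  choose ι inst T q h h1 h2 using fun n : ℕ => href (1 / ((n : ℝ) + 1)) (by positivity)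
    (by rw [div_le_one (by positivity)]; linarith [Nat.cast_nonneg (α := ℝ) n])
  have hFd : ediam F ≠ ∞ := hF.isBounded.ediam_ne_top
  have hdiam : ∀ n i, ediam (T n i '' F) ≤ ENNReal.ofReal (q n i) * ediam F := fun n i =>
    (sim_lip ((h n).pos i) ((h n).sim i)).ediam_image_le F
  have hle := Measure.hausdorffMeasure_le_liminf_sum D F (l := atTop)
    (fun n : ℕ => ENNReal.ofReal (1 / ((n : ℝ) + 1)) * ediam F) (by
      have h1 : Tendsto (fun n : ℕ => ENNReal.ofReal (1 / ((n : ℝ) + 1))) atTop (𝓝 0) := by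
        have := ENNReal.tendsto_ofReal (tendsto_one_div_add_atTop_nhds_zero_nat (𝕜 := ℝ))
        simpa using this
      have := ENNReal.Tendsto.mul_const h1 (b := ediam F) (Or.inr hFd)
      simpa using this)
    (fun n i => T n i '' F)
    (Eventually.of_forall fun n i => (hdiam n i).trans (by
      gcongr
      exact h2 n i))
    (Eventually.of_forall fun n => (h n).cover.subset)
  have hb : ∀ n, ∑ i, ediam (T n i '' F) ^ D ≤ ediam F ^ D := by
    intro n
    calc ∑ i, ediam (T n i '' F) ^ D ≤ ∑ i, ENNReal.ofReal (q n i ^ D) * ediam F ^ D := by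
          refine Finset.sum_le_sum fun i _ => ?_
          rw [← ENNReal.ofReal_rpow_of_pos ((h n).pos i), ← ENNReal.mul_rpow_of_nonneg _ _ hD.le]
          exact ENNReal.rpow_le_rpow (hdiam n i) hD.le
      _ = ediam F ^ D := by
          rw [← Finset.sum_mul, ← ENNReal.ofReal_sum_of_nonneg
            (fun i _ => Real.rpow_nonneg ((h n).pos i).le D), (h n).sum]
          simp
  have h3 : liminf (fun n => ∑ i, ediam (T n i '' F) ^ D) atTop ≤ ediam F ^ D := by
    refine (liminf_le_liminf (Eventually.of_forall hb)).trans ?_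
    simp
  exact ((hle.trans h3).trans_lt (ENNReal.rpow_lt_top_of_nonneg hD.le hFd)).ne


lemma loc_bound {d : ℕ} (m : Measure (ES d)) {ι : Type*} [Fintype ι] {A : Set (ES d)}
    {B : ι → Set (ES d)} (hA : A = ⋃ i, B i) (hBm : ∀ i, MeasurableSet (B i))
    (hBf : ∀ i, m (B i) ≠ ∞) {f : ES d → ℝ} (hf : Continuous f) {C η : ℝ} (hC : ∀ x, |f x| ≤ C)
    (c : ι → ℝ) (hc : ∀ i, ∀ x ∈ B i, |f x - c i| ≤ η) :
    |(∫ x in A, f x ∂m) - ∑ i, c i * (m (B i)).toReal| ≤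
      C * (∑ i, (m (B i)).toReal - (m A).toReal) + η * ∑ i, (m (B i)).toReal := by
  classical
  have hAm : MeasurableSet A := by rw [hA]; exact MeasurableSet.iUnion hBm
  have hAf : m A ≠ ∞ := by
    rw [hA]
    exact ((measure_iUnion_fintype_le m B).trans_lt
      (ENNReal.sum_lt_top.2 fun i _ => (hBf i).lt_top)).ne
  have iB : ∀ i (k : ℝ), Integrable ((B i).indicator fun _ => k) m := fun i k =>
    (integrable_indicator_iff (hBm i)).2 (integrableOn_const (hBf i))
  have iA : Integrable (A.indicator fun _ => (1:ℝ)) m :=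
    (integrable_indicator_iff hAm).2 (integrableOn_const hAf)
  have iAf : Integrable (A.indicator f) m := by
    refine (integrable_indicator_iff hAm).2 ?_
    exact IntegrableOn.of_bound hAf.lt_top hf.aestronglyMeasurable C
      (Eventually.of_forall fun x => hC x)
  have eB : ∀ i (k : ℝ), ∫ x, (B i).indicator (fun _ => k) x ∂m = k * (m (B i)).toReal := by
    intro i k
    rw [integral_indicator_const _ (hBm i), smul_eq_mul, mul_comm]; rfl
  have eA : ∫ x, A.indicator (fun _ => (1:ℝ)) x ∂m = (m A).toReal := by
    rw [integral_indicator_const _ hAm, smul_eq_mul, mul_one]; rfl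
  have e1 : (∫ x in A, f x ∂m) - ∑ i, c i * (m (B i)).toReal =
      ∫ x, (A.indicator f x - ∑ i, (B i).indicator (fun _ => c i) x) ∂m := by
    rw [integral_sub iAf (integrable_finsetSum _ fun i _ => iB i (c i)), integral_indicator hAm,
      integral_finsetSum _ (fun i _ => iB i (c i))]
    simp_rw [eB]
  have e2 : C * (∑ i, (m (B i)).toReal - (m A).toReal) + η * ∑ i, (m (B i)).toReal =
      ∫ x, (C * (∑ i, (B i).indicator (fun _ => (1:ℝ)) x - A.indicator (fun _ => (1:ℝ)) x)
        + η * ∑ i, (B i).indicator (fun _ => (1:ℝ)) x) ∂m := by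
    have i1 : Integrable (fun x => ∑ i, (B i).indicator (fun _ => (1:ℝ)) x) m :=
      integrable_finsetSum _ fun i _ => iB i 1
    have i2 : Integrable (fun x => (∑ i, (B i).indicator (fun _ => (1:ℝ)) x)
        - A.indicator (fun _ => (1:ℝ)) x) m := i1.sub iA
    rw [integral_add (i2.const_mul C) (i1.const_mul η), integral_const_mul,
      integral_const_mul, integral_sub i1 iA, integral_finsetSum _ (fun i _ => iB i 1), eA]
    simp_rw [eB, one_mul]
  rw [e1, e2, ← Real.norm_eq_abs]
  refine norm_integral_le_of_norm_le ?_ (Eventually.of_forall fun x => ?_)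
  · have i1 : Integrable (fun x => ∑ i, (B i).indicator (fun _ => (1:ℝ)) x) m :=
      integrable_finsetSum _ fun i _ => iB i 1
    exact ((i1.sub iA).const_mul C).add (i1.const_mul η)
  · rw [Real.norm_eq_abs]
    by_cases hx : x ∈ A
    · rw [indicator_of_mem hx, indicator_of_mem hx]
      set k := ∑ i, (B i).indicator (fun _ => (1:ℝ)) x with hk
      have hk1 : 1 ≤ k := by
        have hx' := hx
        rw [hA] at hx'
        obtain ⟨i, hi⟩ := mem_iUnion.1 hx'
        have := Finset.single_le_sum (f := fun i => (B i).indicator (fun _ => (1:ℝ)) x)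
          (fun j _ => indicator_nonneg (fun _ _ => zero_le_one) x) (Finset.mem_univ i)
        simpa [indicator_of_mem hi] using this
      have e3 : f x - ∑ i, (B i).indicator (fun _ => c i) x =
          -(f x * (k - 1)) + ∑ i, (B i).indicator (fun _ => f x - c i) x := by
        have : ∀ i, (B i).indicator (fun _ => f x - c i) x =
            f x * (B i).indicator (fun _ => (1:ℝ)) x - (B i).indicator (fun _ => c i) x := by
          intro i
          by_cases h : x ∈ B i <;> simp [h]
        simp_rw [this]
        rw [Finset.sum_sub_distrib, ← Finset.mul_sum, ← hk]; ring
      rw [e3]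
      refine (abs_add_le _ _).trans (add_le_add ?_ ?_)
      · rw [abs_neg, abs_mul, abs_of_nonneg (by linarith : 0 ≤ k - 1)]
        exact mul_le_mul_of_nonneg_right (hC x) (by linarith)
      · rw [hk, Finset.mul_sum]
        refine (Finset.abs_sum_le_sum_abs _ _).trans (Finset.sum_le_sum fun i _ => ?_)
        by_cases h : x ∈ B i
        · simpa [h] using hc i x h
        · simp [h]
    · have hB : ∀ i, x ∉ B i := fun i hi => hx (by rw [hA]; exact mem_iUnion.2 ⟨i, hi⟩)
      simp [hx, hB]

lemma avg_approx {v : ℝ → ℝ} {M : ℝ} (iv : LI v)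
    (h : ∀ η > 0, ∃ (w b : ℝ → ℝ) (Lw Lb t1 : ℝ), LI w ∧ LI b ∧ HasAvg w Lw ∧ HasAvg b Lb ∧
      (∀ t, t1 ≤ t → |v t - w t| ≤ b t) ∧ |Lw - M| ≤ η ∧ Lb ≤ η) : HasAvg v M := by
  unfold HasAvg
  rw [Metric.tendsto_nhds]
  intro ε hε
  obtain ⟨w, b, Lw, Lb, t1, iw, ib, hw, hb, hvw, hM, hLb⟩ := h (ε / 8) (by positivity)
  have iwb : LI (fun t => w t + b t) := fun x y => (iw x y).add (ib x y)
  have iwb' : LI (fun t => w t - b t) := fun x y => (iw x y).sub (ib x y)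
  obtain ⟨B1, hB1⟩ := int_le_of_ev iv iwb (t1 := t1)
    (fun t ht => by have := abs_le.1 (hvw t ht); linarith)
  obtain ⟨B2, hB2⟩ := int_le_of_ev iwb' iv (t1 := t1)
    (fun t ht => by have := abs_le.1 (hvw t ht); linarith)
  have l1 : Tendsto (fun T : ℝ => T⁻¹ * B1) atTop (𝓝 0) := by
    simpa using tendsto_inv_atTop_zero.mul_const B1
  have l2 : Tendsto (fun T : ℝ => T⁻¹ * B2) atTop (𝓝 0) := by
    simpa using tendsto_inv_atTop_zero.mul_const B2
  have hwb := hw.add hb iw ib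
  have hwb' := hw.sub hb iw ib
  have hε8 : (0:ℝ) < ε / 8 := by positivity
  filter_upwards [Metric.tendsto_nhds.1 hwb _ hε8, Metric.tendsto_nhds.1 hwb' _ hε8,
    Metric.tendsto_nhds.1 l1 _ hε8, Metric.tendsto_nhds.1 l2 _ hε8,
    eventually_ge_atTop t1, eventually_gt_atTop 0] with T h1 h2 h3 h4 h5 h6
  rw [Real.dist_eq, abs_lt] at h1 h2 h3 h4 ⊢
  have hT : 0 ≤ T⁻¹ := (inv_pos.2 h6).le
  have k1 := mul_le_mul_of_nonneg_left (hB1 T h5) hT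
  have k2 := mul_le_mul_of_nonneg_left (hB2 T h5) hT
  rw [mul_add] at k1 k2
  have k3 := abs_le.1 hM
  constructor <;> linarith

noncomputable def vv {d : ℕ} (D : ℝ) (K : Set (ES d)) (f : ES d → ℝ) (t : ℝ) : ℝ :=
  Real.exp (-t * (D - d)) * (∫ x in cthickening (Real.exp (-t)) K, f x)

lemma int_on_cth {d : ℕ} {K : Set (ES d)} (hK : IsCompact K) {f : ES d → ℝ} (hf : Continuous f)
    (ε : ℝ) : IntegrableOn f (cthickening ε K) volume :=
  hf.continuousOn.integrableOn_compact hK.cthickening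

lemma vv_LI {d : ℕ} (D : ℝ) {K : Set (ES d)} (hK : IsCompact K) {f : ES d → ℝ} (hf : Continuous f)
    {C : ℝ} (hC : ∀ x, |f x| ≤ C) : LI (vv D K f) := by
  intro a b
  have h : ∀ g : ES d → ℝ, Continuous g → (∀ x, 0 ≤ g x) →
      Antitone (fun t : ℝ => ∫ x in cthickening (Real.exp (-t)) K, g x) := by
    intro g hg hg0 s t hst
    refine setIntegral_mono_set (int_on_cth hK hg _) (Eventually.of_forall hg0) ?_
    exact (cthickening_mono (Real.exp_le_exp.2 (by linarith)) K).eventuallyLE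
  have h1 := (h (fun x => f x + C) (by fun_prop)
    (fun x => by have := abs_le.1 (hC x); linarith)).intervalIntegrable (μ := volume) (a := a) (b := b)
  have h2 := (h (fun _ => C) (by fun_prop)
    (fun x => (abs_nonneg _).trans (hC x))).intervalIntegrable (μ := volume) (a := a) (b := b)
  have h3 := (h1.sub h2).continuousOn_mul
    (g := fun t : ℝ => Real.exp (-t * (D - d))) (by fun_prop)
  refine h3.congr fun t _ => ?_
  simp only [vv]
  rw [← integral_sub (int_on_cth hK (by fun_prop) _) (int_on_cth hK (by fun_prop) _)]
  simp

lemma Ref.cth {d : ℕ} {F O : Set (ES d)} {D : ℝ} {ι : Type} [Fintype ι] {T : ι → ES d → ES d}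
    {q : ι → ℝ} (h : Ref F O D T q) (hF : IsCompact F) {ε : ℝ} (hε : 0 ≤ ε) :
    cthickening ε F = ⋃ i, cthickening ε (T i '' F) := by
  ext x
  simp only [mem_iUnion, mem_cth hF hε, mem_cth (h.cpt hF _) hε]
  constructor
  · rintro ⟨y, hy, hxy⟩
    rw [h.cover] at hy
    obtain ⟨i, hi⟩ := mem_iUnion.1 hy
    exact ⟨i, y, hi, hxy⟩
  · rintro ⟨i, y, hy, hxy⟩
    refine ⟨y, ?_, hxy⟩
    rw [h.cover]
    exact mem_iUnion.2 ⟨i, hy⟩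

lemma loc_avg {d : ℕ} {F O : Set (ES d)} {D : ℝ} (hD : 0 < D) {κ : Type} [Fintype κ]
    {S : κ → ES d → ES d}
    {r : κ → ℝ} (hS : Ref F O D S r) (r1 : ∀ i, r i < 1) (hF : IsCompact F) (hO : IsOpen O)
    (hne : (F ∩ O).Nonempty) {L : ℝ} (hL : HasAvg (uu D F) L) {f : ES d → ℝ} (hf : Continuous f)
    {C : ℝ} (hC : ∀ x, |f x| ≤ C) :
    HasAvg (vv D F f) (L * ∫ x, f x ∂((μH[D] F)⁻¹ • (μH[D] : Measure (ES d)).restrict F)) := by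
  have iu := uu_LI D hF
  have hL0 := avg_nonneg hF hL
  have hC0 : 0 ≤ C := (abs_nonneg _).trans (hC 0)
  refine avg_approx (vv_LI D hF hf hC) fun η hη => ?_
  rcases hL0.eq_or_lt with h0 | hLpos
  · subst h0
    refine ⟨fun _ => 0, fun t => C * uu D F t, 0, C * 0, 0, fun a b => intervalIntegrable_const,
      iu.const_mul C, by simp [HasAvg], hL.const_mul C, fun t _ => ?_, by simpa using hη.le,
      by simpa using hη.le⟩
    simp only [vv, uu, sub_zero]
    rw [abs_mul, abs_of_pos (Real.exp_pos _), mul_left_comm]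
    refine mul_le_mul_of_nonneg_left ?_ (Real.exp_pos _).le
    have h9 := norm_setIntegral_le_of_norm_le_const (f := f) (C := C)
      (vol_cth_lt_top hF (Real.exp (-t))) (fun x _ => hC x)
    exact h9
  have hH0 := haus_pos hD hS r1 hF hO hne hL hLpos
  have hHt := haus_fin hD hS r1 hF
  set m : Measure (ES d) := (μH[D] F)⁻¹ • (μH[D] : Measure (ES d)).restrict F with hm
  -- choose parameters
  obtain ⟨η', hη', hη'L⟩ : ∃ η' > 0, L * η' ≤ η := ⟨η / L, by positivity, by field_simp; rfl⟩
  obtain ⟨z, hzF, -⟩ := hne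
  have huc := (hF.cthickening (r := 1)).uniformContinuousOn_of_continuous hf.continuousOn
  rw [Metric.uniformContinuousOn_iff] at huc
  obtain ⟨δ, hδ, huc⟩ := huc η' hη'
  have hd0 : 0 ≤ Metric.diam F := Metric.diam_nonneg
  set ρ := min 1 (δ / 2 / (Metric.diam F + 1)) with hρ
  have hρ0 : 0 < ρ := by positivity
  have hρd : ρ * Metric.diam F < δ / 2 := by
    have : ρ ≤ δ / 2 / (Metric.diam F + 1) := min_le_right _ _
    rw [le_div_iff₀ (by positivity)] at this
    linarith
  obtain ⟨m', hm', href⟩ := hS.refine r1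
  obtain ⟨ι, _, T, q, h, -, h2⟩ := href ρ hρ0 (min_le_left _ _)
  have hFT : ∀ i, T i '' F ⊆ F := fun i => by
    conv_rhs => rw [h.cover]
    exact subset_iUnion (fun i => T i '' F) i
  have hq1 : ∀ i, q i ≤ 1 := fun i => (h2 i).trans (min_le_left _ _)
  have hosc : ∀ (ε : ℝ), 0 ≤ ε → ε ≤ 1 → ε < δ / 2 → ∀ i, ∀ x ∈ cthickening ε (T i '' F),
      |f x - f (T i z)| ≤ η' := by
    intro ε hε hε1 hεδ i x hx
    obtain ⟨_, ⟨y, hy, rfl⟩, hxy⟩ := (mem_cth (h.cpt hF i) hε x).1 hx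
    have hx1 : x ∈ cthickening 1 F :=
      (mem_cth hF zero_le_one x).2 ⟨T i y, hFT i ⟨y, hy, rfl⟩, hxy.trans hε1⟩
    have hz1 : T i z ∈ cthickening 1 F :=
      self_subset_cthickening F (hFT i ⟨z, hzF, rfl⟩)
    refine (huc x hx1 (T i z) hz1 ?_).le
    have d1 : dist y z ≤ Metric.diam F := Metric.dist_le_diam_of_mem hF.isBounded hy hzF
    have d2 : q i * dist y z ≤ ρ * Metric.diam F := mul_le_mul (h2 i) d1 dist_nonneg hρ0.le
    calc dist x (T i z) ≤ dist x (T i y) + dist (T i y) (T i z) := dist_triangle _ _ _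
      _ < δ := by rw [h.sim]; linarith
  have ui : ∀ i, LI (uu D (T i '' F)) := fun i => uu_LI D (h.cpt hF i)
  have ua : ∀ i, HasAvg (uu D (T i '' F)) (q i ^ D * L) := fun i =>
    piece_avg hS r1 hF hL (h.pos i) (hq1 i) (h.sim i)
  have us : HasAvg (fun t => ∑ i, uu D (T i '' F) t) L := by
    have := HasAvg.sum Finset.univ (fun i _ => ui i) (fun i _ => ua i)
    rwa [← Finset.sum_mul, h.sum, one_mul] at this
  have usi : LI (fun t => ∑ i, uu D (T i '' F) t) := LI.sum _ fun i _ => ui i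
  have sub_i : LI (fun t => (∑ i, uu D (T i '' F) t) - uu D F t) := fun a b =>
    (usi a b).sub (iu a b)
  refine ⟨fun t => ∑ i, f (T i z) * uu D (T i '' F) t,
    fun t => C * ((∑ i, uu D (T i '' F) t) - uu D F t) + η' * ∑ i, uu D (T i '' F) t,
    ∑ i, f (T i z) * (q i ^ D * L), C * (L - L) + η' * L,
    max 0 (- Real.log (δ / 4)), LI.sum _ fun i _ => (ui i).const_mul _,
    fun a b => ((sub_i.const_mul C) a b).add ((usi.const_mul η') a b),
    HasAvg.sum _ (fun i _ => (ui i).const_mul _) (fun i _ => (ua i).const_mul _),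
    ((us.sub hL usi iu).const_mul C).add (us.const_mul η') (sub_i.const_mul C) (usi.const_mul η'),
    fun t ht => ?_, ?_, by rw [sub_self, mul_zero, zero_add, mul_comm]; exact hη'L⟩
  · have hε1 : Real.exp (-t) ≤ 1 :=
      Real.exp_le_one_iff.2 (by linarith [(le_max_left _ _).trans ht])
    have hεδ : Real.exp (-t) < δ / 2 := by
      have h3 : -t ≤ Real.log (δ / 4) := by linarith [(le_max_right _ _).trans ht]
      have := Real.exp_le_exp.2 h3
      rw [Real.exp_log (by positivity)] at this
      linarith
    have key := loc_bound volume (h.cth hF (Real.exp_pos (-t)).le)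
      (fun i => isClosed_cthickening.measurableSet)
      (fun i => (vol_cth_lt_top (h.cpt hF i) _).ne) hf hC (fun i => f (T i z))
      (hosc _ (Real.exp_pos (-t)).le hε1 hεδ)
    have hpos := Real.exp_pos (-t * (D - d))
    have := mul_le_mul_of_nonneg_left key hpos.le
    rw [← abs_of_pos hpos, ← abs_mul, abs_of_pos hpos] at this
    simp only [vv, uu]
    refine le_trans (le_of_eq ?_) (this.trans (le_of_eq ?_))
    · generalize Real.exp (-t * (D - d)) = E
      congr 1
      rw [mul_sub, Finset.mul_sum]
      congr 1
      exact Finset.sum_congr rfl fun i _ => by ring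
    · rw [← Finset.mul_sum]; ring
  · -- Hausdorff part
    have hmr : ∀ A ⊆ F, (m A).toReal = ((μH[D] F)⁻¹ * μH[D] A).toReal := by
      intro A hA
      rw [hm, Measure.smul_apply, Measure.restrict_eq_self _ hA, smul_eq_mul]
    have hmF : (m F).toReal = 1 := by
      rw [hmr F subset_rfl, ENNReal.inv_mul_cancel hH0 hHt]; simp
    have hmi : ∀ i, (m (T i '' F)).toReal = q i ^ D := by
      intro i
      rw [hmr _ (hFT i), haus_sim hD (h.pos i) (h.sim i), mul_left_comm,
        ENNReal.inv_mul_cancel hH0 hHt, mul_one,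
        ENNReal.toReal_ofReal (Real.rpow_nonneg (h.pos i).le _)]
    have hfin : ∀ i, m (T i '' F) ≠ ∞ := by
      intro i h
      have h3 := hmi i
      rw [h] at h3
      have := Real.rpow_pos_of_pos (‹Ref F O D T q›.pos i) D
      simp at h3
      linarith
    have key := loc_bound m h.cover (fun i => (h.cpt hF i).measurableSet) hfin hf hC
      (fun i => f (T i z)) (fun i x hx => hosc 0 le_rfl zero_le_one (by positivity) i x
        (self_subset_cthickening _ hx))
    have hres : m.restrict F = m := by
      rw [hm, Measure.restrict_smul, Measure.restrict_restrict hF.measurableSet, inter_self]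
    simp_rw [hmi] at key
    rw [hres, h.sum, hmF, sub_self, mul_zero, zero_add, mul_one] at key
    have e : ∑ i, f (T i z) * (q i ^ D * L) - L * ∫ x, f x ∂m =
        - (L * ((∫ x, f x ∂m) - ∑ i, f (T i z) * q i ^ D)) := by
      rw [mul_sub, Finset.mul_sum, neg_sub]
      congr 1
      exact Finset.sum_congr rfl fun i _ => by ring
    rw [e, abs_neg, abs_mul, abs_of_pos hLpos]
    exact (mul_le_mul_of_nonneg_left key hLpos.le).trans hη'L

lemma conv_avg {s : ℝ} {W v : ℝ → ℝ} (hv : ∀ t, v t = Real.exp (-t * s) * W (Real.exp (-t)))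
    (iv : LI v) {L : ℝ} (hL : HasAvg v L) {ε₀ : ℝ} (hε₀ : 0 < ε₀) :
    Tendsto (fun δ : ℝ => (Real.log δ⁻¹)⁻¹ * ∫ ε in Set.Ioc δ ε₀, ε ^ s * W ε * ε⁻¹)
      (𝓝[>] 0) (𝓝 L) := by
  set a := - Real.log ε₀ with ha
  have h1 : Tendsto (fun T : ℝ => T⁻¹ * ∫ t in a..T, v t) atTop (𝓝 L) := by
    refine tendsto_of_bdd_diff (A := fun T => ∫ t in (0:ℝ)..T, v t)
      (C := |∫ t in a..(0:ℝ), v t|) hL (Eventually.of_forall fun T => ?_)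
    rw [← intervalIntegral.integral_add_adjacent_intervals (iv a 0) (iv 0 T), add_sub_cancel_right]
  have h2 : Tendsto (fun δ : ℝ => Real.log δ⁻¹) (𝓝[>] 0) atTop :=
    Real.tendsto_log_atTop.comp tendsto_inv_nhdsGT_zero
  refine (h1.comp h2).congr' ?_
  have ev : ∀ᶠ δ : ℝ in 𝓝[>] 0, δ < ε₀ := (gt_mem_nhds hε₀).filter_mono nhdsWithin_le_nhds
  filter_upwards [ev, self_mem_nhdsWithin] with δ hδ hδ0
  have hδ0 : 0 < δ := hδ0
  simp only [Function.comp]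
  congr 1
  have hT : Real.log δ⁻¹ = - Real.log δ := Real.log_inv δ
  have haT : a ≤ Real.log δ⁻¹ := by
    rw [hT, ha]; exact neg_le_neg (Real.log_le_log hδ0 hδ.le)
  have him : (fun t : ℝ => Real.exp (-t)) '' Ico a (Real.log δ⁻¹) = Ioc δ ε₀ := by
    ext x
    constructor
    · rintro ⟨t, ⟨ht1, ht2⟩, rfl⟩
      constructor
      · rw [← Real.log_lt_iff_lt_exp hδ0]; linarith
      · show Real.exp (-t) ≤ ε₀
        rw [← Real.le_log_iff_exp_le hε₀]; linarith
    · rintro ⟨hx1, hx2⟩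
      have hx0 : 0 < x := hδ0.trans hx1
      refine ⟨- Real.log x, ⟨neg_le_neg (Real.log_le_log hx0 hx2), ?_⟩, ?_⟩
      · rw [hT]; exact neg_lt_neg (Real.log_lt_log hδ0 hx1)
      · simp [Real.exp_log hx0]
  rw [← him, integral_image_eq_integral_abs_deriv_smul (f' := fun t => -Real.exp (-t))
    measurableSet_Ico
    (fun t _ => by
      have : HasDerivAt (fun t : ℝ => Real.exp (-t)) (-Real.exp (-t)) t := by
        simpa using (hasDerivAt_neg t).exp
      exact this.hasDerivWithinAt)
    (fun x _ y _ hxy => by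
      have := Real.exp_injective hxy
      linarith), intervalIntegral.integral_of_le haT, integral_Ico_eq_integral_Ioc]
  refine integral_congr_ae (Eventually.of_forall fun t => ?_)
  have hp := Real.exp_pos (-t)
  simp only [hv t, abs_neg, abs_of_pos hp, smul_eq_mul, Real.exp_mul]
  field_simp

/-- (Localization of the average Minkowski content.) Under the SOSC
with respect to `J` and for any `ε₀ > 0`, the logarithmically averaged Minkowski
content `Λ = lim_{δ→0⁺} (1/ln(1/δ)) ∫_δ^{ε₀} ε^{D-d} λ_d(F(ε)) ε⁻¹ dε` exists and is
finite, and for every bounded continuous `f : ℝ^d → ℝ` the logarithmic averages of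
`ε^{D-d} ∫_{F(ε)} f dλ_d` converge to `Λ · ∫_F f dμ_F`; i.e. the rescaled volume
measures converge weakly to `Λ · μ_F` with `μ_F = H^D(F ∩ ·)/H^D(F)`. -/
theorem statement5 (d N : ℕ) (hd : 1 ≤ d) (hN : 2 ≤ N)
    (S : Fin N → EuclideanSpace ℝ (Fin d) → EuclideanSpace ℝ (Fin d))
    (r : Fin N → ℝ) (hr : ∀ i, r i ∈ Set.Ioo (0 : ℝ) 1)
    (hS : ∀ i x y, dist (S i x) (S i y) = r i * dist x y)
    (F : Set (EuclideanSpace ℝ (Fin d)))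
    (hF_ne : F.Nonempty) (hF_cpt : IsCompact F)
    (hF_self : F = ⋃ i, S i '' F)
    (D : ℝ) (hD : 0 < D) (hD_dim : ∑ i, r i ^ D = 1)
    (J : Set (EuclideanSpace ℝ (Fin d))) (hJ_cpt : IsCompact J)
    (hJ_reg : J = closure (interior J))
    (hJ_sub : ∀ i, S i '' J ⊆ J)
    (hJ_disj : ∀ i j, i ≠ j → Disjoint (S i '' interior J) (S j '' interior J))
    (hSOSC : (F ∩ interior J).Nonempty)
    (ε₀ : ℝ) (hε₀ : 0 < ε₀) :
    ∃ Λ : ℝ,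
      Tendsto (fun δ : ℝ => (Real.log δ⁻¹)⁻¹ *
          ∫ ε in Set.Ioc δ ε₀,
            ε ^ (D - d) * (volume (Metric.cthickening ε F)).toReal * ε⁻¹)
        (𝓝[>] 0) (𝓝 Λ)
      ∧ ∀ f : EuclideanSpace ℝ (Fin d) → ℝ, Continuous f →
          (∃ C : ℝ, ∀ x, |f x| ≤ C) →
          Tendsto (fun δ : ℝ => (Real.log δ⁻¹)⁻¹ *
              ∫ ε in Set.Ioc δ ε₀,
                ε ^ (D - d) * (∫ x in Metric.cthickening ε F, f x) * ε⁻¹)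
            (𝓝[>] 0)
            (𝓝 (Λ * ∫ x, f x
              ∂((μH[D] F)⁻¹ •
                (μH[D] : Measure (EuclideanSpace ℝ (Fin d))).restrict F))) := by
  have hRef : Ref F (interior J) D S r :=
    { pos := fun i => (hr i).1
      sim := hS
      cover := hF_self
      sum := hD_dim
      sub := fun i => interior_maximal ((image_mono interior_subset).trans (hJ_sub i))
        (sim_open (hr i).1 (hS i) _ isOpen_interior)
      disj := hJ_disj }
  have r1 : ∀ i, r i < 1 := fun i => (hr i).2
  obtain ⟨L, hL⟩ := uu_avg hRef r1 hF_cpt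
  refine ⟨L, conv_avg (s := D - d) (W := fun ε => (volume (cthickening ε F)).toReal)
    (v := uu D F) (fun t => rfl) (uu_LI D hF_cpt) hL hε₀, ?_⟩
  rintro f hf ⟨C, hC⟩
  exact conv_avg (s := D - d) (W := fun ε => ∫ x in cthickening ε F, f x) (v := vv D F f)
    (fun t => rfl) (vv_LI D hF_cpt hf hC)
    (loc_avg hD hRef r1 hF_cpt isOpen_interior hSOSC hL hf hC) hε₀
end

section
/- Assume the SOSC holds with respect to J, and fix ε₀ > 0. Then the logarithmically averaged surface content Λ_S := lim_{δ→0⁺} (1/ln(1/δ)) ∫_δ^{ε₀} ε^{D−d+1} H^{d−1}(∂F(ε)) ε^{−1} dε exists and is finite, and the rescaled surface measures localize: for every bounded continuous f : ℝ^d → ℝ, lim_{δ→0⁺} (1/ln(1/δ)) ∫_δ^{ε₀} ε^{D−d+1} (∫_{∂F(ε)} f dH^{d−1}) ε^{−1} dε = Λ_S · ∫_F f dμ_F, where ∂F(ε) is the topological boundary of F(ε). In other words, the measures (1/ln(1/δ)) ∫_δ^{ε₀} ε^{D−d+1} H^{d−1}(∂F(ε) ∩ ·) ε^{−1} dε converge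 weakly, as δ → 0, to Λ_S · μ_F, a constant multiple of the normalized D-dimensional Hausdorff measure on F. -/
open MeasureTheory Metric Filter Set
open scoped ENNReal Topology

lemma sim_surj_s6 {d : ℕ} {T : EuclideanSpace ℝ (Fin d) → EuclideanSpace ℝ (Fin d)} {ρ : ℝ}
    (hρ : 0 < ρ) (hT : ∀ x y, dist (T x) (T y) = ρ * dist x y) : Function.Surjective T := by
  have hiso : Isometry (fun x => ρ⁻¹ • T x) := by
    apply Isometry.of_dist_eq
    intro x y
    rw [dist_smul₀, hT, Real.norm_eq_abs, abs_of_pos (inv_pos.2 hρ)]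
    field_simp
  let A := hiso.affineIsometryOfStrictConvexSpace
  let B := A.toAffineIsometryEquiv rfl
  intro y
  obtain ⟨x, hx⟩ := B.surjective (ρ⁻¹ • y)
  refine ⟨x, ?_⟩
  have h2 : ρ⁻¹ • T x = ρ⁻¹ • y := by
    rw [← hx]
    rfl
  exact smul_right_injective _ (inv_ne_zero hρ.ne') h2

lemma sim_lip_s6 {d : ℕ} {T : EuclideanSpace ℝ (Fin d) → EuclideanSpace ℝ (Fin d)} {ρ : ℝ}
    (hρ : 0 < ρ) (hT : ∀ x y, dist (T x) (T y) = ρ * dist x y) :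
    LipschitzWith (Real.toNNReal ρ) T := by
  apply LipschitzWith.of_dist_le_mul
  intro x y
  rw [hT, Real.coe_toNNReal _ hρ.le]

lemma sim_antilip {d : ℕ} {T : EuclideanSpace ℝ (Fin d) → EuclideanSpace ℝ (Fin d)} {ρ : ℝ}
    (hρ : 0 < ρ) (hT : ∀ x y, dist (T x) (T y) = ρ * dist x y) :
    AntilipschitzWith (Real.toNNReal ρ⁻¹) T := by
  apply AntilipschitzWith.of_le_mul_dist
  intro x y
  rw [hT, Real.coe_toNNReal _ (inv_pos.2 hρ).le]
  field_simp
  exact le_rfl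

lemma sim_haus_le {d : ℕ} {T : EuclideanSpace ℝ (Fin d) → EuclideanSpace ℝ (Fin d)} {ρ : ℝ}
    (hρ : 0 < ρ) (hT : ∀ x y, dist (T x) (T y) = ρ * dist x y) {s : ℝ} (hs : 0 ≤ s)
    (A : Set (EuclideanSpace ℝ (Fin d))) :
    μH[s] (T '' A) ≤ ENNReal.ofReal (ρ ^ s) * μH[s] A := by
  refine ((sim_lip_s6 hρ hT).hausdorffMeasure_image_le hs A).trans ?_
  rw [← ENNReal.ofReal_rpow_of_pos hρ]
  rfl

lemma sim_haus_ge {d : ℕ} {T : EuclideanSpace ℝ (Fin d) → EuclideanSpace ℝ (Fin d)} {ρ : ℝ}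
    (hρ : 0 < ρ) (hT : ∀ x y, dist (T x) (T y) = ρ * dist x y) {s : ℝ} (hs : 0 ≤ s)
    (A : Set (EuclideanSpace ℝ (Fin d))) :
    ENNReal.ofReal (ρ ^ s) * μH[s] A ≤ μH[s] (T '' A) := by
  have h := (sim_antilip hρ hT).le_hausdorffMeasure_image hs A
  calc ENNReal.ofReal (ρ ^ s) * μH[s] A
      ≤ ENNReal.ofReal (ρ ^ s) * ((ENNReal.ofReal (ρ⁻¹ ^ s)) * μH[s] (T '' A)) := by
        gcongr
        rw [← ENNReal.ofReal_rpow_of_pos (inv_pos.2 hρ)]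
        exact h
    _ = μH[s] (T '' A) := by
        rw [← mul_assoc, ← ENNReal.ofReal_mul (by positivity), Real.inv_rpow hρ.le,
          mul_inv_cancel₀ (by positivity)]
        simp

lemma sub_measure {d N : ℕ}
    {S : Fin N → EuclideanSpace ℝ (Fin d) → EuclideanSpace ℝ (Fin d)}
    {r : Fin N → ℝ} (hr : ∀ i, r i ∈ Set.Ioo (0 : ℝ) 1)
    (hS : ∀ i x y, dist (S i x) (S i y) = r i * dist x y) {s : ℝ} (hs : 0 ≤ s)
    (A : Set (EuclideanSpace ℝ (Fin d))) (A' : Fin N → Set (EuclideanSpace ℝ (Fin d)))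
    (hA : A ⊆ ⋃ i, S i '' A' i) :
    (μH[s]).restrict A ≤ ∑ i, ENNReal.ofReal (r i ^ s) •
      Measure.map (S i) ((μH[s]).restrict (A' i)) := by
  have hm : ∀ i, Measurable (S i) := fun i => (sim_lip_s6 (hr i).1 (hS i)).continuous.measurable
  refine Measure.le_iff.2 fun B hB => ?_
  rw [Measure.restrict_apply hB, Measure.finsetSum_apply]
  calc μH[s] (B ∩ A) ≤ μH[s] (⋃ i, S i '' (S i ⁻¹' B ∩ A' i)) := by
        apply measure_mono
        rintro x ⟨hxB, hxA⟩
        obtain ⟨i, y, hy, rfl⟩ := mem_iUnion.1 (hA hxA)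
        exact mem_iUnion.2 ⟨i, y, ⟨hxB, hy⟩, rfl⟩
    _ ≤ ∑ i, μH[s] (S i '' (S i ⁻¹' B ∩ A' i)) := measure_iUnion_fintype_le _ _
    _ ≤ _ := by
        apply Finset.sum_le_sum
        intro i _
        rw [Measure.smul_apply, Measure.map_apply (hm i) hB, Measure.restrict_apply (hm i hB),
          smul_eq_mul]
        exact sim_haus_le (hr i).1 (hS i) hs _

lemma sim_infDist {d : ℕ} {T : EuclideanSpace ℝ (Fin d) → EuclideanSpace ℝ (Fin d)} {ρ : ℝ}
    (hρ : 0 < ρ) (hT : ∀ x y, dist (T x) (T y) = ρ * dist x y)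
    {F : Set (EuclideanSpace ℝ (Fin d))} (hF : F.Nonempty) (x : EuclideanSpace ℝ (Fin d)) :
    infDist (T x) (T '' F) = ρ * infDist x F := by
  apply le_antisymm
  · rw [← div_le_iff₀' hρ, le_infDist hF]
    intro y hy
    rw [div_le_iff₀' hρ, ← hT]
    exact infDist_le_dist_of_mem (mem_image_of_mem _ hy)
  · rw [le_infDist (hF.image _)]
    rintro _ ⟨y, hy, rfl⟩
    rw [hT]
    gcongr
    exact infDist_le_dist_of_mem hy

/-- level sets -/
def Lev {d : ℕ} (F : Set (EuclideanSpace ℝ (Fin d))) (ε : ℝ) : Set (EuclideanSpace ℝ (Fin d)) :=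
  {x | infDist x F = ε}

lemma lev_sub {d N : ℕ}
    {S : Fin N → EuclideanSpace ℝ (Fin d) → EuclideanSpace ℝ (Fin d)}
    {r : Fin N → ℝ} (hr : ∀ i, r i ∈ Set.Ioo (0 : ℝ) 1)
    (hS : ∀ i x y, dist (S i x) (S i y) = r i * dist x y)
    {F : Set (EuclideanSpace ℝ (Fin d))}
    (hF_ne : F.Nonempty) (hF_cpt : IsCompact F)
    (hF_self : F = ⋃ i, S i '' F) (ε : ℝ) :
    Lev F ε ⊆ ⋃ i, S i '' Lev F (ε / r i) := by
  intro x hx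
  obtain ⟨a, ha, hxa⟩ := hF_cpt.exists_infDist_eq_dist hF_ne x
  rw [hF_self] at ha
  obtain ⟨i, b, hb, rfl⟩ := mem_iUnion.1 ha
  obtain ⟨y, rfl⟩ := sim_surj_s6 (hr i).1 (hS i) x
  refine mem_iUnion.2 ⟨i, y, ?_, rfl⟩
  have h1 : infDist (S i y) F ≤ infDist (S i y) (S i '' F) := by
    apply infDist_le_infDist_of_subset _ (hF_ne.image _)
    conv_rhs => rw [hF_self]
    exact subset_iUnion (fun i => S i '' F) i
  have h2 : infDist (S i y) (S i '' F) ≤ dist (S i y) (S i b) :=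
    infDist_le_dist_of_mem (mem_image_of_mem _ hb)
  have hri := (hr i).1
  rw [sim_infDist hri (hS i) hF_ne] at h1 h2
  have hx' : infDist (S i y) F = ε := hx
  show infDist y F = ε / r i
  rw [eq_div_iff hri.ne']
  linarith

lemma sim_open_s6 {d : ℕ} {T : EuclideanSpace ℝ (Fin d) → EuclideanSpace ℝ (Fin d)} {ρ : ℝ}
    (hρ : 0 < ρ) (hT : ∀ x y, dist (T x) (T y) = ρ * dist x y) : IsOpenMap T := by
  have h1 := (sim_antilip hρ hT).isUniformEmbedding (sim_lip_s6 hρ hT).uniformContinuous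
  exact (h1.isEmbedding.toHomeomorphOfSurjective (sim_surj_s6 hρ hT)).isOpenMap

/-- transfer operator -/
noncomputable def TT {d N : ℕ} (S : Fin N → EuclideanSpace ℝ (Fin d) → EuclideanSpace ℝ (Fin d))
    (r : Fin N → ℝ) (D : ℝ) :
    (EuclideanSpace ℝ (Fin d) → ℝ) →ₗ[ℝ] (EuclideanSpace ℝ (Fin d) → ℝ) where
  toFun f := fun x => ∑ i, r i ^ D * f (S i x)
  map_add' f g := by
    funext x
    simp [mul_add, Finset.sum_add_distrib]
  map_smul' c f := by
    funext x
    simp only [Pi.smul_apply, smul_eq_mul, RingHom.id_apply, Finset.mul_sum]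
    exact Finset.sum_congr rfl fun i _ => by ring

lemma TT_apply {d N : ℕ} (S : Fin N → EuclideanSpace ℝ (Fin d) → EuclideanSpace ℝ (Fin d))
    (r : Fin N → ℝ) (D : ℝ) (f : EuclideanSpace ℝ (Fin d) → ℝ) (x : EuclideanSpace ℝ (Fin d)) :
    TT S r D f x = ∑ i, r i ^ D * f (S i x) := rfl

lemma TT_pow_mono {d N : ℕ} {S : Fin N → EuclideanSpace ℝ (Fin d) → EuclideanSpace ℝ (Fin d)}
    {r : Fin N → ℝ} (hr : ∀ i, r i ∈ Set.Ioo (0 : ℝ) 1) (D : ℝ)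
    {K : Set (EuclideanSpace ℝ (Fin d))} (hK : ∀ i, ∀ x ∈ K, S i x ∈ K)
    (n : ℕ) {f g : EuclideanSpace ℝ (Fin d) → ℝ} (hfg : ∀ x ∈ K, f x ≤ g x) :
    ∀ x ∈ K, (TT S r D ^ n) f x ≤ (TT S r D ^ n) g x := by
  induction n with
  | zero => simpa using hfg
  | succ n ih =>
    intro x hx
    rw [pow_succ', Module.End.mul_apply, Module.End.mul_apply, TT_apply, TT_apply]
    apply Finset.sum_le_sum
    intro i _
    have := (hr i).1
    have := ih (S i x) (hK i x hx)
    gcongr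

lemma TT_pow_const {d N : ℕ} {S : Fin N → EuclideanSpace ℝ (Fin d) → EuclideanSpace ℝ (Fin d)}
    {r : Fin N → ℝ} {D : ℝ} (hD_dim : ∑ i, r i ^ D = 1) (n : ℕ) (c : ℝ) :
    (TT S r D ^ n) (fun _ => c) = fun _ => c := by
  induction n with
  | zero => simp
  | succ n ih =>
    rw [pow_succ', Module.End.mul_apply, ih]
    funext x
    rw [TT_apply, ← Finset.sum_mul, hD_dim, one_mul]

lemma TT_pow_succ {d N : ℕ} (S : Fin N → EuclideanSpace ℝ (Fin d) → EuclideanSpace ℝ (Fin d))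
    (r : Fin N → ℝ) (D : ℝ) (n : ℕ) (f : EuclideanSpace ℝ (Fin d) → ℝ) (x) :
    (TT S r D ^ (n+1)) f x = ∑ i, r i ^ D * (TT S r D ^ n) (fun y => f (S i y)) x := by
  have : TT S r D f = ∑ i, r i ^ D • (fun y => f (S i y)) := by
    funext y
    simp [TT_apply]
  rw [pow_succ, Module.End.mul_apply, this, map_sum, Finset.sum_apply]
  simp

lemma haus_fin_s6 {d N : ℕ} {S : Fin N → EuclideanSpace ℝ (Fin d) → EuclideanSpace ℝ (Fin d)}
    {r : Fin N → ℝ} (hr : ∀ i, r i ∈ Set.Ioo (0 : ℝ) 1)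
    (hS : ∀ i x y, dist (S i x) (S i y) = r i * dist x y)
    {F : Set (EuclideanSpace ℝ (Fin d))} (hF_cpt : IsCompact F)
    (hF_self : F = ⋃ i, S i '' F) {q : ℝ} (hq1 : q < 1) (hq : ∀ i, r i ≤ q)
    {D : ℝ} (hD : 0 < D) (hD_dim : ∑ i, r i ^ D = 1) : μH[D] F < ⊤ := by
  have key : ∀ n : ℕ, ∃ (ι : Type) (_ : Fintype ι) (t : ι → Set (EuclideanSpace ℝ (Fin d))),
      F ⊆ ⋃ i, t i ∧ (∀ i, ediam (t i) ≤ ENNReal.ofReal q ^ n * ediam F) ∧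
      ∑ i, ediam (t i) ^ D ≤ ediam F ^ D := by
    intro n
    induction n with
    | zero =>
      exact ⟨Unit, inferInstance, fun _ => F, fun x hx => mem_iUnion.2 ⟨(), hx⟩, by simp, by simp⟩
    | succ n ih =>
      obtain ⟨ι, _, t, h1, h2, h3⟩ := ih
      have hdi : ∀ i A, ediam (S i '' A) ≤ ENNReal.ofReal (r i) * ediam A := fun i A =>
        (sim_lip_s6 (hr i).1 (hS i)).ediam_image_le A
      refine ⟨Fin N × ι, inferInstance, fun p => S p.1 '' t p.2, ?_, ?_, ?_⟩
      · intro x hx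
        rw [hF_self] at hx
        obtain ⟨i, y, hy, rfl⟩ := mem_iUnion.1 hx
        obtain ⟨j, hj⟩ := mem_iUnion.1 (h1 hy)
        exact mem_iUnion.2 ⟨(i, j), y, hj, rfl⟩
      · rintro ⟨i, j⟩
        refine (hdi _ _).trans ?_
        rw [pow_succ', mul_assoc]
        gcongr
        · exact hq i
        · exact h2 j
      · rw [Fintype.sum_prod_type]
        calc ∑ i, ∑ j, ediam (S i '' t j) ^ D
            ≤ ∑ i, ∑ j, ENNReal.ofReal (r i ^ D) * ediam (t j) ^ D := by
              gcongr with i _ j _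
              rw [← ENNReal.ofReal_rpow_of_pos (hr i).1, ← ENNReal.mul_rpow_of_nonneg _ _ hD.le]
              gcongr
              exact hdi _ _
          _ = (∑ i, ENNReal.ofReal (r i ^ D)) * ∑ j, ediam (t j) ^ D := by
              rw [Finset.sum_mul_sum]
          _ ≤ 1 * ediam F ^ D := by
              gcongr
              rw [← ENNReal.ofReal_sum_of_nonneg (fun i _ => Real.rpow_nonneg (hr i).1.le _), hD_dim]
              simp
          _ = _ := one_mul _
  choose ι hι t h1 h2 h3 using key
  have hdF : ediam F ≠ ⊤ := hF_cpt.isBounded.ediam_ne_top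
  have hlim : Tendsto (fun n : ℕ => ENNReal.ofReal q ^ n * ediam F) atTop (𝓝 0) := by
    have := ENNReal.Tendsto.mul_const (b := ediam F)
      (ENNReal.tendsto_pow_atTop_nhds_zero_of_lt_one (r := ENNReal.ofReal q)
      (by simpa using hq1)) (Or.inr hdF)
    simpa using this
  have := Measure.hausdorffMeasure_le_liminf_sum D F _ hlim t
    (Eventually.of_forall h2) (Eventually.of_forall h1)
  refine lt_of_le_of_lt (this.trans ?_) (ENNReal.rpow_lt_top_of_nonneg hD.le hdF)
  refine (liminf_le_liminf (v := fun _ => ediam F ^ D) (Eventually.of_forall h3)).trans ?_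
  simp

lemma ball_bound {d N : ℕ} {S : Fin N → EuclideanSpace ℝ (Fin d) → EuclideanSpace ℝ (Fin d)}
    {r : Fin N → ℝ} (hr : ∀ i, r i ∈ Set.Ioo (0 : ℝ) 1)
    (hS : ∀ i x y, dist (S i x) (S i y) = r i * dist x y)
    {F : Set (EuclideanSpace ℝ (Fin d))} (hF_cpt : IsCompact F)
    (hF_self : F = ⋃ i, S i '' F) {q p : ℝ} (hq0 : 0 < q) (hq1 : q < 1) (hq : ∀ i, r i ≤ q)
    (hp0 : 0 < p) (hp : ∀ i, p ≤ r i)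
    {D : ℝ} (hD_dim : ∑ i, r i ^ D = 1)
    {U : Set (EuclideanSpace ℝ (Fin d))} (hUo : IsOpen U) (hUne : U.Nonempty)
    (hUb : Bornology.IsBounded U) (hU_sub : ∀ i, S i '' U ⊆ U)
    (hU_disj : ∀ i j, i ≠ j → Disjoint (S i '' U) (S j '' U)) :
    ∃ C : ℝ, 0 ≤ C ∧ ∀ n z ρ, q ^ n ≤ ρ → ρ ≤ 1 → ∀ y ∈ F,
      (TT S r D ^ n) (indicator (closedBall z ρ) (fun _ => 1)) y ≤ C * ρ ^ D := by
  have hfr : Module.finrank ℝ (EuclideanSpace ℝ (Fin d)) = d := by simp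
  set μ : Measure (EuclideanSpace ℝ (Fin d)) := μH[(d:ℝ)] with hμ
  have : μ.IsAddHaarMeasure := by
    have := isAddHaarMeasure_hausdorffMeasure (E := EuclideanSpace ℝ (Fin d))
    rwa [hfr] at this
  have hfinb : ∀ A : Set (EuclideanSpace ℝ (Fin d)), Bornology.IsBounded A → μ A ≠ ⊤ :=
    fun A hA => hA.measure_lt_top.ne
  obtain ⟨R, hR⟩ := (hF_cpt.isBounded.union hUb).subset_closedBall 0
  set k : ℝ := 1 + 2 * |R| with hk
  have hk1 : 1 ≤ k := by rw [hk]; linarith [abs_nonneg R]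
  have hUpos : 0 < μ.real U := by
    rw [Measure.real, ENNReal.toReal_pos_iff]
    exact ⟨hUo.measure_pos μ hUne, (hfinb U hUb).lt_top⟩
  have hFS : ∀ i, ∀ x ∈ F, S i x ∈ F := by
    intro i x hx
    rw [hF_self]
    exact mem_iUnion.2 ⟨i, x, hx, rfl⟩
  -- choose constant
  obtain ⟨m, hm0, hm⟩ : ∃ m : ℝ, 0 < m ∧ ∀ ρ ∈ Icc (1:ℝ) (1/p), m ≤ ρ ^ (D - d) := by
    by_cases hne : (Icc (1:ℝ) (1/p)).Nonempty
    · have hcont : ContinuousOn (fun ρ : ℝ => ρ ^ (D - d)) (Icc (1:ℝ) (1/p)) := by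
        intro x hx
        exact (Real.continuousAt_rpow_const x _ (Or.inl (by linarith [hx.1]))).continuousWithinAt
      obtain ⟨x, hx, hmin⟩ := isCompact_Icc.exists_isMinOn hne hcont
      exact ⟨x ^ (D - d), Real.rpow_pos_of_pos (by linarith [hx.1]) _, fun ρ hρ => hmin hρ⟩
    · exact ⟨1, one_pos, fun ρ hρ => (hne ⟨ρ, hρ⟩).elim⟩
  set M : ℝ := (m * μ.real U)⁻¹ with hM
  have hM0 : 0 < M := by positivity
  have key : ∀ n z ρ, q ^ n ≤ ρ → ρ ≤ 1 / p → ∀ y ∈ F,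
      (TT S r D ^ n) (indicator (closedBall z ρ) (fun _ => 1)) y ≤
        M * (ρ ^ (D - d) * μ.real (U ∩ closedBall z (k * ρ))) := by
    have base : ∀ n z ρ, 1 ≤ ρ → ρ ≤ 1 / p → ∀ y ∈ F,
      (TT S r D ^ n) (indicator (closedBall z ρ) (fun _ => 1)) y ≤
        M * (ρ ^ (D - d) * μ.real (U ∩ closedBall z (k * ρ))) := by
      intro n z ρ h1 h2 y hy
      by_cases hint : (closedBall z ρ ∩ F).Nonempty
      · obtain ⟨x, hxz, hxF⟩ := hint
        have hUs : U ∩ closedBall z (k * ρ) = U := by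
          rw [inter_eq_left]
          intro u hu
          have e1 := hR (Or.inr hu)
          have e2 := hR (Or.inl hxF)
          rw [mem_closedBall] at *
          have : dist u z ≤ dist u 0 + (dist x 0 + dist x z) := by
            calc dist u z ≤ dist u 0 + dist 0 z := dist_triangle _ _ _
              _ ≤ _ := by
                gcongr
                rw [dist_comm x 0]
                exact dist_triangle _ _ _
          rw [hk]
          nlinarith [le_abs_self R, abs_nonneg R]
        rw [hUs]
        calc _ ≤ (TT S r D ^ n) (fun _ => 1) y := by
              apply TT_pow_mono hr D hFS n _ y hy
              intro x _
              exact indicator_le_self' (fun _ _ => zero_le_one) x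
          _ = 1 := by rw [TT_pow_const hD_dim]
          _ ≤ M * (m * μ.real U) := by
              rw [hM, inv_mul_cancel₀ (by positivity)]
          _ ≤ _ := by
              gcongr
              exact hm ρ ⟨h1, h2⟩
      · calc _ ≤ (TT S r D ^ n) (fun _ => 0) y := by
              apply TT_pow_mono hr D hFS n _ y hy
              intro x hx
              rw [indicator_of_notMem]
              exact fun h => hint ⟨x, h, hx⟩
          _ = 0 := by rw [TT_pow_const hD_dim]
          _ ≤ _ := by positivity
    intro n
    induction n with
    | zero =>
      intro z ρ h1 h2
      exact base 0 z ρ (by simpa using h1) h2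
    | succ n ih =>
      intro z ρ h1 h2 y hy
      by_cases hρ1 : 1 ≤ ρ
      · exact base _ z ρ hρ1 h2 y hy
      push Not at hρ1
      have hρ0 : 0 < ρ := lt_of_lt_of_le (by positivity) h1
      rw [TT_pow_succ]
      have hz : ∀ i, ∃ z', S i z' = z := fun i => sim_surj_s6 (hr i).1 (hS i) z
      choose z' hz' using hz
      have hball : ∀ i t, S i ⁻¹' closedBall z t = closedBall (z' i) (t / r i) := by
        intro i t
        ext x
        rw [mem_preimage, mem_closedBall, mem_closedBall, ← hz' i, hS, le_div_iff₀' (hr i).1]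
      calc ∑ i, r i ^ D * (TT S r D ^ n) (fun y => indicator (closedBall z ρ) (fun _ => 1) (S i y)) y
          ≤ ∑ i, M * (ρ ^ (D - d) * μ.real (S i '' U ∩ closedBall z (k * ρ))) := by
            apply Finset.sum_le_sum
            intro i _
            have hri := (hr i).1
            have e1 : (fun y => indicator (closedBall z ρ) (fun _ => (1:ℝ)) (S i y)) =
                indicator (closedBall (z' i) (ρ / r i)) (fun _ => 1) := by
              rw [← hball]
              rfl
            rw [e1]
            have e2 := ih (z' i) (ρ / r i) (by
              rw [le_div_iff₀ hri]
              calc q ^ n * r i ≤ q ^ n * q := by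
                    gcongr
                    exact hq i
                _ ≤ ρ := by rw [← pow_succ]; exact h1) (by
              rw [div_le_div_iff₀ hri hp0]
              have := hp i
              nlinarith) y hy
            have e3 : r i ^ (d:ℝ) * μ.real (U ∩ closedBall (z' i) (k * (ρ / r i))) ≤
                μ.real (S i '' U ∩ closedBall z (k * ρ)) := by
              have e4 : S i '' (U ∩ closedBall (z' i) (k * (ρ / r i))) ⊆
                  S i '' U ∩ closedBall z (k * ρ) := by
                rintro _ ⟨x, ⟨hxU, hxb⟩, rfl⟩
                refine ⟨⟨x, hxU, rfl⟩, ?_⟩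
                have : x ∈ S i ⁻¹' closedBall z (k * ρ) := by
                  rw [hball, mul_div_assoc]; exact hxb
                exact this
              have e5 := (sim_haus_ge hri (hS i) (Nat.cast_nonneg d)
                (U ∩ closedBall (z' i) (k * (ρ / r i)))).trans (measure_mono e4)
              have e6 := ENNReal.toReal_mono
                (hfinb _ (isBounded_closedBall.subset inter_subset_right)) e5
              rwa [ENNReal.toReal_mul, ENNReal.toReal_ofReal (by positivity)] at e6
            calc r i ^ D * _ ≤ r i ^ D * (M * ((ρ / r i) ^ (D - d) *
                  μ.real (U ∩ closedBall (z' i) (k * (ρ / r i))))) := by gcongr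
              _ = M * (ρ ^ (D - d) * (r i ^ (d:ℝ) *
                  μ.real (U ∩ closedBall (z' i) (k * (ρ / r i))))) := by
                  rw [Real.div_rpow hρ0.le hri.le, Real.rpow_sub hri]
                  have : r i ^ D ≠ 0 := by positivity
                  have : r i ^ (d:ℝ) ≠ 0 := by positivity
                  field_simp
              _ ≤ _ := by gcongr
        _ = M * (ρ ^ (D - d) * ∑ i, μ.real (S i '' U ∩ closedBall z (k * ρ))) := by
            rw [Finset.mul_sum, Finset.mul_sum]
        _ ≤ _ := by
            gcongr
            rw [← measureReal_iUnion_fintype (h' := fun i =>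
              (hfinb _ (isBounded_closedBall.subset inter_subset_right)))]
            · apply measureReal_mono
              · refine iUnion_subset fun i => ?_
                gcongr
                exact hU_sub i
              · exact hfinb _ (isBounded_closedBall.subset inter_subset_right)
            · intro i j hij
              exact (hU_disj i j hij).mono inter_subset_left inter_subset_left
            · intro i
              exact (sim_open_s6 (hr i).1 (hS i) _ hUo).measurableSet.inter measurableSet_closedBall
  refine ⟨M * (k ^ d * μ.real (ball 0 1)), by positivity, ?_⟩
  intro n z ρ h1 h2 y hy
  have hρ0 : 0 < ρ := lt_of_lt_of_le (by positivity) h1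
  by_cases hN : Nonempty (Fin N)
  swap
  · exfalso
    rw [not_nonempty_iff] at hN
    simp at hD_dim
  obtain ⟨i0⟩ := hN
  have hp1 : p ≤ 1 := (hp i0).trans (hr i0).2.le
  refine (key n z ρ h1 (h2.trans (by rw [le_div_iff₀ hp0]; linarith)) y hy).trans ?_
  rw [mul_assoc]
  refine mul_le_mul_of_nonneg_left ?_ hM0.le
  calc ρ ^ (D - d) * μ.real (U ∩ closedBall z (k * ρ))
      ≤ ρ ^ (D - d) * μ.real (closedBall z (k * ρ)) := by
        gcongr
        · exact hfinb _ isBounded_closedBall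
        · exact inter_subset_right
    _ = ρ ^ (D - d) * ((k * ρ) ^ d * μ.real (ball 0 1)) := by
        rw [Measure.real, Measure.addHaar_closedBall μ z (by positivity), ENNReal.toReal_mul,
          ENNReal.toReal_ofReal (by positivity), hfr]
        rfl
    _ = _ := by
        rw [Real.rpow_sub hρ0, Real.rpow_natCast]
        have : ρ ^ d ≠ 0 := by positivity
        field_simp
        rw [mul_pow]
        ring

lemma haus_pos_s6 {d N : ℕ} {S : Fin N → EuclideanSpace ℝ (Fin d) → EuclideanSpace ℝ (Fin d)}
    {r : Fin N → ℝ} (hr : ∀ i, r i ∈ Set.Ioo (0 : ℝ) 1)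
    (hS : ∀ i x y, dist (S i x) (S i y) = r i * dist x y)
    {F : Set (EuclideanSpace ℝ (Fin d))} (hF_ne : F.Nonempty) (hF_cpt : IsCompact F)
    (hF_self : F = ⋃ i, S i '' F) {q p : ℝ} (hq0 : 0 < q) (hq1 : q < 1) (hq : ∀ i, r i ≤ q)
    (hp0 : 0 < p) (hp : ∀ i, p ≤ r i)
    {D : ℝ} (hD : 0 < D) (hD_dim : ∑ i, r i ^ D = 1)
    {U : Set (EuclideanSpace ℝ (Fin d))} (hUo : IsOpen U) (hUne : U.Nonempty)
    (hUb : Bornology.IsBounded U) (hU_sub : ∀ i, S i '' U ⊆ U)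
    (hU_disj : ∀ i j, i ≠ j → Disjoint (S i '' U) (S j '' U)) : μH[D] F ≠ 0 := by
  intro h0
  obtain ⟨C, hC0, hC⟩ := ball_bound hr hS hF_cpt hF_self hq0 hq1 hq hp0 hp hD_dim hUo hUne hUb
    hU_sub hU_disj
  obtain ⟨y, hy⟩ := hF_ne
  have hFS : ∀ i, ∀ x ∈ F, S i x ∈ F := by
    intro i x hx
    rw [hF_self]
    exact mem_iUnion.2 ⟨i, x, hx, rfl⟩
  set η : ℝ := 1 / (4 * (C + 1)) with hη
  have hη0 : 0 < η := by positivity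
  have hη1 : η ≤ 1 / 4 := by
    rw [hη, div_le_div_iff₀ (by positivity) (by positivity)]
    linarith
  have hηC : C * (2 * η) < 1 := by
    rw [hη]
    have : 0 < C + 1 := by positivity
    field_simp
    linarith
  rw [Measure.hausdorffMeasure_apply, ENNReal.iSup_eq_zero] at h0
  have h1 := h0 1
  rw [ENNReal.iSup_eq_zero] at h1
  have h2 := h1 one_pos
  have h3 : _ < ENNReal.ofReal η := h2.trans_lt (by simpa using hη0)
  simp only [iInf_lt_iff] at h3
  obtain ⟨t, ht, -, hsum⟩ := h3
  obtain ⟨η', hη'0, hη'⟩ := ENNReal.exists_pos_sum_of_countable' (ε := ENNReal.ofReal η)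
    (by simpa using hη0) ℕ
  set b : ℕ → ℝ≥0∞ := fun n => (⨆ (_ : (t n).Nonempty), ediam (t n) ^ D) + η' n with hb
  have hbsum : ∑' n, b n < ENNReal.ofReal (2 * η) := by
    rw [hb, ENNReal.tsum_add, two_mul, ENNReal.ofReal_add hη0.le hη0.le]
    exact ENNReal.add_lt_add hsum hη'
  have hbsum' : ∑' n, b n ≠ ⊤ := (hbsum.trans ENNReal.ofReal_lt_top).ne
  have hbfin : ∀ n, b n ≠ ⊤ := ENNReal.ne_top_of_tsum_ne_top hbsum'
  have hb0 : ∀ n, 0 < (b n).toReal := fun n =>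
    ENNReal.toReal_pos (ne_of_gt (lt_of_lt_of_le (hη'0 n) le_add_self)) (hbfin n)
  have hIsum : ∀ I : Finset ℕ, ∑ n ∈ I, (b n).toReal ≤ 2 * η := by
    intro I
    rw [← ENNReal.toReal_sum (fun n _ => hbfin n)]
    exact ENNReal.toReal_le_of_le_ofReal (by positivity) ((ENNReal.sum_le_tsum I).trans hbsum.le)
  have hb1 : ∀ n, (b n).toReal ≤ 1 := by
    intro n
    have := hIsum {n}
    simp only [Finset.sum_singleton] at this
    linarith
  set ρ : ℕ → ℝ := fun n => (b n).toReal ^ (1 / D) with hρ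
  have hρ0 : ∀ n, 0 < ρ n := fun n => Real.rpow_pos_of_pos (hb0 n) _
  have hρ1 : ∀ n, ρ n ≤ 1 := fun n => Real.rpow_le_one (hb0 n).le (hb1 n) (by positivity)
  have hρD : ∀ n, ρ n ^ D = (b n).toReal := by
    intro n
    rw [hρ]
    simp only
    rw [← Real.rpow_mul (hb0 n).le, one_div, inv_mul_cancel₀ hD.ne', Real.rpow_one]
  have hcov : ∀ n, ∃ z, t n ⊆ ball z (ρ n) := by
    intro n
    by_cases hn : (t n).Nonempty
    · obtain ⟨z, hz⟩ := hn
      refine ⟨z, fun x hx => ?_⟩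
      have e1 : edist x z ≤ ediam (t n) := edist_le_ediam_of_mem hx hz
      have e2 : ediam (t n) ^ D < b n := by
        have : b n = ediam (t n) ^ D + η' n := by
          simp only [hb]
          rw [iSup_pos ⟨z, hz⟩]
        rw [this]
        refine ENNReal.lt_add_right ?_ (hη'0 n).ne'
        intro htop
        rw [htop, top_add] at this
        exact hbfin n this
      have e3 : edist x z ^ D < b n := (ENNReal.rpow_le_rpow e1 hD.le).trans_lt e2
      have e4 := (ENNReal.toReal_lt_toReal e3.ne_top (hbfin n)).2 e3
      rw [← ENNReal.toReal_rpow, ← hρD n, edist_dist, ENNReal.toReal_ofReal dist_nonneg] at e4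
      exact (Real.rpow_lt_rpow_iff dist_nonneg (hρ0 n).le hD).1 e4
    · rw [not_nonempty_iff_eq_empty] at hn
      exact ⟨0, by simp [hn]⟩
  choose z hz using hcov
  obtain ⟨I, hI⟩ := hF_cpt.elim_finite_subcover (fun n => ball (z n) (ρ n)) (fun n => isOpen_ball)
    (ht.trans (iUnion_mono hz))
  have hev : ∀ᶠ n : ℕ in atTop, ∀ k ∈ I, q ^ n ≤ ρ k := by
    rw [Filter.eventually_all_finset]
    intro k _
    exact (tendsto_pow_atTop_nhds_zero_of_lt_one hq0.le hq1).eventually_le_const (hρ0 k)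
  obtain ⟨n, hn⟩ := hev.exists
  have : (1:ℝ) ≤ C * (2 * η) := by
    calc (1:ℝ) = (TT S r D ^ n) (fun _ => 1) y := by rw [TT_pow_const hD_dim]
      _ ≤ (TT S r D ^ n) (∑ k ∈ I, indicator (closedBall (z k) (ρ k)) (fun _ => 1)) y := by
          apply TT_pow_mono hr D hFS n _ y hy
          intro x hx
          obtain ⟨k, hk, hxk⟩ := mem_iUnion₂.1 (hI hx)
          rw [Finset.sum_apply]
          have : (1:ℝ) = indicator (closedBall (z k) (ρ k)) (fun _ => 1) x := by
            rw [indicator_of_mem (ball_subset_closedBall hxk)]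
          refine this.le.trans ?_
          exact Finset.single_le_sum
            (f := fun k => indicator (closedBall (z k) (ρ k)) (fun _ => (1:ℝ)) x)
            (fun j _ => indicator_nonneg (fun _ _ => zero_le_one) _) hk
      _ = ∑ k ∈ I, (TT S r D ^ n) (indicator (closedBall (z k) (ρ k)) (fun _ => 1)) y := by
          rw [map_sum, Finset.sum_apply]
      _ ≤ ∑ k ∈ I, C * ρ k ^ D := by
          gcongr with k hk
          exact hC n (z k) (ρ k) (hn k hk) (hρ1 k) y hy
      _ = C * ∑ k ∈ I, (b k).toReal := by
          rw [Finset.mul_sum]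
          simp_rw [hρD]
      _ ≤ _ := by
          gcongr
          exact hIsum I
  linarith

lemma norm_le_l1 {d : ℕ} (x : EuclideanSpace ℝ (Fin d)) : ‖x‖ ≤ ∑ i, |x i| := by
  rw [EuclideanSpace.norm_eq]
  apply Real.sqrt_le_iff.2 ⟨by positivity, ?_⟩
  simp only [Real.norm_eq_abs]
  exact Finset.sum_sq_le_sq_sum_of_nonneg (fun i _ => abs_nonneg _)

lemma lev_sq {d : ℕ} {F : Set (EuclideanSpace ℝ (Fin d))} (hF_ne : F.Nonempty)
    (hF_cpt : IsCompact F) {R : ℝ} (hR : F ⊆ closedBall 0 R) {ε : ℝ} (hε : 0 ≤ ε)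
    {x y : EuclideanSpace ℝ (Fin d)}
    (hx : x ∈ Lev F ε) (hy : y ∈ Lev F ε) : ‖x‖ ^ 2 - ‖y‖ ^ 2 ≤ 2 * R * ‖x - y‖ := by
  obtain ⟨a, ha, hxa⟩ := hF_cpt.exists_infDist_eq_dist hF_ne x
  have h1 : ε = dist x a := by rw [← hxa]; exact hx.symm
  have h2 : ε ≤ dist y a := by
    have := infDist_le_dist_of_mem (x := y) ha
    rwa [show infDist y F = ε from hy] at this
  rw [dist_eq_norm] at h1 h2
  have h3 : ‖x - a‖ ^ 2 ≤ ‖y - a‖ ^ 2 := by rw [← h1]; gcongr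
  rw [@norm_sub_sq ℝ, @norm_sub_sq ℝ] at h3
  simp only [RCLike.re_to_real] at h3
  have h4 : inner ℝ x a - inner ℝ y a ≤ ‖x - y‖ * ‖a‖ := by
    rw [← inner_sub_left]
    exact real_inner_le_norm _ _
  have h5 : ‖a‖ ≤ R := by simpa using hR ha
  nlinarith [norm_nonneg (x - y)]

lemma lev_norm {d : ℕ} {F : Set (EuclideanSpace ℝ (Fin d))} (hF_ne : F.Nonempty)
    (hF_cpt : IsCompact F) {R : ℝ} (hR : F ⊆ closedBall 0 R) {ε : ℝ}
    {x : EuclideanSpace ℝ (Fin d)}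
    (hx : x ∈ Lev F ε) : ε - R ≤ ‖x‖ ∧ ‖x‖ ≤ ε + R := by
  obtain ⟨a, ha, hxa⟩ := hF_cpt.exists_infDist_eq_dist hF_ne x
  have h1 : ε = dist x a := by rw [← hxa]; exact hx.symm
  have h5 : ‖a‖ ≤ R := by simpa using hR ha
  rw [dist_eq_norm] at h1
  constructor
  · have := norm_sub_le x a
    linarith
  · have : ‖x‖ ≤ ‖x - a‖ + ‖a‖ := by simpa using norm_add_le (x - a) a
    linarith

lemma lev_anti {d : ℕ} (hd : 1 ≤ d) {F : Set (EuclideanSpace ℝ (Fin d))} (hF_ne : F.Nonempty)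
    (hF_cpt : IsCompact F) {R : ℝ} (hR0 : 0 ≤ R) (hR : F ⊆ closedBall 0 R) {ε : ℝ}
    (hε : 1 + 8 * d * R ≤ ε) (j : Fin d) {σ : ℝ} (hσ : σ = 1 ∨ σ = -1)
    {x y : EuclideanSpace ℝ (Fin d)}
    (hx : x ∈ Lev F ε) (hy : y ∈ Lev F ε) (hxj : ‖x‖ ≤ d * (σ * x j)) (hyj : ‖y‖ ≤ d * (σ * y j))
    {m : ℝ} (hm0 : 0 ≤ m) (hm : ∀ i, i ≠ j → |x i - y i| ≤ m) : ‖x - y‖ ≤ 8 * d ^ 2 * m := by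
  have hd' : (1:ℝ) ≤ d := by exact_mod_cast hd
  have hdR : R ≤ d * R := by nlinarith
  have hε0 : 0 < ε := by nlinarith
  obtain ⟨hx1, hx2⟩ := lev_norm hF_ne hF_cpt hR hx
  obtain ⟨hy1, hy2⟩ := lev_norm hF_ne hF_cpt hR hy
  have hsq1 := lev_sq hF_ne hF_cpt hR hε0.le hx hy
  have hsq2 := lev_sq hF_ne hF_cpt hR hε0.le hy hx
  rw [norm_sub_rev] at hsq2
  have hns : ∀ z : EuclideanSpace ℝ (Fin d), ‖z‖ ^ 2 = z j ^ 2 + ∑ i ∈ Finset.univ.erase j, z i ^ 2 := by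
    intro z
    rw [EuclideanSpace.norm_sq_eq, ← Finset.add_sum_erase _ _ (Finset.mem_univ j)]
    simp
  have hcoord : ∀ (z : EuclideanSpace ℝ (Fin d)) i, |z i| ≤ ‖z‖ := fun z i => by
    simpa using PiLp.norm_apply_le z i
  have hcard : ((Finset.univ.erase j : Finset (Fin d)).card : ℝ) ≤ d := by
    have := Finset.card_le_univ (Finset.univ.erase j : Finset (Fin d))
    simp only [Fintype.card_fin] at this
    exact_mod_cast this
  have hsum : |∑ i ∈ Finset.univ.erase j, x i ^ 2 - ∑ i ∈ Finset.univ.erase j, y i ^ 2| ≤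
      d * (m * (4 * ε)) := by
    rw [← Finset.sum_sub_distrib]
    refine (Finset.abs_sum_le_sum_abs _ _).trans ?_
    calc _ ≤ ∑ i ∈ Finset.univ.erase j, m * (4 * ε) := by
          apply Finset.sum_le_sum
          intro i hi
          rw [sq_sub_sq, abs_mul, mul_comm]
          have h1 : |x i + y i| ≤ 4 * ε := by
            have := abs_add_le (x i) (y i)
            have := hcoord x i
            have := hcoord y i
            linarith
          have h2 := hm i (Finset.ne_of_mem_erase hi)
          gcongr
      _ = (Finset.univ.erase j : Finset (Fin d)).card * (m * (4 * ε)) := by simp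
      _ ≤ _ := by gcongr
  have hl1 : ‖x - y‖ ≤ |x j - y j| + d * m := by
    refine (norm_le_l1 _).trans ?_
    rw [← Finset.add_sum_erase _ _ (Finset.mem_univ j)]
    simp only [PiLp.sub_apply]
    gcongr
    calc _ ≤ ∑ i ∈ Finset.univ.erase j, m :=
          Finset.sum_le_sum fun i hi => hm i (Finset.ne_of_mem_erase hi)
      _ = (Finset.univ.erase j : Finset (Fin d)).card * m := by simp
      _ ≤ _ := by gcongr
  have hj2 : |x j ^ 2 - y j ^ 2| ≤ 2 * R * ‖x - y‖ + d * (m * (4 * ε)) := by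
    have e1 := hns x
    have e2 := hns y
    rw [abs_le] at hsum ⊢
    constructor <;> linarith [hsum.1, hsum.2]
  have hj3 : |x j - y j| * ε ≤ d * |x j ^ 2 - y j ^ 2| := by
    rw [sq_sub_sq, abs_mul, mul_comm |x j + y j|, mul_left_comm]
    gcongr
    have e1 : ε ≤ d * (σ * (x j + y j)) := by nlinarith
    have e2 : σ * (x j + y j) ≤ |x j + y j| := by
      rcases hσ with rfl | rfl
      · simpa using le_abs_self _
      · have := neg_abs_le (x j + y j)
        linarith
    nlinarith
  have hj4 : |x j - y j| * ε ≤ (1 / 4 * ‖x - y‖ + 4 * d ^ 2 * m) * ε := by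
    have e1 : 2 * R * d ≤ 1 / 4 * ε := by nlinarith
    have := norm_nonneg (x - y)
    calc _ ≤ _ := hj3
      _ ≤ d * (2 * R * ‖x - y‖ + d * (m * (4 * ε))) := by gcongr
      _ = (2 * R * d) * ‖x - y‖ + 4 * d ^ 2 * m * ε := by ring
      _ ≤ (1 / 4 * ε) * ‖x - y‖ + 4 * d ^ 2 * m * ε := by gcongr
      _ = _ := by ring
  have hj5 := le_of_mul_le_mul_right hj4 hε0
  have : d * m ≤ d ^ 2 * m := by
    gcongr
    nlinarith
  have : 0 ≤ d ^ 2 * m := by positivity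
  linarith

lemma lev_piece {d : ℕ} (hd : 1 ≤ d) {F : Set (EuclideanSpace ℝ (Fin d))} (hF_ne : F.Nonempty)
    (hF_cpt : IsCompact F) {R : ℝ} (hR0 : 0 ≤ R) (hR : F ⊆ closedBall 0 R) {ε : ℝ}
    (hε : 1 + 8 * d * R ≤ ε) (j : Fin d) {σ : ℝ} (hσ : σ = 1 ∨ σ = -1) {b : ℝ} (hb : ε ≤ b) :
    μH[(d:ℝ) - 1] {x | x ∈ Lev F ε ∧ ‖x‖ ≤ d * (σ * x j)} ≤
      ((8 * d ^ 2 : NNReal) : ℝ≥0∞) ^ ((d:ℝ) - 1) *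
        volume (closedBall (0 : {i : Fin d // i ≠ j} → ℝ) (2 * b)) := by
  have hd' : (1:ℝ) ≤ d := by exact_mod_cast hd
  set A := {x | x ∈ Lev F ε ∧ ‖x‖ ≤ d * (σ * x j)} with hA
  let f : A → ({i : Fin d // i ≠ j} → ℝ) := fun x i => x.1 i.1
  have hanti : AntilipschitzWith (8 * d ^ 2 : NNReal) f := by
    apply AntilipschitzWith.of_le_mul_dist
    intro x y
    rw [Subtype.dist_eq, dist_eq_norm]
    push_cast
    refine lev_anti hd hF_ne hF_cpt hR0 hR hε j hσ x.2.1 y.2.1 x.2.2 y.2.2 dist_nonneg ?_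
    intro i hi
    have := dist_le_pi_dist (f x) (f y) ⟨i, hi⟩
    rwa [Real.dist_eq] at this
  have h1 := hanti.le_hausdorffMeasure_image (d := (d:ℝ) - 1) (by linarith) univ
  have h2 : μH[(d:ℝ) - 1] A = μH[(d:ℝ) - 1] (univ : Set A) := by
    rw [← (isometry_subtype_coe (s := A)).hausdorffMeasure_image (Or.inl (by linarith)) univ]
    simp
  rw [h2]
  refine h1.trans (mul_le_mul' le_rfl ?_)
  have hc : ((d:ℝ) - 1) = (Fintype.card {i : Fin d // i ≠ j} : ℝ) := by
    rw [Fintype.card_subtype_compl]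
    simp [Nat.cast_sub hd]
  rw [hc, hausdorffMeasure_pi_real]
  apply measure_mono
  rintro _ ⟨x, -, rfl⟩
  obtain ⟨hx1, hx2⟩ := lev_norm hF_ne hF_cpt hR x.2.1
  have hdR : R ≤ d * R := by nlinarith
  rw [mem_closedBall, dist_zero_right, pi_norm_le_iff_of_nonneg (by nlinarith)]
  intro i
  have : ‖x.1 i.1‖ ≤ ‖x.1‖ := PiLp.norm_apply_le x.1 i.1
  show ‖x.1 i.1‖ ≤ _
  nlinarith

lemma lev_large {d : ℕ} (hd : 1 ≤ d) {F : Set (EuclideanSpace ℝ (Fin d))} (hF_ne : F.Nonempty)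
    (hF_cpt : IsCompact F) : ∃ E₀ : ℝ, 0 < E₀ ∧ ∀ b : ℝ, ∃ C : ℝ≥0∞, C ≠ ⊤ ∧
      ∀ ε, E₀ ≤ ε → ε ≤ b → μH[(d:ℝ) - 1] (Lev F ε) ≤ C := by
  have hd' : (1:ℝ) ≤ d := by exact_mod_cast hd
  obtain ⟨R, hR⟩ := hF_cpt.isBounded.subset_closedBall 0
  have hR0 : 0 ≤ R := by
    obtain ⟨x, hx⟩ := hF_ne
    exact dist_nonneg.trans (hR hx)
  refine ⟨1 + 8 * d * R, by positivity, fun b => ?_⟩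
  refine ⟨∑ j : Fin d, 2 * (((8 * d ^ 2 : NNReal) : ℝ≥0∞) ^ ((d:ℝ) - 1) *
        volume (closedBall (0 : {i : Fin d // i ≠ j} → ℝ) (2 * b))), ?_, ?_⟩
  · refine ENNReal.sum_ne_top.2 fun j _ => ?_
    refine ENNReal.mul_ne_top (by simp) (ENNReal.mul_ne_top ?_ ?_)
    · exact ENNReal.rpow_ne_top_of_nonneg (by linarith) ENNReal.coe_ne_top
    · exact isBounded_closedBall.measure_lt_top.ne
  · intro ε h1 h2
    calc μH[(d:ℝ) - 1] (Lev F ε) ≤ μH[(d:ℝ) - 1] (⋃ j : Fin d,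
          ({x | x ∈ Lev F ε ∧ ‖x‖ ≤ d * ((1:ℝ) * x j)} ∪
          {x | x ∈ Lev F ε ∧ ‖x‖ ≤ d * ((-1:ℝ) * x j)})) := by
          apply measure_mono
          intro x hx
          have : ∃ j, ‖x‖ ≤ d * |x j| := by
            by_contra! hcon
            have e1 := norm_le_l1 x
            have e2 : ∑ i, d * |x i| < ∑ i : Fin d, ‖x‖ :=
              Finset.sum_lt_sum_of_nonempty ⟨⟨0, hd⟩, Finset.mem_univ _⟩ fun i _ => hcon i
            rw [← Finset.mul_sum] at e2
            simp only [Finset.sum_const, Finset.card_univ, Fintype.card_fin, nsmul_eq_mul] at e2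
            nlinarith
          obtain ⟨j, hj⟩ := this
          refine mem_iUnion.2 ⟨j, ?_⟩
          rcases abs_cases (x j) with h | h
          · left
            exact ⟨hx, by rw [h.1] at hj; simpa using hj⟩
          · right
            exact ⟨hx, by rw [h.1] at hj; simpa using hj⟩
      _ ≤ ∑ j : Fin d, _ := measure_iUnion_fintype_le _ _
      _ ≤ _ := by
          apply Finset.sum_le_sum
          intro j _
          rw [two_mul]
          exact (measure_union_le _ _).trans (add_le_add
            (lev_piece hd hF_ne hF_cpt hR0 hR h1 j (Or.inl rfl) h2)
            (lev_piece hd hF_ne hF_cpt hR0 hR h1 j (Or.inr rfl) h2))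

lemma lev_bound {d N : ℕ} (hd : 1 ≤ d)
    {S : Fin N → EuclideanSpace ℝ (Fin d) → EuclideanSpace ℝ (Fin d)}
    {r : Fin N → ℝ} (hr : ∀ i, r i ∈ Set.Ioo (0 : ℝ) 1)
    (hS : ∀ i x y, dist (S i x) (S i y) = r i * dist x y)
    {F : Set (EuclideanSpace ℝ (Fin d))} (hF_ne : F.Nonempty) (hF_cpt : IsCompact F)
    (hF_self : F = ⋃ i, S i '' F) {q p : ℝ} (hq0 : 0 < q) (hq1 : q < 1) (hq : ∀ i, r i ≤ q)
    (hp0 : 0 < p) (hp : ∀ i, p ≤ r i)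
    {D : ℝ} (hD_dim : ∑ i, r i ^ D = 1) (b : ℝ) :
    ∃ M : ℝ, 0 ≤ M ∧ ∀ ε, 0 < ε → ε ≤ b →
      μH[(d:ℝ) - 1] (Lev F ε) ≤ ENNReal.ofReal (M * ε ^ ((d:ℝ) - 1 - D)) := by
  have hd' : (1:ℝ) ≤ d := by exact_mod_cast hd
  obtain ⟨E₀, hE0, hE⟩ := lev_large hd hF_ne hF_cpt
  set b' := max b E₀ with hb'
  have hb'0 : 0 < b' := lt_of_lt_of_le hE0 (le_max_right _ _)
  obtain ⟨C, hC, hCb⟩ := hE (b' / p)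
  obtain ⟨m, hm0, hm⟩ : ∃ m : ℝ, 0 < m ∧ ∀ ρ ∈ Icc b' (b'/p), m ≤ ρ ^ ((d:ℝ) - 1 - D) := by
    by_cases hne : (Icc b' (b'/p)).Nonempty
    · have hcont : ContinuousOn (fun ρ : ℝ => ρ ^ ((d:ℝ) - 1 - D)) (Icc b' (b'/p)) := by
        intro x hx
        exact (Real.continuousAt_rpow_const x _ (Or.inl (by linarith [hx.1]))).continuousWithinAt
      obtain ⟨x, hx, hmin⟩ := isCompact_Icc.exists_isMinOn hne hcont
      exact ⟨x ^ ((d:ℝ) - 1 - D), Real.rpow_pos_of_pos (by linarith [hx.1]) _, fun ρ hρ => hmin hρ⟩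
    · exact ⟨1, one_pos, fun ρ hρ => (hne ⟨ρ, hρ⟩).elim⟩
  set M : ℝ := C.toReal / m with hM
  have hM0 : 0 ≤ M := by positivity
  have base : ∀ ε, b' ≤ ε → ε ≤ b' / p →
      μH[(d:ℝ) - 1] (Lev F ε) ≤ ENNReal.ofReal (M * ε ^ ((d:ℝ) - 1 - D)) := by
    intro ε h1 h2
    refine (hCb ε ((le_max_right _ _).trans h1) h2).trans ?_
    rw [← ENNReal.ofReal_toReal hC]
    apply ENNReal.ofReal_le_ofReal
    rw [hM, div_mul_eq_mul_div, le_div_iff₀ hm0]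
    gcongr
    exact hm ε ⟨h1, h2⟩
  have key : ∀ n : ℕ, ∀ ε, q ^ n * b' ≤ ε → ε ≤ b' / p →
      μH[(d:ℝ) - 1] (Lev F ε) ≤ ENNReal.ofReal (M * ε ^ ((d:ℝ) - 1 - D)) := by
    intro n
    induction n with
    | zero =>
      intro ε h1 h2
      exact base ε (by simpa using h1) h2
    | succ n ih =>
      intro ε h1 h2
      by_cases hε : b' ≤ ε
      · exact base ε hε h2
      push Not at hε
      have hε0 : 0 < ε := lt_of_lt_of_le (by positivity) h1
      calc μH[(d:ℝ) - 1] (Lev F ε) ≤ μH[(d:ℝ) - 1] (⋃ i, S i '' Lev F (ε / r i)) :=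
            measure_mono (lev_sub hr hS hF_ne hF_cpt hF_self ε)
        _ ≤ ∑ i, μH[(d:ℝ) - 1] (S i '' Lev F (ε / r i)) := measure_iUnion_fintype_le _ _
        _ ≤ ∑ i, ENNReal.ofReal (r i ^ D * (M * ε ^ ((d:ℝ) - 1 - D))) := by
            apply Finset.sum_le_sum
            intro i _
            have hri := (hr i).1
            refine (sim_haus_le hri (hS i) (by linarith) _).trans ?_
            refine (mul_le_mul' le_rfl (ih (ε / r i) ?_ ?_)).trans ?_
            · rw [le_div_iff₀ hri]
              calc q ^ n * b' * r i ≤ q ^ n * b' * q := by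
                    gcongr
                    exact hq i
                _ = q ^ (n+1) * b' := by ring
                _ ≤ ε := h1
            · rw [div_le_div_iff₀ hri hp0]
              have := hp i
              nlinarith
            · rw [← ENNReal.ofReal_mul (by positivity)]
              apply ENNReal.ofReal_le_ofReal
              rw [Real.div_rpow hε0.le hri.le, Real.rpow_sub hri ((d:ℝ) - 1)]
              have : r i ^ D ≠ 0 := by positivity
              have : r i ^ ((d:ℝ) - 1) ≠ 0 := by positivity
              apply le_of_eq
              field_simp
        _ = _ := by
            rw [← ENNReal.ofReal_sum_of_nonneg, ← Finset.sum_mul, hD_dim, one_mul]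
            intro i _
            have hri := (hr i).1
            positivity
  refine ⟨M, hM0, fun ε h1 h2 => ?_⟩
  by_cases hN : Nonempty (Fin N)
  swap
  · exfalso
    rw [not_nonempty_iff] at hN
    simp at hD_dim
  obtain ⟨i0⟩ := hN
  have hp1 : p ≤ 1 := (hp i0).trans (hr i0).2.le
  have hlim : Tendsto (fun n : ℕ => q ^ n * b') atTop (𝓝 0) := by
    simpa using (tendsto_pow_atTop_nhds_zero_of_lt_one hq0.le hq1).mul_const b'
  obtain ⟨n, hn⟩ := (hlim.eventually_le_const h1).exists
  refine key n ε hn (h2.trans ((le_max_left b E₀).trans ?_))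
  rw [le_div_iff₀ hp0]
  nlinarith

lemma enlarge {X : Type*} [PseudoMetricSpace X] {s : ℝ} (hs : 0 ≤ s) (t : Set X) {β η : ℝ≥0∞}
    (hβ : ediam t < β) (hη : η ≠ 0) : ∃ t' : Set X, IsOpen t' ∧ t ⊆ t' ∧ ediam t' ≤ β ∧
      (⨆ _ : t'.Nonempty, ediam t' ^ s) ≤ (⨆ _ : t.Nonempty, ediam t ^ s) + η := by
  by_cases ht : t.Nonempty
  swap
  · rw [not_nonempty_iff_eq_empty] at ht
    subst ht
    exact ⟨∅, isOpen_empty, le_rfl, by simp, by simp⟩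
  have hcont : Continuous (fun δ : NNReal => ediam t + 2 * (δ : ℝ≥0∞)) := by
    refine continuous_const.add ?_
    exact (ENNReal.continuous_const_mul (by simp)).comp ENNReal.continuous_coe
  have h1 : ∀ᶠ δ : NNReal in 𝓝 0, ediam t + 2 * (δ : ℝ≥0∞) < β :=
    hcont.continuousAt.eventually_lt_const (by simpa using hβ)
  have h2 : ∀ᶠ δ : NNReal in 𝓝 0, (ediam t + 2 * (δ : ℝ≥0∞)) ^ s < ediam t ^ s + η := by
    have := ((ENNReal.continuous_rpow_const (y := s)).comp hcont).continuousAt (x := 0)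
    refine this.eventually_lt_const ?_
    simp only [Function.comp, ENNReal.coe_zero, mul_zero, add_zero]
    exact ENNReal.lt_add_right (ENNReal.rpow_ne_top_of_nonneg hs hβ.ne_top) hη
  have h3 : ∀ᶠ δ : NNReal in 𝓝[>] 0, 0 < δ := self_mem_nhdsWithin
  obtain ⟨δ, ⟨hδ1, hδ2⟩, hδ3⟩ :=
    (((h1.and h2).filter_mono nhdsWithin_le_nhds).and h3).exists
  have hd : ediam (thickening (δ:ℝ) t) ≤ ediam t + 2 * (δ : ℝ≥0∞) := ediam_thickening_le δ
  refine ⟨thickening δ t, isOpen_thickening, self_subset_thickening (by exact_mod_cast hδ3) t,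
    hd.trans hδ1.le, ?_⟩
  rw [iSup_pos ht]
  refine iSup_le fun _ => ?_
  exact (ENNReal.rpow_le_rpow hd hs).trans hδ2.le

lemma haus_open {X : Type*} [MetricSpace X] [MeasurableSpace X] [BorelSpace X] {s : ℝ}
    (hs : 0 ≤ s) (A : Set X) :
    μH[s] A = ⨆ n : ℕ, ⨅ (t : ℕ → Set X) (_ : ∀ k, IsOpen (t k)) (_ : A ⊆ ⋃ k, t k)
      (_ : ∀ k, ediam (t k) ≤ ((n : ℝ≥0∞) + 1)⁻¹),
      ∑' k, ⨆ _ : (t k).Nonempty, ediam (t k) ^ s := by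
  rw [Measure.hausdorffMeasure_apply]
  apply le_antisymm
  · refine iSup₂_le fun ρ hρ => ?_
    obtain ⟨n, hn⟩ := ENNReal.exists_inv_nat_lt hρ.ne'
    refine le_iSup_of_le n ?_
    refine le_iInf fun t => le_iInf fun _ => le_iInf fun h2 => le_iInf fun h3 => ?_
    refine iInf_le_of_le t (iInf_le_of_le h2 (iInf_le_of_le (fun k => ?_) le_rfl))
    refine (h3 k).trans (le_trans ?_ hn.le)
    exact ENNReal.inv_le_inv.2 le_self_add
  · refine iSup_le fun n => ?_
    have hpos : (0:ℝ≥0∞) < ((n : ℝ≥0∞) + 1)⁻¹ := by simp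
    obtain ⟨ρ, hρ0, hρ⟩ := exists_between hpos
    refine le_iSup₂_of_le ρ hρ0 ?_
    refine le_iInf fun t => le_iInf fun h2 => le_iInf fun h3 => ?_
    refine ENNReal.le_of_forall_pos_le_add fun η hη _ => ?_
    obtain ⟨η', hη'0, hη'⟩ := ENNReal.exists_pos_sum_of_countable' (ε := (η : ℝ≥0∞))
      (by simpa using hη.ne') ℕ
    choose t' e1 e2 e3 e4 using fun k => enlarge hs (t k) ((h3 k).trans_lt hρ) (hη'0 k).ne'
    refine iInf_le_of_le t' (iInf_le_of_le e1 (iInf_le_of_le (h2.trans (iUnion_mono e2))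
      (iInf_le_of_le e3 ?_)))
    calc _ ≤ ∑' k, ((⨆ _ : (t k).Nonempty, ediam (t k) ^ s) + η' k) := ENNReal.tsum_le_tsum e4
      _ = _ := ENNReal.tsum_add
      _ ≤ _ := by gcongr

lemma infDist_closed {d : ℕ} {F : Set (EuclideanSpace ℝ (Fin d))} (hF_ne : F.Nonempty)
    (hF_cpt : IsCompact F) : IsClosedMap (fun x => infDist x F) := by
  apply IsProperMap.isClosedMap
  rw [isProperMap_iff_tendsto_cocompact]
  refine ⟨continuous_infDist_pt F, ?_⟩
  obtain ⟨R, hR⟩ := hF_cpt.isBounded.subset_closedBall 0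
  refine Tendsto.mono_right ?_ (_root_.atTop_le_cocompact (α := ℝ))
  have h1 : Tendsto (fun x : EuclideanSpace ℝ (Fin d) => ‖x‖ - R) (cocompact _) atTop :=
    tendsto_atTop_add_const_right _ _ (tendsto_norm_cocompact_atTop)
  refine tendsto_atTop_mono (fun x => ?_) h1
  rw [le_infDist hF_ne]
  intro a ha
  have : ‖a‖ ≤ R := by simpa using hR ha
  rw [dist_eq_norm]
  have : ‖x‖ ≤ ‖x - a‖ + ‖a‖ := by simpa using norm_add_le (x - a) a
  linarith

lemma meas_haus {d : ℕ} {F : Set (EuclideanSpace ℝ (Fin d))} (hF_ne : F.Nonempty)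
    (hF_cpt : IsCompact F) {s : ℝ} (hs : 0 ≤ s) {C : Set (EuclideanSpace ℝ (Fin d))}
    (hC : IsClosed C) : Measurable (fun ε : ℝ => μH[s] (C ∩ Lev F ε)) := by
  simp_rw [haus_open hs]
  refine Measurable.iSup fun n => ?_
  apply measurable_of_Iio
  intro c
  apply IsOpen.measurableSet
  have : (fun ε : ℝ => ⨅ (t : ℕ → Set (EuclideanSpace ℝ (Fin d))) (_ : ∀ k, IsOpen (t k))
      (_ : C ∩ Lev F ε ⊆ ⋃ k, t k)
      (_ : ∀ k, ediam (t k) ≤ ((n : ℝ≥0∞) + 1)⁻¹),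
      ∑' k, ⨆ _ : (t k).Nonempty, ediam (t k) ^ s) ⁻¹' Iio c =
      ⋃ (t : ℕ → Set (EuclideanSpace ℝ (Fin d))) (_ : ∀ k, IsOpen (t k))
      (_ : (∀ k, ediam (t k) ≤ ((n : ℝ≥0∞) + 1)⁻¹) ∧
      ∑' k, (⨆ _ : (t k).Nonempty, ediam (t k) ^ s) < c), {ε | C ∩ Lev F ε ⊆ ⋃ k, t k} := by
    ext ε
    simp only [mem_preimage, mem_Iio, iInf_lt_iff, mem_iUnion, mem_ofPred_eq, exists_prop]
    constructor
    · rintro ⟨t, h1, h2, h3, h4⟩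
      exact ⟨t, h1, ⟨h3, h4⟩, h2⟩
    · rintro ⟨t, h1, ⟨h3, h4⟩, h2⟩
      exact ⟨t, h1, h2, h3, h4⟩
  rw [this]
  refine isOpen_iUnion fun t => isOpen_iUnion fun ht => isOpen_iUnion fun _ => ?_
  have h2 := infDist_closed hF_ne hF_cpt _ (hC.sdiff (isOpen_iUnion ht))
  convert h2.isOpen_compl using 1
  ext ε
  simp only [mem_ofPred_eq, mem_compl_iff, mem_image, not_exists, not_and]
  constructor
  · intro h x hx hxe
    exact hx.2 (h ⟨hx.1, hxe⟩)
  · rintro h x ⟨hx1, hx2⟩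
    by_contra hcon
    exact h x ⟨hx1, hcon⟩ hx2

lemma frontier_eq_lev {d : ℕ} {F : Set (EuclideanSpace ℝ (Fin d))} (hF_ne : F.Nonempty) :
    ∀ᵐ ε : ℝ, 0 < ε → frontier (cthickening ε F) = Lev F ε := by
  have hcount : (⋃ B ∈ TopologicalSpace.countableBasis (EuclideanSpace ℝ (Fin d)),
      {ε : ℝ | IsGreatest ((fun x => infDist x F) '' B) ε}).Countable := by
    refine (TopologicalSpace.countable_countableBasis _).biUnion fun B _ => ?_
    apply Set.Subsingleton.countable
    intro a ha b hb
    exact ha.unique hb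
  filter_upwards [hcount.ae_notMem volume] with ε hε hpos
  apply Subset.antisymm
  · intro x hx
    have := frontier_cthickening_subset F hx
    show infDist x F = ε
    rw [infDist, show infEDist x F = ENNReal.ofReal ε from this, ENNReal.toReal_ofReal hpos.le]
  · intro x hx
    have hx' : infDist x F = ε := hx
    have hmem : ∀ y, y ∈ cthickening ε F ↔ infDist y F ≤ ε := fun y =>
      by rw [mem_cthickening_iff, infDist, ENNReal.le_ofReal_iff_toReal_le
          (infEDist_ne_top hF_ne) hpos.le]
    rw [isClosed_cthickening.frontier_eq]
    refine ⟨(hmem x).2 hx'.le, fun hint => hε ?_⟩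
    obtain ⟨B, hB, hxB, hBs⟩ := (TopologicalSpace.isBasis_countableBasis
      (EuclideanSpace ℝ (Fin d))).exists_subset_of_mem_open hint isOpen_interior
    refine mem_iUnion₂.2 ⟨B, hB, ⟨x, hxB, hx'⟩, ?_⟩
    rintro _ ⟨y, hy, rfl⟩
    exact (hmem y).1 (interior_subset (hBs hy))

noncomputable def nu {d : ℕ} (F : Set (EuclideanSpace ℝ (Fin d))) (D : ℝ) (t : ℝ) :
    Measure (EuclideanSpace ℝ (Fin d)) :=
  ENNReal.ofReal (Real.exp (-t * (D - d + 1))) •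
    (μH[(d:ℝ) - 1]).restrict (Lev F (Real.exp (-t)))

lemma lev_closed {d : ℕ} (F : Set (EuclideanSpace ℝ (Fin d))) (ε : ℝ) : IsClosed (Lev F ε) :=
  isClosed_eq (continuous_infDist_pt F) continuous_const

lemma nu_bound {d N : ℕ} (hd : 1 ≤ d)
    {S : Fin N → EuclideanSpace ℝ (Fin d) → EuclideanSpace ℝ (Fin d)}
    {r : Fin N → ℝ} (hr : ∀ i, r i ∈ Set.Ioo (0 : ℝ) 1)
    (hS : ∀ i x y, dist (S i x) (S i y) = r i * dist x y)
    {F : Set (EuclideanSpace ℝ (Fin d))} (hF_ne : F.Nonempty) (hF_cpt : IsCompact F)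
    (hF_self : F = ⋃ i, S i '' F) {q p : ℝ} (hq0 : 0 < q) (hq1 : q < 1) (hq : ∀ i, r i ≤ q)
    (hp0 : 0 < p) (hp : ∀ i, p ≤ r i)
    {D : ℝ} (hD_dim : ∑ i, r i ^ D = 1) (a : ℝ) :
    ∃ M : ℝ, 0 ≤ M ∧ ∀ t, a ≤ t → nu F D t univ ≤ ENNReal.ofReal M := by
  obtain ⟨M, hM, h⟩ := lev_bound hd hr hS hF_ne hF_cpt hF_self hq0 hq1 hq hp0 hp hD_dim
    (Real.exp (-a))
  refine ⟨M, hM, fun t ht => ?_⟩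
  have := h (Real.exp (-t)) (Real.exp_pos _) (Real.exp_le_exp.2 (by linarith))
  rw [nu, Measure.smul_apply, Measure.restrict_apply_univ, smul_eq_mul]
  refine (mul_le_mul_right this _).trans ?_
  rw [← ENNReal.ofReal_mul (Real.exp_pos _).le]
  apply ENNReal.ofReal_le_ofReal
  rw [← Real.exp_mul, mul_left_comm, ← Real.exp_add]
  apply le_of_eq
  have : -t * (D - d + 1) + -t * ((d:ℝ) - 1 - D) = 0 := by ring
  rw [this, Real.exp_zero, mul_one]

lemma nu_sub {d N : ℕ} (hd : 1 ≤ d)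
    {S : Fin N → EuclideanSpace ℝ (Fin d) → EuclideanSpace ℝ (Fin d)}
    {r : Fin N → ℝ} (hr : ∀ i, r i ∈ Set.Ioo (0 : ℝ) 1)
    (hS : ∀ i x y, dist (S i x) (S i y) = r i * dist x y)
    {F : Set (EuclideanSpace ℝ (Fin d))} (hF_ne : F.Nonempty) (hF_cpt : IsCompact F)
    (hF_self : F = ⋃ i, S i '' F) (D : ℝ) (t : ℝ) :
    nu F D t ≤ ∑ i, ENNReal.ofReal (r i ^ D) •
      Measure.map (S i) (nu F D (t - (-Real.log (r i)))) := by
  have hd' : (0:ℝ) ≤ (d:ℝ) - 1 := by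
    have : (1:ℝ) ≤ d := by exact_mod_cast hd
    linarith
  have h1 := sub_measure hr hS hd' _ _
    (lev_sub hr hS hF_ne hF_cpt hF_self (Real.exp (-t)))
  have h2 : ∀ i, ENNReal.ofReal (r i ^ D) •
      Measure.map (S i) (nu F D (t - (-Real.log (r i)))) =
      ENNReal.ofReal (Real.exp (-t * (D - d + 1))) • (ENNReal.ofReal (r i ^ ((d:ℝ) - 1)) •
        Measure.map (S i) ((μH[(d:ℝ) - 1]).restrict (Lev F (Real.exp (-t) / r i)))) := by
    intro i
    have hri := (hr i).1
    have e1 : Real.exp (-(t - (-Real.log (r i)))) = Real.exp (-t) / r i := by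
      rw [show -(t - (-Real.log (r i))) = -t - Real.log (r i) by ring, Real.exp_sub,
        Real.exp_log hri]
    rw [nu, e1, Measure.map_smul, smul_smul, smul_smul,
      ← ENNReal.ofReal_mul (Real.rpow_nonneg hri.le _), ← ENNReal.ofReal_mul (Real.exp_pos _).le]
    congr 2
    rw [Real.rpow_def_of_pos hri, Real.rpow_def_of_pos hri, ← Real.exp_add, ← Real.exp_add]
    congr 1
    ring
  simp_rw [h2]
  rw [← Finset.smul_sum, nu]
  intro s
  rw [Measure.smul_apply, Measure.smul_apply]
  exact mul_le_mul_right (h1 s) _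

lemma nu_meas {d : ℕ} (hd : 1 ≤ d)
    {F : Set (EuclideanSpace ℝ (Fin d))} (hF_ne : F.Nonempty) (hF_cpt : IsCompact F) {D : ℝ}
    (hfin : ∀ t, nu F D t univ < ⊤) : Measurable (nu F D) := by
  have hd' : (0:ℝ) ≤ (d:ℝ) - 1 := by
    have : (1:ℝ) ≤ d := by exact_mod_cast hd
    linarith
  have : ∀ t, IsFiniteMeasure (nu F D t) := fun t => ⟨hfin t⟩
  have key : ∀ C : Set (EuclideanSpace ℝ (Fin d)), IsClosed C →
      Measurable (fun t => nu F D t C) := by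
    intro C hC
    have h1 : ∀ t, nu F D t C = ENNReal.ofReal (Real.exp (-t * (D - d + 1))) *
        μH[(d:ℝ) - 1] (C ∩ Lev F (Real.exp (-t))) := by
      intro t
      rw [nu, Measure.smul_apply, Measure.restrict_apply hC.measurableSet, smul_eq_mul]
    simp_rw [h1]
    refine Measurable.mul (by fun_prop) ?_
    exact (meas_haus hF_ne hF_cpt hd' hC).comp (by fun_prop)
  refine Measurable.measure_of_isPiSystem (S := {s | IsClosed s}) ?_ isPiSystem_isClosed ?_ ?_
  · rw [← borel_eq_generateFrom_isClosed]
    exact BorelSpace.measurable_eq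
  · intro s hs
    exact key s hs
  · exact key _ isClosed_univ

lemma nu_int_meas {d : ℕ} {ν : ℝ → Measure (EuclideanSpace ℝ (Fin d))} (hν : Measurable ν)
    {f : EuclideanSpace ℝ (Fin d) → ℝ} (hf : Continuous f) :
    Measurable (fun t => ∫ x, f x ∂(ν t)) := by
  let κ : ProbabilityTheory.Kernel ℝ (EuclideanSpace ℝ (Fin d)) := ⟨ν, hν⟩
  have h := (StronglyMeasurable.integral_kernel (κ := κ) hf.stronglyMeasurable).measurable
  exact h

lemma cesaro {q : ℝ → ℝ} (hq : Antitone q) (hq0 : ∀ t, 0 ≤ q t) :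
    ∃ c, Tendsto (fun T : ℝ => T⁻¹ * ∫ t in (0:ℝ)..T, q t) atTop (𝓝 c) := by
  have hint : ∀ a b, IntervalIntegrable q volume a b := fun a b => hq.intervalIntegrable
  have hbd : BddBelow (range q) := ⟨0, by rintro _ ⟨t, rfl⟩; exact hq0 t⟩
  have hc := tendsto_atTop_ciInf hq hbd
  set c := ⨅ i, q i
  have hcq : ∀ t, c ≤ q t := fun t => ciInf_le hbd t
  refine ⟨c, ?_⟩
  rw [Metric.tendsto_atTop]
  intro η hη
  obtain ⟨T0, hT0⟩ := (Metric.tendsto_atTop.1 hc) (η/2) (by linarith)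
  set T1 := max T0 0
  set A := ∫ t in (0:ℝ)..T1, q t
  have hT1 : 0 ≤ T1 := le_max_right _ _
  have hA : 0 ≤ A := intervalIntegral.integral_nonneg hT1 fun t _ => hq0 t
  have hc0 : 0 ≤ c := le_ciInf hq0
  refine ⟨T1 + 1 + 4 * A / η, fun T hT => ?_⟩
  have h4 : 0 ≤ 4 * A / η := by positivity
  have hTpos : 0 < T := by linarith
  have hsplit : ∫ t in (0:ℝ)..T, q t = A + ∫ t in T1..T, q t :=
    (intervalIntegral.integral_add_adjacent_intervals (hint _ _) (hint _ _)).symm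
  have hup : ∫ t in T1..T, q t ≤ ∫ t in T1..T, (c + η/2) := by
    apply intervalIntegral.integral_mono_on (by linarith) (hint _ _) (by simp)
    intro t ht
    have := hT0 t ((le_max_left _ _).trans ht.1)
    rw [Real.dist_eq] at this
    linarith [(abs_lt.1 this).2]
  have hlo : ∫ t in (0:ℝ)..T, c ≤ ∫ t in (0:ℝ)..T, q t := by
    apply intervalIntegral.integral_mono_on hTpos.le (by simp) (hint _ _)
    intro t _
    exact hcq t
  rw [intervalIntegral.integral_const, smul_eq_mul] at hup hlo
  have hA4 : 4 * A ≤ η * T := by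
    have : 4 * A / η ≤ T := by linarith
    rw [div_le_iff₀ hη] at this
    linarith
  have e1 : T⁻¹ * ∫ t in (0:ℝ)..T, q t = (∫ t in (0:ℝ)..T, q t) / T := by
    rw [inv_mul_eq_div]
  rw [Real.dist_eq, e1, abs_lt]
  constructor
  · have : c ≤ (∫ t in (0:ℝ)..T, q t) / T := by
      rw [le_div_iff₀ hTpos]
      linarith
    linarith
  · have : (∫ t in (0:ℝ)..T, q t) / T < c + η := by
      rw [div_lt_iff₀ hTpos]
      nlinarith
    linarith

lemma avg_lemma {N : ℕ} {w s : Fin N → ℝ} (hw : ∀ i, 0 < w i) (hs : ∀ i, 0 < s i)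
    (hw1 : ∑ i, w i = 1) {u : ℝ → ℝ} (hu0 : ∀ t, 0 ≤ u t) (hum : Measurable u)
    (hub : ∀ a, ∃ M, ∀ t, a ≤ t → u t ≤ M) (hu : ∀ t, u t ≤ ∑ i, w i * u (t - s i)) :
    ∃ Λ, ∀ a, Tendsto (fun T : ℝ => T⁻¹ * ∫ t in a..T, u t) atTop (𝓝 Λ) := by
  have hint : ∀ a b, IntervalIntegrable u volume a b := by
    intro a b
    obtain ⟨M, hM⟩ := hub (min a b)
    rw [intervalIntegrable_iff]
    refine Measure.integrableOn_of_bounded (M := M) (by simp) hum.aestronglyMeasurable ?_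
    filter_upwards [ae_restrict_mem measurableSet_uIoc] with t ht
    rw [Real.norm_eq_abs, abs_of_nonneg (hu0 t)]
    exact hM t ht.1.le
  set U : ℝ → ℝ := fun T => ∫ t in (0:ℝ)..T, u t with hU
  have hUsub : ∀ a b, ∫ t in a..b, u t = U b - U a := by
    intro a b
    rw [hU]
    exact (intervalIntegral.integral_interval_sub_left (hint _ _) (hint _ _)).symm
  have hUmono : Monotone U := by
    intro a b hab
    have := intervalIntegral.integral_nonneg hab (μ := volume) (f := u) fun t _ => hu0 t
    rw [hUsub] at this
    linarith
  have hUint : ∀ a b, IntervalIntegrable U volume a b := fun a b => hUmono.intervalIntegrable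
  set q : ℝ → ℝ := fun T => ∑ i, w i * (U T - U (T - s i)) with hqdef
  have hq0 : ∀ t, 0 ≤ q t := fun t => Finset.sum_nonneg fun i _ =>
    mul_nonneg (hw i).le (sub_nonneg.2 (hUmono (by linarith [hs i])))
  have hqanti : Antitone q := by
    intro T1 T2 hT
    have h1 : ∫ t in T1..T2, u t ≤ ∫ t in T1..T2, ∑ i, w i * u (t - s i) := by
      refine intervalIntegral.integral_mono_on hT (hint _ _) ?_ fun t _ => hu t
      have e : (fun t => ∑ i, w i * u (t - s i)) = ∑ i, fun t => w i * u (t - s i) := by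
        funext t
        simp
      rw [e]
      refine IntervalIntegrable.sum (f := fun i t => w i * u (t - s i)) Finset.univ fun i _ => ?_
      have := (hint (T1 - s i) (T2 - s i)).comp_sub_right (s i)
      simp only [sub_add_cancel] at this
      exact this.const_mul _
    have h2 : ∫ t in T1..T2, ∑ i, w i * u (t - s i) =
        ∑ i, w i * (U (T2 - s i) - U (T1 - s i)) := by
      rw [intervalIntegral.integral_finsetSum]
      · refine Finset.sum_congr rfl fun i _ => ?_
        rw [intervalIntegral.integral_const_mul, intervalIntegral.integral_comp_sub_right, hUsub]
      · intro i _
        have := (hint (T1 - s i) (T2 - s i)).comp_sub_right (s i)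
        simp only [sub_add_cancel] at this
        exact this.const_mul _
    rw [h2, hUsub] at h1
    have h3 : q T2 - q T1 = (U T2 - U T1) - ∑ i, w i * (U (T2 - s i) - U (T1 - s i)) := by
      have : U T2 - U T1 = ∑ i, w i * (U T2 - U T1) := by rw [← Finset.sum_mul, hw1, one_mul]
      rw [this, hqdef]
      simp only
      rw [← Finset.sum_sub_distrib, ← Finset.sum_sub_distrib]
      refine Finset.sum_congr rfl fun i _ => ?_
      ring
    linarith
  obtain ⟨c, hc⟩ := cesaro hqanti hq0
  set m := ∑ i, w i * s i with hm
  have hmpos : 0 < m := by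
    rcases isEmpty_or_nonempty (Fin N) with h | h
    · simp at hw1
    · exact Finset.sum_pos (fun i _ => mul_pos (hw i) (hs i)) Finset.univ_nonempty
  have hkey : ∀ i, ∃ B, ∀ T, 0 ≤ T →
      |(∫ t in (0:ℝ)..T, (U t - U (t - s i))) - s i * U T| ≤ B := by
    intro i
    obtain ⟨M, hM⟩ := hub (- s i)
    refine ⟨s i * (M * s i) + |∫ t in (-s i)..0, U t|, fun T hT => ?_⟩
    have hsi := hs i
    have hcomp : IntervalIntegrable (fun t => U (t - s i)) volume 0 T := by
      have := (hint 0 0)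
      have := (hUint (0 - s i) (T - s i)).comp_sub_right (s i)
      simpa only [sub_add_cancel] using this
    have e1 : ∫ t in (0:ℝ)..T, (U t - U (t - s i)) =
        (∫ t in (T - s i)..T, U t) - ∫ t in (-s i)..0, U t := by
      rw [intervalIntegral.integral_sub (hUint _ _) hcomp,
        intervalIntegral.integral_comp_sub_right, zero_sub]
      have h1 := intervalIntegral.integral_add_adjacent_intervals (hUint (-s i) 0) (hUint 0 T)
      have h2 := intervalIntegral.integral_add_adjacent_intervals
        (hUint (-s i) (T - s i)) (hUint (T - s i) T)
      linarith
    have e2 : s i * U T = ∫ t in (T - s i)..T, U T := by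
      rw [intervalIntegral.integral_const, smul_eq_mul]; ring
    have h3 : ∫ t in (T - s i)..T, U t ≤ ∫ t in (T - s i)..T, U T :=
      intervalIntegral.integral_mono_on (by linarith) (hUint _ _) (by simp)
        fun t ht => hUmono ht.2
    have h4 : ∫ t in (T - s i)..T, (U T - M * s i) ≤ ∫ t in (T - s i)..T, U t := by
      refine intervalIntegral.integral_mono_on (by linarith) (by simp) (hUint _ _)
        fun t ht => ?_
      have h5 : ∫ t in (T - s i)..T, u t ≤ ∫ t in (T - s i)..T, M :=
        intervalIntegral.integral_mono_on (by linarith) (hint _ _) (by simp)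
          fun t ht => hM t (by linarith [ht.1])
      rw [hUsub, intervalIntegral.integral_const, smul_eq_mul] at h5
      have := hUmono ht.1
      linarith
    rw [intervalIntegral.integral_const, smul_eq_mul] at h4
    rw [e1, abs_le]
    have h6 := le_abs_self (∫ t in (-s i)..0, U t)
    have h7 := neg_abs_le (∫ t in (-s i)..0, U t)
    have h8 : 0 ≤ s i * (M * s i) := by
      have : 0 ≤ M := (hu0 0).trans (hM 0 (by linarith))
      positivity
    rw [← e2] at h3
    constructor <;> linarith
  choose B hB using hkey
  have hI : ∀ T, 0 ≤ T → |(∫ t in (0:ℝ)..T, q t) - m * U T| ≤ ∑ i, w i * B i := by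
    intro T hT
    have e1 : ∫ t in (0:ℝ)..T, q t = ∑ i, w i * ∫ t in (0:ℝ)..T, (U t - U (t - s i)) := by
      rw [hqdef, intervalIntegral.integral_finsetSum]
      · refine Finset.sum_congr rfl fun i _ => ?_
        rw [intervalIntegral.integral_const_mul]
      · intro i _
        have := (hUint (0 - s i) (T - s i)).comp_sub_right (s i)
        simp only [sub_add_cancel] at this
        exact ((hUint _ _).sub this).const_mul _
    rw [e1, hm, Finset.sum_mul, ← Finset.sum_sub_distrib]
    refine (Finset.abs_sum_le_sum_abs _ _).trans (Finset.sum_le_sum fun i _ => ?_)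
    rw [mul_assoc, ← mul_sub, abs_mul, abs_of_pos (hw i)]
    exact mul_le_mul_of_nonneg_left (hB i T hT) (hw i).le
  have hdiff : Tendsto (fun T : ℝ => T⁻¹ * ((∫ t in (0:ℝ)..T, q t) - m * U T)) atTop (𝓝 0) := by
    have h0 : Tendsto (fun T : ℝ => T⁻¹ * ∑ i, w i * B i) atTop (𝓝 0) := by
      simpa using tendsto_inv_atTop_zero.mul_const (∑ i, w i * B i)
    refine squeeze_zero_norm' ?_ h0
    filter_upwards [eventually_ge_atTop (0:ℝ)] with T hT
    rw [norm_mul, Real.norm_eq_abs, Real.norm_eq_abs, abs_of_nonneg (inv_nonneg.2 hT)]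
    exact mul_le_mul_of_nonneg_left (hI T hT) (inv_nonneg.2 hT)
  refine ⟨m⁻¹ * c, fun a => ?_⟩
  have h1 := ((hc.sub hdiff).const_mul m⁻¹).sub (tendsto_inv_atTop_zero.mul_const (U a))
  simp only [sub_zero, zero_mul] at h1
  refine h1.congr fun T => ?_
  rw [hUsub]
  field_simp
  ring

lemma int_sub {d N : ℕ}
    {S : Fin N → EuclideanSpace ℝ (Fin d) → EuclideanSpace ℝ (Fin d)} (hSc : ∀ i, Continuous (S i))
    {w : Fin N → ℝ} (hw : ∀ i, 0 < w i) {μ : Measure (EuclideanSpace ℝ (Fin d))}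
    {μs : Fin N → Measure (EuclideanSpace ℝ (Fin d))} (hfin : ∀ i, IsFiniteMeasure (μs i))
    (h : μ ≤ ∑ i, ENNReal.ofReal (w i) • Measure.map (S i) (μs i))
    {f : EuclideanSpace ℝ (Fin d) → ℝ} (hf : Continuous f) (hf0 : ∀ x, 0 ≤ f x) {C : ℝ}
    (hfC : ∀ x, f x ≤ C) :
    ∫ x, f x ∂μ ≤ ∑ i, w i * ∫ x, f (S i x) ∂(μs i) := by
  have hint : ∀ i, Integrable f (ENNReal.ofReal (w i) • Measure.map (S i) (μs i)) := by
    intro i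
    have : IsFiniteMeasure (Measure.map (S i) (μs i)) := by infer_instance
    refine Integrable.smul_measure ?_ ENNReal.ofReal_ne_top
    refine Integrable.of_bound hf.aestronglyMeasurable C (Eventually.of_forall fun x => ?_)
    rw [Real.norm_eq_abs, abs_of_nonneg (hf0 x)]
    exact hfC x
  have hint' : Integrable f (∑ i, ENNReal.ofReal (w i) • Measure.map (S i) (μs i)) :=
    integrable_finsetSum_measure.2 fun i _ => hint i
  refine (integral_mono_measure h (Eventually.of_forall hf0) hint').trans (le_of_eq ?_)
  rw [integral_finsetSum_measure fun i _ => hint i]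
  refine Finset.sum_congr rfl fun i _ => ?_
  rw [integral_smul_measure, ENNReal.toReal_ofReal (hw i).le, smul_eq_mul,
    integral_map (hSc i).aemeasurable hf.aestronglyMeasurable]

lemma TT_cont {d N : ℕ}
    {S : Fin N → EuclideanSpace ℝ (Fin d) → EuclideanSpace ℝ (Fin d)} (hSc : ∀ i, Continuous (S i))
    (r : Fin N → ℝ) (D : ℝ) {f : EuclideanSpace ℝ (Fin d) → ℝ} (hf : Continuous f) (n : ℕ) :
    Continuous ((TT S r D ^ n) f) := by
  induction n with
  | zero => simpa using hf
  | succ n ih =>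
    rw [pow_succ', Module.End.mul_apply]
    have : TT S r D ((TT S r D ^ n) f) = fun x => ∑ i, r i ^ D * (TT S r D ^ n) f (S i x) := rfl
    rw [this]
    exact continuous_finsetSum _ fun i _ => continuous_const.mul (ih.comp (hSc i))

lemma TT_osc {d N : ℕ} {S : Fin N → EuclideanSpace ℝ (Fin d) → EuclideanSpace ℝ (Fin d)}
    {r : Fin N → ℝ} (hr : ∀ i, r i ∈ Set.Ioo (0 : ℝ) 1)
    (hS : ∀ i x y, dist (S i x) (S i y) = r i * dist x y)
    {q : ℝ} (hq0 : 0 < q) (hq1 : q < 1) (hq : ∀ i, r i ≤ q)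
    {D : ℝ} (hD_dim : ∑ i, r i ^ D = 1) {K : Set (EuclideanSpace ℝ (Fin d))}
    (hKc : IsCompact K) (hK : ∀ i, ∀ x ∈ K, S i x ∈ K)
    {f : EuclideanSpace ℝ (Fin d) → ℝ} (hf : Continuous f) {η : ℝ} (hη : 0 < η) :
    ∃ n, ∀ x ∈ K, ∀ y ∈ K, |(TT S r D ^ n) f x - (TT S r D ^ n) f y| ≤ η := by
  have huc := hKc.uniformContinuousOn_of_continuous hf.continuousOn
  obtain ⟨ρ, hρ, h⟩ := Metric.uniformContinuousOn_iff.1 huc η hη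
  have claim : ∀ n : ℕ, ∀ x ∈ K, ∀ y ∈ K, q ^ n * dist x y < ρ →
      |(TT S r D ^ n) f x - (TT S r D ^ n) f y| ≤ η := by
    intro n
    induction n with
    | zero =>
      intro x hx y hy hxy
      have := h x hx y hy (by simpa using hxy)
      rw [Real.dist_eq] at this
      simpa using this.le
    | succ n ih =>
      intro x hx y hy hxy
      rw [pow_succ', Module.End.mul_apply, TT_apply, TT_apply, ← Finset.sum_sub_distrib]
      calc _ ≤ ∑ i, |r i ^ D * (TT S r D ^ n) f (S i x) - r i ^ D * (TT S r D ^ n) f (S i y)| :=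
            Finset.abs_sum_le_sum_abs _ _
        _ ≤ ∑ i, r i ^ D * η := by
            refine Finset.sum_le_sum fun i _ => ?_
            have hri := (hr i).1
            rw [← mul_sub, abs_mul, abs_of_pos (Real.rpow_pos_of_pos hri _)]
            refine mul_le_mul_of_nonneg_left ?_ (Real.rpow_nonneg hri.le _)
            refine ih _ (hK i x hx) _ (hK i y hy) (lt_of_le_of_lt ?_ hxy)
            rw [hS, pow_succ, mul_assoc]
            gcongr
            exact hq i
        _ = η := by rw [← Finset.sum_mul, hD_dim, one_mul]
  obtain ⟨R, hR⟩ := Metric.isBounded_iff.1 hKc.isBounded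
  have hlim : Tendsto (fun n : ℕ => q ^ n * (|R| + 1)) atTop (𝓝 0) := by
    simpa using (tendsto_pow_atTop_nhds_zero_of_lt_one hq0.le hq1).mul_const (|R| + 1)
  obtain ⟨n, hn⟩ := (hlim.eventually (gt_mem_nhds hρ)).exists
  refine ⟨n, fun x hx y hy => claim n x hx y hy (lt_of_le_of_lt ?_ hn)⟩
  gcongr
  linarith [hR hx hy, le_abs_self R]

lemma TT_range {d N : ℕ} {S : Fin N → EuclideanSpace ℝ (Fin d) → EuclideanSpace ℝ (Fin d)}
    {r : Fin N → ℝ} (hr : ∀ i, r i ∈ Set.Ioo (0 : ℝ) 1)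
    {D : ℝ} (hD_dim : ∑ i, r i ^ D = 1)
    {f : EuclideanSpace ℝ (Fin d) → ℝ} {C : ℝ} (hf0 : ∀ x, 0 ≤ f x) (hfC : ∀ x, f x ≤ C) (n : ℕ) :
    (∀ x, 0 ≤ (TT S r D ^ n) f x) ∧ (∀ x, (TT S r D ^ n) f x ≤ C) := by
  constructor
  · intro x
    have := TT_pow_mono (S := S) hr D (K := univ) (fun _ _ _ => mem_univ _) n
      (f := fun _ => 0) (g := f) (fun x _ => hf0 x) x (mem_univ _)
    rwa [TT_pow_const hD_dim] at this
  · intro x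
    have := TT_pow_mono (S := S) hr D (K := univ) (fun _ _ _ => mem_univ _) n
      (f := f) (g := fun _ => C) (fun x _ => hfC x) x (mem_univ _)
    rwa [TT_pow_const hD_dim] at this

lemma m_inv {d N : ℕ} {S : Fin N → EuclideanSpace ℝ (Fin d) → EuclideanSpace ℝ (Fin d)}
    (hSc : ∀ i, Continuous (S i)) {r : Fin N → ℝ} (hr : ∀ i, r i ∈ Set.Ioo (0 : ℝ) 1)
    {D : ℝ} (hD_dim : ∑ i, r i ^ D = 1) {m : Measure (EuclideanSpace ℝ (Fin d))}
    [IsProbabilityMeasure m] (hm : m ≤ ∑ i, ENNReal.ofReal (r i ^ D) • Measure.map (S i) m)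
    {f : EuclideanSpace ℝ (Fin d) → ℝ} (hf : Continuous f) {C : ℝ} (hf0 : ∀ x, 0 ≤ f x)
    (hfC : ∀ x, f x ≤ C) (n : ℕ) : ∫ x, (TT S r D ^ n) f x ∂m = ∫ x, f x ∂m := by
  have hw : ∀ i, 0 < r i ^ D := fun i => Real.rpow_pos_of_pos (hr i).1 _
  have hbi : ∀ g : EuclideanSpace ℝ (Fin d) → ℝ, Continuous g → (∀ x, 0 ≤ g x) →
      (∀ x, g x ≤ C) → Integrable g m := by
    intro g hg h0 hC
    refine Integrable.of_bound hg.aestronglyMeasurable C (Eventually.of_forall fun x => ?_)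
    rw [Real.norm_eq_abs, abs_of_nonneg (h0 x)]
    exact hC x
  have step : ∀ g : EuclideanSpace ℝ (Fin d) → ℝ, Continuous g → (∀ x, 0 ≤ g x) →
      (∀ x, g x ≤ C) → ∫ x, g x ∂m ≤ ∫ x, TT S r D g x ∂m := by
    intro g hg h0 hC
    have h1 := int_sub hSc hw (fun _ => inferInstance) hm hg h0 hC
    refine h1.trans (le_of_eq ?_)
    have : TT S r D g = fun x => ∑ i, r i ^ D * g (S i x) := rfl
    rw [this, integral_finsetSum]
    · refine Finset.sum_congr rfl fun i _ => ?_
      rw [integral_const_mul]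
    · intro i _
      exact (hbi (fun x => g (S i x)) (hg.comp (hSc i)) (fun x => h0 _) fun x => hC _).const_mul _
  have step2 : ∀ g : EuclideanSpace ℝ (Fin d) → ℝ, Continuous g → (∀ x, 0 ≤ g x) →
      (∀ x, g x ≤ C) → ∫ x, TT S r D g x ∂m = ∫ x, g x ∂m := by
    intro g hg h0 hC
    apply le_antisymm _ (step g hg h0 hC)
    have h1 := step (fun x => C - g x) (by fun_prop) (fun x => by linarith [hC x])
      (fun x => by linarith [h0 x])
    have h2 : TT S r D (fun x => C - g x) = fun x => C - TT S r D g x := by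
      funext x
      rw [TT_apply, TT_apply]
      simp_rw [mul_sub]
      rw [Finset.sum_sub_distrib, ← Finset.sum_mul, hD_dim, one_mul]
    have hT := TT_range (S := S) hr hD_dim h0 hC 1
    have hTc := TT_cont hSc r D hg 1
    rw [pow_one] at hT hTc
    rw [h2, integral_sub (integrable_const _) (hbi g hg h0 hC),
      integral_sub (integrable_const _) (hbi _ hTc hT.1 hT.2)] at h1
    linarith
  induction n with
  | zero => simp
  | succ n ih =>
    have hT := TT_range (S := S) hr hD_dim hf0 hfC n
    have h3 := step2 _ (TT_cont hSc r D hf n) hT.1 hT.2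
    rw [pow_succ', Module.End.mul_apply, h3, ih]

lemma fam_int {d : ℕ} {ν : ℝ → Measure (EuclideanSpace ℝ (Fin d))} (hν : Measurable ν)
    (hbd : ∀ a, ∃ M : ℝ, 0 ≤ M ∧ ∀ t, a ≤ t → ν t univ ≤ ENNReal.ofReal M)
    {f : EuclideanSpace ℝ (Fin d) → ℝ} (hf : Continuous f) {C : ℝ} (hC : ∀ x, |f x| ≤ C)
    (a b : ℝ) : IntervalIntegrable (fun t => ∫ x, f x ∂(ν t)) volume a b := by
  obtain ⟨M, hM0, hM⟩ := hbd (min a b)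
  have hC0 : 0 ≤ C := (abs_nonneg _).trans (hC 0)
  rw [intervalIntegrable_iff]
  refine Measure.integrableOn_of_bounded (M := C * M) (by simp)
    (nu_int_meas hν hf).aestronglyMeasurable ?_
  filter_upwards [ae_restrict_mem measurableSet_uIoc] with t ht
  have h1 := hM t ht.1.le
  have : IsFiniteMeasure (ν t) := ⟨h1.trans_lt ENNReal.ofReal_lt_top⟩
  refine (norm_integral_le_of_norm_le_const (C := C) (Eventually.of_forall hC)).trans ?_
  gcongr
  exact ENNReal.toReal_le_of_le_ofReal hM0 h1

lemma loc_step {d N : ℕ} {S : Fin N → EuclideanSpace ℝ (Fin d) → EuclideanSpace ℝ (Fin d)}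
    (hSc : ∀ i, Continuous (S i)) {r : Fin N → ℝ} (hr : ∀ i, r i ∈ Set.Ioo (0 : ℝ) 1)
    {D : ℝ} {ν : ℝ → Measure (EuclideanSpace ℝ (Fin d))} (hν : Measurable ν)
    (hbd : ∀ a, ∃ M : ℝ, 0 ≤ M ∧ ∀ t, a ≤ t → ν t univ ≤ ENNReal.ofReal M)
    (hsub : ∀ t, ν t ≤ ∑ i, ENNReal.ofReal (r i ^ D) •
      Measure.map (S i) (ν (t - (-Real.log (r i)))))
    {f : EuclideanSpace ℝ (Fin d) → ℝ} (hf : Continuous f) {C : ℝ} (hf0 : ∀ x, 0 ≤ f x)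
    (hfC : ∀ x, f x ≤ C) (a : ℝ) :
    ∃ B, ∀ T, a ≤ T → ∫ t in a..T, (∫ x, f x ∂(ν t)) ≤
      (∫ t in a..T, (∫ x, TT S r D f x ∂(ν t))) + B := by
  have hw : ∀ i, 0 < r i ^ D := fun i => Real.rpow_pos_of_pos (hr i).1 _
  have hs : ∀ i, 0 < -Real.log (r i) := fun i => by
    linarith [Real.log_neg (hr i).1 (hr i).2]
  have hfin : ∀ t, IsFiniteMeasure (ν t) := fun t => by
    obtain ⟨M, -, hM⟩ := hbd t
    exact ⟨(hM t le_rfl).trans_lt ENNReal.ofReal_lt_top⟩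
  have hfa : ∀ x, |f x| ≤ C := fun x => by rw [abs_of_nonneg (hf0 x)]; exact hfC x
  set g : Fin N → ℝ → ℝ := fun i t => ∫ x, f (S i x) ∂(ν t) with hg
  have hgint : ∀ i a b, IntervalIntegrable (g i) volume a b := fun i a b =>
    fam_int hν hbd (hf.comp (hSc i)) (fun x => hfa (S i x)) a b
  have hg0 : ∀ i t, 0 ≤ g i t := fun i t => integral_nonneg fun x => hf0 _
  have hgs : ∀ i a b, IntervalIntegrable (fun t => g i (t - (-Real.log (r i)))) volume a b := by
    intro i a b
    have := (hgint i (a - (-Real.log (r i))) (b - (-Real.log (r i)))).comp_sub_right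
      (-Real.log (r i))
    simpa only [sub_add_cancel] using this
  refine ⟨∑ i, r i ^ D * ∫ t in (a - (-Real.log (r i)))..a, g i t, fun T hT => ?_⟩
  have h1 : ∀ t, ∫ x, f x ∂(ν t) ≤ ∑ i, r i ^ D * g i (t - (-Real.log (r i))) := fun t =>
    int_sub hSc hw (fun i => hfin _) (hsub t) hf hf0 hfC
  have hTT : ∀ t, ∫ x, TT S r D f x ∂(ν t) = ∑ i, r i ^ D * g i t := by
    intro t
    have : TT S r D f = fun x => ∑ i, r i ^ D * f (S i x) := rfl
    rw [this, integral_finsetSum]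
    · refine Finset.sum_congr rfl fun i _ => ?_
      rw [integral_const_mul]
    · intro i _
      refine Integrable.const_mul ?_ _
      exact Integrable.of_bound (hf.comp (hSc i)).aestronglyMeasurable C
        (Eventually.of_forall fun x => hfa (S i x))
  have hsumint : IntervalIntegrable (fun t => ∑ i, r i ^ D * g i (t - (-Real.log (r i))))
      volume a T := by
    have e : (fun t => ∑ i, r i ^ D * g i (t - (-Real.log (r i)))) =
        ∑ i, fun t => r i ^ D * g i (t - (-Real.log (r i))) := by
      funext t
      simp
    rw [e]
    exact IntervalIntegrable.sum (f := fun i t => r i ^ D * g i (t - (-Real.log (r i))))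
      Finset.univ fun i _ => (hgs i a T).const_mul _
  have h2 : ∫ t in a..T, (∫ x, f x ∂(ν t)) ≤
      ∫ t in a..T, ∑ i, r i ^ D * g i (t - (-Real.log (r i))) :=
    intervalIntegral.integral_mono_on hT (fam_int hν hbd hf hfa a T) hsumint fun t _ => h1 t
  refine h2.trans ?_
  simp_rw [hTT]
  rw [intervalIntegral.integral_finsetSum fun i _ => (hgs i a T).const_mul _,
    intervalIntegral.integral_finsetSum fun i _ => (hgint i a T).const_mul _,
    ← Finset.sum_add_distrib]
  refine Finset.sum_le_sum fun i _ => ?_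
  rw [intervalIntegral.integral_const_mul, intervalIntegral.integral_const_mul, ← mul_add]
  refine mul_le_mul_of_nonneg_left ?_ (hw i).le
  rw [intervalIntegral.integral_comp_sub_right]
  have e1 := intervalIntegral.integral_add_adjacent_intervals
    (hgint i (a - (-Real.log (r i))) a) (hgint i a T)
  have e2 := intervalIntegral.integral_add_adjacent_intervals
    (hgint i (a - (-Real.log (r i))) (T - (-Real.log (r i)))) (hgint i (T - (-Real.log (r i))) T)
  have e3 : 0 ≤ ∫ t in (T - (-Real.log (r i)))..T, g i t :=
    intervalIntegral.integral_nonneg (by linarith [hs i]) fun t _ => hg0 i t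
  linarith

lemma loc_upper {d N : ℕ} {S : Fin N → EuclideanSpace ℝ (Fin d) → EuclideanSpace ℝ (Fin d)}
    {r : Fin N → ℝ} (hr : ∀ i, r i ∈ Set.Ioo (0 : ℝ) 1)
    (hS : ∀ i x y, dist (S i x) (S i y) = r i * dist x y)
    {q : ℝ} (hq0 : 0 < q) (hq1 : q < 1) (hq : ∀ i, r i ≤ q)
    {D : ℝ} (hD_dim : ∑ i, r i ^ D = 1) {K : Set (EuclideanSpace ℝ (Fin d))}
    (hKc : IsCompact K) (hK : ∀ i, ∀ x ∈ K, S i x ∈ K)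
    {ν : ℝ → Measure (EuclideanSpace ℝ (Fin d))} (hν : Measurable ν)
    (hbd : ∀ a, ∃ M : ℝ, 0 ≤ M ∧ ∀ t, a ≤ t → ν t univ ≤ ENNReal.ofReal M)
    (hsub : ∀ t, ν t ≤ ∑ i, ENNReal.ofReal (r i ^ D) •
      Measure.map (S i) (ν (t - (-Real.log (r i)))))
    {a : ℝ} (hνK : ∀ t, a ≤ t → ν t Kᶜ = 0)
    {m : Measure (EuclideanSpace ℝ (Fin d))}
    [IsProbabilityMeasure m] (hm : m ≤ ∑ i, ENNReal.ofReal (r i ^ D) • Measure.map (S i) m)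
    (hmK : m Kᶜ = 0)
    {f : EuclideanSpace ℝ (Fin d) → ℝ} (hf : Continuous f) {C : ℝ} (hf0 : ∀ x, 0 ≤ f x)
    (hfC : ∀ x, f x ≤ C) {η : ℝ} (hη : 0 < η) :
    ∃ B, ∀ T, a ≤ T → ∫ t in a..T, (∫ x, f x ∂(ν t)) ≤
      (∫ x, f x ∂m + η) * (∫ t in a..T, (∫ _, (1:ℝ) ∂(ν t))) + B := by
  have hSc : ∀ i, Continuous (S i) := fun i => (sim_lip_s6 (hr i).1 (hS i)).continuous
  have hfin : ∀ t, IsFiniteMeasure (ν t) := fun t => by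
    obtain ⟨M, -, hM⟩ := hbd t
    exact ⟨(hM t le_rfl).trans_lt ENNReal.ofReal_lt_top⟩
  have hiter : ∀ n : ℕ, ∃ B, ∀ T, a ≤ T → ∫ t in a..T, (∫ x, f x ∂(ν t)) ≤
      (∫ t in a..T, (∫ x, (TT S r D ^ n) f x ∂(ν t))) + B := by
    intro n
    induction n with
    | zero => exact ⟨0, fun T _ => by simp⟩
    | succ n ih =>
      obtain ⟨B, hB⟩ := ih
      have hT := TT_range (S := S) hr hD_dim hf0 hfC n
      obtain ⟨B', hB'⟩ := loc_step hSc hr hν hbd hsub (TT_cont hSc r D hf n) hT.1 hT.2 a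
      refine ⟨B' + B, fun T hT => ?_⟩
      rw [pow_succ', Module.End.mul_apply]
      linarith [hB T hT, hB' T hT]
  obtain ⟨n, hn⟩ := TT_osc hr hS hq0 hq1 hq hD_dim hKc hK hf hη
  obtain ⟨B, hB⟩ := hiter n
  have hR := TT_range (S := S) hr hD_dim hf0 hfC n
  have hRc := TT_cont hSc r D hf n
  have hRa : ∀ x, |(TT S r D ^ n) f x| ≤ C := fun x => by
    rw [abs_of_nonneg (hR.1 x)]; exact hR.2 x
  have hsup : ∀ x ∈ K, (TT S r D ^ n) f x ≤ ∫ x, f x ∂m + η := by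
    intro x hx
    rw [← m_inv hSc hr hD_dim hm hf hf0 hfC n]
    have h1 : ∫ _, ((TT S r D ^ n) f x - η) ∂m ≤ ∫ y, (TT S r D ^ n) f y ∂m := by
      refine integral_mono_ae (integrable_const _) ?_ ?_
      · exact Integrable.of_bound hRc.aestronglyMeasurable C (Eventually.of_forall hRa)
      · filter_upwards [measure_eq_zero_iff_ae_notMem.1 hmK] with y hy
        have := hn x hx y (not_not.1 hy)
        linarith [(abs_le.1 this).2]
    rw [integral_const, probReal_univ, one_smul] at h1
    linarith
  refine ⟨B, fun T hT => (hB T hT).trans ?_⟩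
  gcongr
  rw [← intervalIntegral.integral_const_mul]
  refine intervalIntegral.integral_mono_on hT (fam_int hν hbd hRc hRa a T)
    ((fam_int hν hbd continuous_const (C := 1) (by simp) a T).const_mul _) fun t ht => ?_
  rw [← integral_const_mul]
  refine integral_mono_ae ?_ (integrable_const _) ?_
  · exact Integrable.of_bound hRc.aestronglyMeasurable C (Eventually.of_forall hRa)
  · filter_upwards [measure_eq_zero_iff_ae_notMem.1 (hνK t ht.1)] with y hy
    rw [mul_one]
    exact hsup y (not_not.1 hy)

lemma loc_lim {d N : ℕ} {S : Fin N → EuclideanSpace ℝ (Fin d) → EuclideanSpace ℝ (Fin d)}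
    {r : Fin N → ℝ} (hr : ∀ i, r i ∈ Set.Ioo (0 : ℝ) 1)
    (hS : ∀ i x y, dist (S i x) (S i y) = r i * dist x y)
    {q : ℝ} (hq0 : 0 < q) (hq1 : q < 1) (hq : ∀ i, r i ≤ q)
    {D : ℝ} (hD_dim : ∑ i, r i ^ D = 1) {K : Set (EuclideanSpace ℝ (Fin d))}
    (hKc : IsCompact K) (hK : ∀ i, ∀ x ∈ K, S i x ∈ K)
    {ν : ℝ → Measure (EuclideanSpace ℝ (Fin d))} (hν : Measurable ν)
    (hbd : ∀ a, ∃ M : ℝ, 0 ≤ M ∧ ∀ t, a ≤ t → ν t univ ≤ ENNReal.ofReal M)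
    (hsub : ∀ t, ν t ≤ ∑ i, ENNReal.ofReal (r i ^ D) •
      Measure.map (S i) (ν (t - (-Real.log (r i)))))
    {a : ℝ} (hνK : ∀ t, a ≤ t → ν t Kᶜ = 0)
    {m : Measure (EuclideanSpace ℝ (Fin d))}
    [IsProbabilityMeasure m] (hm : m ≤ ∑ i, ENNReal.ofReal (r i ^ D) • Measure.map (S i) m)
    (hmK : m Kᶜ = 0) :
    ∃ Λ : ℝ, ∀ f : EuclideanSpace ℝ (Fin d) → ℝ, Continuous f → (∃ C : ℝ, ∀ x, |f x| ≤ C) →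
      Tendsto (fun T : ℝ => T⁻¹ * ∫ t in a..T, (∫ x, f x ∂(ν t))) atTop
        (𝓝 (Λ * ∫ x, f x ∂m)) := by
  have hSc : ∀ i, Continuous (S i) := fun i => (sim_lip_s6 (hr i).1 (hS i)).continuous
  have hfin : ∀ t, IsFiniteMeasure (ν t) := fun t => by
    obtain ⟨M, -, hM⟩ := hbd t
    exact ⟨(hM t le_rfl).trans_lt ENNReal.ofReal_lt_top⟩
  have hw : ∀ i, 0 < r i ^ D := fun i => Real.rpow_pos_of_pos (hr i).1 _
  have hs : ∀ i, 0 < -Real.log (r i) := fun i => by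
    linarith [Real.log_neg (hr i).1 (hr i).2]
  obtain ⟨Λ, hΛ⟩ := avg_lemma hw hs hD_dim (u := fun t => ∫ _, (1:ℝ) ∂(ν t))
    (fun t => integral_nonneg fun _ => zero_le_one) (nu_int_meas hν continuous_const)
    (by
      intro b
      obtain ⟨M, hM0, hM⟩ := hbd b
      refine ⟨M, fun t ht => ?_⟩
      simp only [integral_const, smul_eq_mul, mul_one]
      exact ENNReal.toReal_le_of_le_ofReal hM0 (hM t ht))
    (fun t => int_sub hSc hw (fun i => hfin _) (hsub t) continuous_const (C := 1)
      (fun _ => zero_le_one) fun _ => le_rfl)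
  refine ⟨Λ, fun f hf ⟨C, hC⟩ => ?_⟩
  set V : ℝ → ℝ := fun T => ∫ t in a..T, (∫ _, (1:ℝ) ∂(ν t)) with hV
  set W : ℝ → ℝ := fun T => ∫ t in a..T, (∫ x, f x ∂(ν t)) with hW
  have hfi : ∀ t, Integrable f (ν t) := fun t =>
    Integrable.of_bound hf.aestronglyMeasurable C (Eventually.of_forall hC)
  have hfm : Integrable f m :=
    Integrable.of_bound hf.aestronglyMeasurable C (Eventually.of_forall hC)
  have hest : ∀ η, 0 < η → ∃ B, ∀ T, a ≤ T → |W T - (∫ x, f x ∂m) * V T| ≤ η * V T + B := by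
    intro η hη
    obtain ⟨B1, hB1⟩ := loc_upper hr hS hq0 hq1 hq hD_dim hKc hK hν hbd hsub hνK hm hmK
      (f := fun x => C + f x) (by fun_prop) (C := 2 * C)
      (fun x => by linarith [(abs_le.1 (hC x)).1]) (fun x => by linarith [(abs_le.1 (hC x)).2]) hη
    obtain ⟨B2, hB2⟩ := loc_upper hr hS hq0 hq1 hq hD_dim hKc hK hν hbd hsub hνK hm hmK
      (f := fun x => C - f x) (by fun_prop) (C := 2 * C)
      (fun x => by linarith [(abs_le.1 (hC x)).2]) (fun x => by linarith [(abs_le.1 (hC x)).1]) hη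
    refine ⟨max B1 B2, fun T hT => ?_⟩
    have h1 := hB1 T hT
    have h2 := hB2 T hT
    have i1 := fam_int hν hbd (continuous_const (y := (1:ℝ))) (C := 1) (by simp) a T
    have i2 := fam_int hν hbd hf hC a T
    have c1 : ∀ t, ∫ _, C ∂(ν t) = C * ∫ _, (1:ℝ) ∂(ν t) := fun t => by
      rw [← integral_const_mul, mul_one]
    have e1 : ∫ t in a..T, (∫ x, (C + f x) ∂(ν t)) = C * V T + W T := by
      rw [hV, hW]
      simp only
      rw [← intervalIntegral.integral_const_mul, ← intervalIntegral.integral_add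
        (i1.const_mul C) i2]
      congr 1
      funext t
      rw [integral_add (integrable_const _) (hfi t), c1]
    have e2 : ∫ t in a..T, (∫ x, (C - f x) ∂(ν t)) = C * V T - W T := by
      rw [hV, hW]
      simp only
      rw [← intervalIntegral.integral_const_mul, ← intervalIntegral.integral_sub
        (i1.const_mul C) i2]
      congr 1
      funext t
      rw [integral_sub (integrable_const _) (hfi t), c1]
    rw [e1, integral_add (integrable_const _) hfm, integral_const, probReal_univ, one_smul] at h1
    rw [e2, integral_sub (integrable_const _) hfm, integral_const, probReal_univ, one_smul] at h2
    have h3 := le_max_left B1 B2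
    have h4 := le_max_right B1 B2
    rw [abs_le]
    constructor
    · nlinarith
    · nlinarith
  have hV0 : ∀ T, a ≤ T → 0 ≤ V T := fun T hT =>
    intervalIntegral.integral_nonneg hT fun t _ => integral_nonneg fun _ => zero_le_one
  have hdiff : Tendsto (fun T : ℝ => T⁻¹ * (W T - (∫ x, f x ∂m) * V T)) atTop (𝓝 0) := by
    rw [Metric.tendsto_nhds]
    intro e he
    have hpos : 0 < |Λ| + 1 := by positivity
    obtain ⟨B, hB⟩ := hest (e / (2 * (|Λ| + 1))) (by positivity)
    have t1 : Tendsto (fun T : ℝ => e / (2 * (|Λ| + 1)) * (T⁻¹ * V T) + T⁻¹ * B) atTop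
        (𝓝 (e / (2 * (|Λ| + 1)) * Λ + 0 * B)) :=
      ((hΛ a).const_mul _).add (tendsto_inv_atTop_zero.mul_const B)
    have t2 : e / (2 * (|Λ| + 1)) * Λ + 0 * B < e := by
      rw [zero_mul, add_zero, div_mul_eq_mul_div, div_lt_iff₀ (by positivity)]
      nlinarith [le_abs_self Λ, abs_nonneg Λ]
    filter_upwards [t1.eventually_lt_const t2, eventually_ge_atTop a,
      eventually_gt_atTop (0:ℝ)] with T h1 h2 h3
    rw [Real.dist_eq, sub_zero, abs_mul, abs_of_pos (inv_pos.2 h3)]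
    have := mul_le_mul_of_nonneg_left (hB T h2) (inv_pos.2 h3).le
    refine this.trans_lt (lt_of_eq_of_lt ?_ h1)
    ring
  have := hdiff.add ((hΛ a).mul_const (∫ x, f x ∂m))
  rw [zero_add] at this
  refine this.congr fun T => ?_
  simp only [hV]
  ring

lemma subst_log (α : ℝ) (g : ℝ → ℝ) {δ ε₀ : ℝ} (hδ : 0 < δ) (hδε : δ ≤ ε₀) :
    ∫ ε in Set.Ioc δ ε₀, ε ^ α * g ε * ε⁻¹ =
      ∫ t in (-Real.log ε₀)..(Real.log δ⁻¹), Real.exp (-t * α) * g (Real.exp (-t)) := by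
  have hε₀ : 0 < ε₀ := hδ.trans_le hδε
  have himg : (fun t : ℝ => Real.exp (-t)) '' Ico (-Real.log ε₀) (Real.log δ⁻¹) = Ioc δ ε₀ := by
    ext ε
    constructor
    · rintro ⟨t, ⟨h1, h2⟩, rfl⟩
      rw [Real.log_inv] at h2
      constructor
      · rw [← Real.log_lt_iff_lt_exp hδ]
        linarith
      · rw [← Real.le_log_iff_exp_le hε₀]
        linarith
    · rintro ⟨h1, h2⟩
      have hε : 0 < ε := hδ.trans h1
      refine ⟨-Real.log ε, ⟨?_, ?_⟩, ?_⟩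
      · exact neg_le_neg (Real.log_le_log hε h2)
      · rw [Real.log_inv]
        exact neg_lt_neg (Real.log_lt_log hδ h1)
      · simp [Real.exp_log hε]
  have hder : ∀ t ∈ Ico (-Real.log ε₀) (Real.log δ⁻¹),
      HasDerivWithinAt (fun t : ℝ => Real.exp (-t)) (-Real.exp (-t))
        (Ico (-Real.log ε₀) (Real.log δ⁻¹)) t := by
    intro t _
    have := ((hasDerivAt_id t).neg).exp
    simpa using this.hasDerivWithinAt
  have hinj : InjOn (fun t : ℝ => Real.exp (-t)) (Ico (-Real.log ε₀) (Real.log δ⁻¹)) := by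
    intro a _ b _ hab
    have := Real.exp_injective hab
    linarith
  have hle : -Real.log ε₀ ≤ Real.log δ⁻¹ := by
    rw [Real.log_inv]
    exact neg_le_neg (Real.log_le_log hδ hδε)
  rw [← himg, integral_image_eq_integral_abs_deriv_smul measurableSet_Ico hder hinj,
    integral_Ico_eq_integral_Ioc, ← intervalIntegral.integral_of_le hle]
  congr 1
  funext t
  rw [abs_neg, abs_of_pos (Real.exp_pos _), smul_eq_mul, ← Real.exp_mul]
  have := (Real.exp_pos (-t)).ne'
  field_simp


/-- (Localization of the average surface content.) Under the SOSC
with respect to `J` and for any `ε₀ > 0`, the logarithmically averaged surface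
content `Λ_S = lim_{δ→0⁺} (1/ln(1/δ)) ∫_δ^{ε₀} ε^{D-d+1} H^{d-1}(∂F(ε)) ε⁻¹ dε`
exists and is finite, and for every bounded continuous `f : ℝ^d → ℝ` the logarithmic
averages of `ε^{D-d+1} ∫_{∂F(ε)} f dH^{d-1}` converge to `Λ_S · ∫_F f dμ_F`; i.e. the
rescaled surface measures converge weakly to `Λ_S · μ_F` with
`μ_F = H^D(F ∩ ·)/H^D(F)`. -/
theorem statement6 (d N : ℕ) (hd : 1 ≤ d) (hN : 2 ≤ N)
    (S : Fin N → EuclideanSpace ℝ (Fin d) → EuclideanSpace ℝ (Fin d))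
    (r : Fin N → ℝ) (hr : ∀ i, r i ∈ Set.Ioo (0 : ℝ) 1)
    (hS : ∀ i x y, dist (S i x) (S i y) = r i * dist x y)
    (F : Set (EuclideanSpace ℝ (Fin d)))
    (hF_ne : F.Nonempty) (hF_cpt : IsCompact F)
    (hF_self : F = ⋃ i, S i '' F)
    (D : ℝ) (hD : 0 < D) (hD_dim : ∑ i, r i ^ D = 1)
    (J : Set (EuclideanSpace ℝ (Fin d))) (hJ_cpt : IsCompact J)
    (hJ_reg : J = closure (interior J))
    (hJ_sub : ∀ i, S i '' J ⊆ J)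
    (hJ_disj : ∀ i j, i ≠ j → Disjoint (S i '' interior J) (S j '' interior J))
    (hSOSC : (F ∩ interior J).Nonempty)
    (ε₀ : ℝ) (hε₀ : 0 < ε₀) :
    ∃ Λ : ℝ,
      Tendsto (fun δ : ℝ => (Real.log δ⁻¹)⁻¹ *
          ∫ ε in Set.Ioc δ ε₀,
            ε ^ (D - d + 1) * (μH[(d:ℝ) - 1] (frontier (Metric.cthickening ε F))).toReal * ε⁻¹)
        (𝓝[>] 0) (𝓝 Λ)
      ∧ ∀ f : EuclideanSpace ℝ (Fin d) → ℝ, Continuous f →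
          (∃ C : ℝ, ∀ x, |f x| ≤ C) →
          Tendsto (fun δ : ℝ => (Real.log δ⁻¹)⁻¹ *
              ∫ ε in Set.Ioc δ ε₀,
                ε ^ (D - d + 1) * (∫ x in frontier (Metric.cthickening ε F), f x ∂(μH[(d:ℝ) - 1])) * ε⁻¹)
            (𝓝[>] 0)
            (𝓝 (Λ * ∫ x, f x
              ∂((μH[D] F)⁻¹ •
                (μH[D] : Measure (EuclideanSpace ℝ (Fin d))).restrict F))) := by
  have hne : Nonempty (Fin N) := ⟨⟨0, by omega⟩⟩
  obtain ⟨iq, hiq⟩ := Finite.exists_max r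
  obtain ⟨ip, hip⟩ := Finite.exists_min r
  have hq0 := (hr iq).1
  have hq1 := (hr iq).2
  have hp0 := (hr ip).1
  have hSc : ∀ i, Continuous (S i) := fun i => (sim_lip_s6 (hr i).1 (hS i)).continuous
  have hpos : μH[D] F ≠ 0 := by
    refine haus_pos_s6 hr hS hF_ne hF_cpt hF_self hq0 hq1 hiq hp0 hip hD hD_dim
      (U := interior J) isOpen_interior (hSOSC.mono inter_subset_right)
      (hJ_cpt.isBounded.subset interior_subset) (fun i => ?_) hJ_disj
    exact interior_maximal ((image_mono interior_subset).trans (hJ_sub i))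
      (sim_open_s6 (hr i).1 (hS i) _ isOpen_interior)
  have hfinF : μH[D] F < ⊤ := haus_fin_s6 hr hS hF_cpt hF_self hq1 hiq hD hD_dim
  have hFm : MeasurableSet F := hF_cpt.isClosed.measurableSet
  set m : Measure (EuclideanSpace ℝ (Fin d)) := (μH[D] F)⁻¹ •
                (μH[D] : Measure (EuclideanSpace ℝ (Fin d))).restrict F with hmdef
  have hprob : IsProbabilityMeasure m := by
    constructor
    rw [hmdef, Measure.smul_apply, Measure.restrict_apply_univ, smul_eq_mul]
    exact ENNReal.inv_mul_cancel hpos hfinF.ne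
  have hm : m ≤ ∑ i, ENNReal.ofReal (r i ^ D) • Measure.map (S i) m := by
    have h1 := sub_measure hr hS hD.le F (fun _ => F) hF_self.le
    have h2 : ∑ i, ENNReal.ofReal (r i ^ D) • Measure.map (S i) m =
        (μH[D] F)⁻¹ • ∑ i, ENNReal.ofReal (r i ^ D) • Measure.map (S i)
          ((μH[D] : Measure (EuclideanSpace ℝ (Fin d))).restrict F) := by
      rw [Finset.smul_sum]
      refine Finset.sum_congr rfl fun i _ => ?_
      rw [hmdef, Measure.map_smul, smul_smul, smul_smul, mul_comm]
    rw [h2, hmdef]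
    intro s
    rw [Measure.smul_apply, Measure.smul_apply]
    exact mul_le_mul_right (h1 s) _
  set K := cthickening ε₀ F with hKdef
  have hKc : IsCompact K := hF_cpt.cthickening
  have hFK : F ⊆ K := self_subset_cthickening F
  have hmK : m Kᶜ = 0 := by
    rw [hmdef, Measure.smul_apply, Measure.restrict_apply hKc.isClosed.measurableSet.compl]
    have : Kᶜ ∩ F = ∅ := by
      ext x
      simp only [mem_inter_iff, mem_compl_iff, mem_empty_iff_false, iff_false, not_and]
      exact fun h1 h2 => h1 (hFK h2)
    rw [this]
    simp
  have hK : ∀ i, ∀ x ∈ K, S i x ∈ K := by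
    intro i x hx
    rw [hKdef, hF_cpt.cthickening_eq_biUnion_closedBall hε₀.le] at hx
    simp only [mem_iUnion, mem_closedBall, exists_prop] at hx
    obtain ⟨y, hy, hxy⟩ := hx
    have hSy : S i y ∈ F := by
      rw [hF_self]
      exact mem_iUnion.2 ⟨i, mem_image_of_mem _ hy⟩
    refine mem_cthickening_of_dist_le _ _ _ _ hSy ?_
    rw [hS]
    have := hr i
    nlinarith [this.1, this.2, dist_nonneg (x := x) (y := y)]
  have hbd := nu_bound hd hr hS hF_ne hF_cpt hF_self hq0 hq1 hiq hp0 hip hD_dim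
  have hν : Measurable (nu F D) := by
    refine nu_meas hd hF_ne hF_cpt fun t => ?_
    obtain ⟨M, -, hM⟩ := hbd t
    exact (hM t le_rfl).trans_lt ENNReal.ofReal_lt_top
  have hνK : ∀ t, -Real.log ε₀ ≤ t → nu F D t Kᶜ = 0 := by
    intro t ht
    rw [nu, Measure.smul_apply, Measure.restrict_apply hKc.isClosed.measurableSet.compl]
    have : Kᶜ ∩ Lev F (Real.exp (-t)) = ∅ := by
      ext x
      simp only [mem_inter_iff, mem_compl_iff, mem_empty_iff_false, iff_false, not_and]
      intro h1 h2
      apply h1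
      obtain ⟨y, hy, hxy⟩ := hF_cpt.exists_infDist_eq_dist hF_ne x
      refine mem_cthickening_of_dist_le _ _ _ _ hy ?_
      rw [← hxy, show infDist x F = _ from h2, ← Real.le_log_iff_exp_le hε₀]
      linarith
    rw [this]
    simp
  obtain ⟨Λ, hΛ⟩ := loc_lim hr hS hq0 hq1 hiq hD_dim hKc hK hν hbd
    (nu_sub hd hr hS hF_ne hF_cpt hF_self D) hνK hm hmK
  have hlog : Tendsto (fun δ : ℝ => Real.log δ⁻¹) (𝓝[>] 0) atTop :=
    Real.tendsto_log_atTop.comp tendsto_inv_nhdsGT_zero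
  have main : ∀ f : EuclideanSpace ℝ (Fin d) → ℝ, Continuous f →
          (∃ C : ℝ, ∀ x, |f x| ≤ C) →
          Tendsto (fun δ : ℝ => (Real.log δ⁻¹)⁻¹ *
              ∫ ε in Set.Ioc δ ε₀,
                ε ^ (D - d + 1) * (∫ x in frontier (Metric.cthickening ε F), f x ∂(μH[(d:ℝ) - 1])) * ε⁻¹)
            (𝓝[>] 0) (𝓝 (Λ * ∫ x, f x ∂m)) := by
    intro f hf hfb
    refine ((hΛ f hf hfb).comp hlog).congr' ?_
    filter_upwards [Ioo_mem_nhdsGT hε₀] with δ hδ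
    simp only [Function.comp]
    congr 1
    have e1 : ∫ ε in Set.Ioc δ ε₀,
        ε ^ (D - d + 1) * (∫ x in frontier (Metric.cthickening ε F), f x ∂(μH[(d:ℝ) - 1])) * ε⁻¹ =
        ∫ ε in Set.Ioc δ ε₀,
        ε ^ (D - d + 1) * (∫ x in Lev F ε, f x ∂(μH[(d:ℝ) - 1])) * ε⁻¹ := by
      refine setIntegral_congr_ae measurableSet_Ioc ?_
      filter_upwards [frontier_eq_lev hF_ne] with ε hε hεm
      rw [hε (hδ.1.trans hεm.1)]
    rw [e1, subst_log (D - d + 1) (fun ε => ∫ x in Lev F ε, f x ∂(μH[(d:ℝ) - 1])) hδ.1 hδ.2.le]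
    congr 1
    funext t
    rw [nu, integral_smul_measure, ENNReal.toReal_ofReal (Real.exp_pos _).le, smul_eq_mul]
  refine ⟨Λ, ?_, main⟩
  have h1 := main (fun _ => 1) continuous_const ⟨1, by simp⟩
  simpa [Measure.real] using h1
end
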